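/- There exist positive numerical constants ρ_r′, ρ_s′, and c′ such that the following holds. Under the observation model with incoherence parameter ν, if r ≤ ρ_r′ · n2 · ν⁻¹ · (log n1)⁻² and m ≤ ρ_s′ · n1 · n2, then with probability at least 1 − c′·n1^{−10} over the random support Ω and the random signs: when Z0 = 0 (so D = L0 + S0), every minimizer of StablePCP_c(0) with λ = 1/√n1 equals (L0, S0); that is, the constrained stable PCP with δ = 0 recovers the pair (L0, S0) exactly. -/

import Mathlib

open Matrix
open scoped BigOperators

/-- Frobenius norm of a real matrix. -/
noncomputable def frob {n1 n2 : ℕ} (A : Matrix (Fin n1) (Fin n2) ℝ) : ℝ :=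
  Real.sqrt (∑ i, ∑ j, A i j ^ 2)

/-- Entrywise ℓ¹ norm. -/
noncomputable def l1norm {n1 n2 : ℕ} (A : Matrix (Fin n1) (Fin n2) ℝ) : ℝ :=
  ∑ i, ∑ j, |A i j|

/-- Trace inner product ⟨A,B⟩ = trace(AᵀB). -/
noncomputable def minner {n1 n2 : ℕ} (A B : Matrix (Fin n1) (Fin n2) ℝ) : ℝ :=
  ∑ i, ∑ j, A i j * B i j

/-- Spectral norm (largest singular value), as the ℓ²→ℓ² operator norm. -/
noncomputable def spec {n1 n2 : ℕ} (A : Matrix (Fin n1) (Fin n2) ℝ) : ℝ :=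
  sSup {c : ℝ | ∃ x : Fin n2 → ℝ, (∑ j, x j ^ 2) ≤ 1 ∧
    c = Real.sqrt (∑ i, (∑ j, A i j * x j) ^ 2)}

/-- Nuclear norm (sum of singular values), via duality with the spectral norm. -/
noncomputable def nuc {n1 n2 : ℕ} (A : Matrix (Fin n1) (Fin n2) ℝ) : ℝ :=
  sSup {c : ℝ | ∃ B : Matrix (Fin n1) (Fin n2) ℝ, spec B ≤ 1 ∧ c = minner A B}

/-- P_Ω: the matrix agreeing with `M` on `Ω` and zero off `Ω`. -/
noncomputable def projS {n1 n2 : ℕ} (Ω : Finset (Fin n1 × Fin n2))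
    (M : Matrix (Fin n1) (Fin n2) ℝ) : Matrix (Fin n1) (Fin n2) ℝ :=
  Matrix.of fun i j => if (i, j) ∈ Ω then M i j else 0

/-- Entrywise sign matrix. -/
noncomputable def signM {n1 n2 : ℕ} (A : Matrix (Fin n1) (Fin n2) ℝ) :
    Matrix (Fin n1) (Fin n2) ℝ :=
  Matrix.of fun i j => Real.sign (A i j)

/-- The tangent space T = {UQᵀ + RVᵀ}. -/
def memT {n1 n2 r : ℕ} (U : Matrix (Fin n1) (Fin r) ℝ) (V : Matrix (Fin n2) (Fin r) ℝ)
    (M : Matrix (Fin n1) (Fin n2) ℝ) : Prop :=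
  ∃ (Q : Matrix (Fin n2) (Fin r) ℝ) (R : Matrix (Fin n1) (Fin r) ℝ), M = U * Qᵀ + R * Vᵀ

/-- Membership in T⊥, the orthogonal complement of the tangent space. -/
def memTperp {n1 n2 r : ℕ} (U : Matrix (Fin n1) (Fin r) ℝ) (V : Matrix (Fin n2) (Fin r) ℝ)
    (W : Matrix (Fin n1) (Fin n2) ℝ) : Prop :=
  ∀ M, memT U V M → minner W M = 0

/-- (L̂, Ŝ) is a global minimizer of the √PCP objective
`‖L‖_* + λ‖S‖₁ + μ‖L + S − D‖_F`. -/
def IsRootPCPMin {n1 n2 : ℕ} (D : Matrix (Fin n1) (Fin n2) ℝ) (lam mu : ℝ)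
    (Lh Sh : Matrix (Fin n1) (Fin n2) ℝ) : Prop :=
  ∀ L S : Matrix (Fin n1) (Fin n2) ℝ,
    nuc Lh + lam * l1norm Sh + mu * frob (Lh + Sh - D) ≤
      nuc L + lam * l1norm S + mu * frob (L + S - D)

/-- (L̂, Ŝ) is a minimizer of StablePCP_c(δ):
minimize `‖L‖_* + λ‖S‖₁` subject to `‖L + S − D‖_F ≤ δ`. -/
def IsStablePCPMin {n1 n2 : ℕ} (D : Matrix (Fin n1) (Fin n2) ℝ) (lam δ : ℝ)
    (Lh Sh : Matrix (Fin n1) (Fin n2) ℝ) : Prop :=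
  frob (Lh + Sh - D) ≤ δ ∧
    ∀ L S : Matrix (Fin n1) (Fin n2) ℝ, frob (L + S - D) ≤ δ →
      nuc Lh + lam * l1norm Sh ≤ nuc L + lam * l1norm S

/-- Frobenius distance between pairs: ‖(L,S) − (L',S')‖_F. -/
noncomputable def pairDist {n1 n2 : ℕ} (L S L' S' : Matrix (Fin n1) (Fin n2) ℝ) : ℝ :=
  Real.sqrt (frob (L - L') ^ 2 + frob (S - S') ^ 2)

/-- Sample space of the random sparsity model: a uniformly random support of
cardinality m together with iid uniform random signs. -/
abbrev SampleSpace (n1 n2 m : ℕ) : Type :=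
  {Ω : Finset (Fin n1 × Fin n2) // Ω.card = m} × ((Fin n1 × Fin n2) → Bool)

/-- The sparse matrix S0 built from fixed magnitudes `a` and a random sample:
S0 vanishes off Ω and equals ±a on Ω according to the random signs. -/
noncomputable def sparseOf {n1 n2 m : ℕ} (a : Fin n1 × Fin n2 → ℝ) (ω : SampleSpace n1 n2 m) :
    Matrix (Fin n1) (Fin n2) ℝ :=
  Matrix.of fun i j =>
    if (i, j) ∈ ω.1.1 then (if ω.2 (i, j) then a (i, j) else -a (i, j)) else 0

open Classical in
/-- Uniform probability of an event on a finite sample space. -/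
noncomputable def unifProb {α : Type*} [Fintype α] (E : α → Prop) : ℝ :=
  ((Finset.univ.filter fun a => E a).card : ℝ) / (Fintype.card α : ℝ)

/-!
Recovery is certified by a dual variable `U Vᵀ + W`, with `W` orthogonal to the tangent space
`{U Qᵀ + R Vᵀ}` and `‖W‖ ≤ 1/2`, that is nearly `(√n1)⁻¹` times the signs of `S0` on `Ω` and at
most half as large elsewhere, together with the fact that no matrix of the tangent space
concentrates its mass on `Ω`.

Shrinking the support preserves recovery, so the uniform support may be replaced by a denser one
with independent entries: `Ω` consists of the entries missed by `c K` independent batches with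
`K ≈ log n1`, each containing an entry with probability `1 / K`. Golfing along the batches alters
`U Vᵀ` off `Ω` and halves its residual in the tangent space in every step, until what is left is
negligible. A Neumann series on `Ω` then prescribes the signs, and its spectral norm is small
because the signs are independent of the support.

The concentration on `Ω` is measured by the trace of a high power of a regularized compression of
the tangent projection, where switching on one entry is a rank one perturbation.
-/

section FiniteExpectation

variable {α β ι : Type*} [Fintype α] [Fintype β]

theorem expect_pi_prod [DecidableEq ι] [Fintype ι] (g : ι → α → ℝ) :
    𝔼 x : ι → α, ∏ i, g i (x i) = ∏ i, 𝔼 a, g i a := by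
  simp only [Fintype.expect_eq_sum_div_card, Finset.prod_div_distrib, Finset.prod_univ_sum,
    Fintype.piFinset_univ, Fintype.card_fun, Finset.prod_const, Finset.card_univ, Nat.cast_pow]

theorem expect_prod_fst [Nonempty β] (f : α → ℝ) : 𝔼 p : α × β, f p.1 = 𝔼 a, f a := by
  rw [← Finset.univ_product_univ, Finset.expect_product]
  simp only [Fintype.expect_const]

/-- Replacing part of a uniform variable (read off by `old`, overwritten by `upd`) by an independent
uniform copy does not change its law: `(a, b) ↦ (upd a b, old a)` is an involution. -/
theorem expect_resample [Nonempty β] (upd : α → β → α) (old : α → β)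
    (upd_upd : ∀ a b, upd (upd a b) (old a) = a) (old_upd : ∀ a b, old (upd a b) = b)
    (f : α → ℝ) : 𝔼 a, f a = 𝔼 a, 𝔼 b, f (upd a b) := by
  have swap_involutive : Function.Involutive fun p : α × β => (upd p.1 p.2, old p.1) := fun p => by
    simp only [upd_upd, old_upd]
  rw [← expect_prod_fst (β := β), ← Finset.expect_product', Finset.univ_product_univ]
  exact (Fintype.expect_equiv swap_involutive.toPerm _ _ fun _ => rfl).symm

theorem unifProb_eq_expect (E : α → Prop) [DecidablePred E] :
    unifProb E = 𝔼 a, if E a then (1 : ℝ) else 0 := by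
  rw [unifProb, Fintype.expect_eq_sum_div_card, Finset.sum_boole]
  congr!

theorem unifProb_le_expect (E : α → Prop) {f : α → ℝ} (hf : ∀ a, 0 ≤ f a)
    (h : ∀ a, E a → 1 ≤ f a) : unifProb E ≤ 𝔼 a, f a := by
  classical
  rw [unifProb_eq_expect]
  refine Finset.expect_le_expect fun a _ => ?_
  split_ifs with ha
  · exact h a ha
  · exact hf a

theorem unifProb_nonneg (E : α → Prop) : 0 ≤ unifProb E := by
  unfold unifProb
  positivity

theorem unifProb_mono {E F : α → Prop} (h : ∀ a, E a → F a) : unifProb E ≤ unifProb F := by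
  classical
  rw [unifProb_eq_expect F]
  exact unifProb_le_expect E (fun a => by split_ifs <;> norm_num) fun a ha => by simp [h a ha]

theorem unifProb_not [Nonempty α] (E : α → Prop) : unifProb (fun a => ¬ E a) = 1 - unifProb E := by
  classical
  rw [unifProb_eq_expect, unifProb_eq_expect, ← Fintype.expect_one (ι := α),
    ← Finset.expect_sub_distrib]
  exact Finset.expect_congr rfl fun a _ => by split_ifs <;> simp

theorem unifProb_exists_le (s : Finset ι) (E : ι → α → Prop) :
    unifProb (fun a => ∃ i ∈ s, E i a) ≤ ∑ i ∈ s, unifProb (E i) := by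
  classical
  have h0 : ∀ a, ∀ i ∈ s, (0 : ℝ) ≤ if E i a then 1 else 0 := fun a i _ => by
    split_ifs <;> norm_num
  simp only [unifProb_eq_expect (E _), ← Finset.expect_sum_comm]
  refine unifProb_le_expect _ (fun a => Finset.sum_nonneg (h0 a)) ?_
  rintro a ⟨i, hi, ha⟩
  exact (if_pos ha).ge.trans (Finset.single_le_sum (h0 a) hi)

theorem unifProb_or_le (E F : α → Prop) :
    unifProb (fun a => E a ∨ F a) ≤ unifProb E + unifProb F := by
  simpa [or_comm] using unifProb_exists_le Finset.univ fun b : Bool => if b then E else F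

theorem unifProb_not_imp_le {A : Prop} {B : α → Prop} {p : ℝ} (hp : 0 ≤ p)
    (h : A → unifProb (fun a => ¬ B a) ≤ p) : unifProb (fun a => ¬ (A → B a)) ≤ p := by
  by_cases hA : A
  · simpa only [hA, true_imp_iff] using h hA
  · simpa [hA, unifProb] using hp

theorem unifProb_exists_le_card_mul (s : Finset ι) (E : ι → α → Prop) {p : ℝ}
    (h : ∀ i ∈ s, unifProb (E i) ≤ p) :
    unifProb (fun a => ∃ i ∈ s, E i a) ≤ s.card * p :=
  (unifProb_exists_le s E).trans ((Finset.sum_le_card_nsmul s _ p h).trans (nsmul_eq_mul _ _).le)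

theorem unifProb_resample_le [Nonempty α] [Nonempty β] (upd : α → β → α) (old : α → β)
    (upd_upd : ∀ a b, upd (upd a b) (old a) = a) (old_upd : ∀ a b, old (upd a b) = b)
    (E : α → Prop) {p : ℝ} (h : ∀ a, unifProb (fun b => E (upd a b)) ≤ p) : unifProb E ≤ p := by
  classical
  rw [unifProb_eq_expect, expect_resample upd old upd_upd old_upd]
  refine Finset.expect_le Finset.univ_nonempty fun a _ => ?_
  rw [← unifProb_eq_expect fun b => E (upd a b)]
  exact h a

theorem unifProb_lt_le_exp_mul_expect_exp (X : α → ℝ) (b : ℝ) :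
    unifProb (fun a => b < X a) ≤ Real.exp (-b) * 𝔼 a, Real.exp (X a) := by
  rw [Finset.mul_expect]
  refine unifProb_le_expect _ (fun a => by positivity) fun a ha => ?_
  rw [← Real.exp_add]
  exact Real.one_le_exp (by linarith)

theorem unifProb_not_forall_abs_le [Fintype ι] (X : ι → α → ℝ) {b M : ℝ}
    (hX : ∀ i, 𝔼 a, Real.exp (X i a) ≤ M) (hX' : ∀ i, 𝔼 a, Real.exp (-X i a) ≤ M) :
    unifProb (fun a => ¬ ∀ i, |X i a| ≤ b) ≤ Fintype.card ι * (2 * (Real.exp (-b) * M)) := by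
  have tail : ∀ i ∈ Finset.univ, unifProb (fun a => b < |X i a|) ≤ 2 * (Real.exp (-b) * M) := by
    intro i _
    simp only [lt_abs]
    calc unifProb (fun a => b < X i a ∨ b < -X i a)
        ≤ unifProb (fun a => b < X i a) + unifProb (fun a => b < -X i a) := unifProb_or_le _ _
      _ ≤ Real.exp (-b) * 𝔼 a, Real.exp (X i a) + Real.exp (-b) * 𝔼 a, Real.exp (-X i a) :=
        add_le_add (unifProb_lt_le_exp_mul_expect_exp _ _) (unifProb_lt_le_exp_mul_expect_exp _ _)
      _ ≤ Real.exp (-b) * M + Real.exp (-b) * M := by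
        gcongr
        exacts [hX i, hX' i]
      _ = 2 * (Real.exp (-b) * M) := by ring
  simpa only [not_forall, not_le, Finset.mem_univ, true_and, Finset.card_univ] using
    unifProb_exists_le_card_mul Finset.univ (fun i a => b < |X i a|) tail

theorem exp_le_self_add_exp_sq (x : ℝ) : Real.exp x ≤ x + Real.exp (x ^ 2) := by
  have hsq := Real.add_one_le_exp (x ^ 2)
  rcases le_or_gt |x| 1 with hx | hx
  · linarith [(abs_le.1 (Real.abs_exp_sub_one_sub_id_le hx)).2]
  rcases lt_abs.1 hx with hx | hx
  · linarith [Real.exp_le_exp.2 (show x ≤ x ^ 2 by nlinarith)]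
  · nlinarith [Real.exp_le_one_iff.2 (show x ≤ 0 by linarith)]

theorem expect_exp_le_of_abs_le [Nonempty α] {X : α → ℝ} (hX : 𝔼 a, X a = 0) {b : ℝ}
    (hb : ∀ a, |X a| ≤ b) : 𝔼 a, Real.exp (X a) ≤ Real.exp (b ^ 2) := by
  calc 𝔼 a, Real.exp (X a) ≤ 𝔼 a, (X a + Real.exp (X a ^ 2)) :=
        Finset.expect_le_expect fun a _ => exp_le_self_add_exp_sq (X a)
    _ = 𝔼 a, Real.exp (X a ^ 2) := by rw [Finset.expect_add_distrib, hX, zero_add]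
    _ ≤ Real.exp (b ^ 2) := Finset.expect_le Finset.univ_nonempty fun a _ =>
        Real.exp_le_exp.2 (sq_le_sq.2 ((hb a).trans (le_abs_self b)))

theorem expect_exp_le_of_abs_le_one [Nonempty α] {X : α → ℝ} (hX : 𝔼 a, X a = 0)
    (hb : ∀ a, |X a| ≤ 1) : 𝔼 a, Real.exp (X a) ≤ Real.exp (𝔼 a, X a ^ 2) := by
  have quadratic : ∀ a, Real.exp (X a) ≤ 1 + X a + X a ^ 2 := fun a => by
    linarith [(abs_le.1 (Real.abs_exp_sub_one_sub_id_le (hb a))).2]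
  calc 𝔼 a, Real.exp (X a) ≤ 𝔼 a, (1 + X a + X a ^ 2) :=
        Finset.expect_le_expect fun a _ => quadratic a
    _ = (𝔼 a, X a ^ 2) + 1 := by
        rw [Finset.expect_add_distrib, Finset.expect_add_distrib, hX, Fintype.expect_const]
        ring
    _ ≤ _ := Real.add_one_le_exp _

variable [Fintype ι] [DecidableEq ι]

theorem expect_exp_sum (X : ι → α → ℝ) :
    𝔼 x : ι → α, Real.exp (∑ i, X i (x i)) = ∏ i, 𝔼 a, Real.exp (X i a) := by
  simp only [Real.exp_sum]
  exact expect_pi_prod fun i a => Real.exp (X i a)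

variable [Nonempty α]

theorem expect_exp_sum_le_of_abs_le {X : ι → α → ℝ} {B : ι → ℝ} (hX : ∀ i, 𝔼 a, X i a = 0)
    (hB : ∀ i a, |X i a| ≤ B i) :
    𝔼 x : ι → α, Real.exp (∑ i, X i (x i)) ≤ Real.exp (∑ i, B i ^ 2) := by
  rw [expect_exp_sum, Real.exp_sum]
  exact Finset.prod_le_prod (fun i _ => Finset.expect_nonneg fun a _ => (Real.exp_pos _).le)
    fun i _ => expect_exp_le_of_abs_le (hX i) (hB i)

theorem expect_exp_sum_le_of_abs_le_one {X : ι → α → ℝ} (hX : ∀ i, 𝔼 a, X i a = 0)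
    (hB : ∀ i a, |X i a| ≤ 1) :
    𝔼 x : ι → α, Real.exp (∑ i, X i (x i)) ≤ Real.exp (∑ i, 𝔼 a, X i a ^ 2) := by
  rw [expect_exp_sum, Real.exp_sum]
  exact Finset.prod_le_prod (fun i _ => Finset.expect_nonneg fun a _ => (Real.exp_pos _).le)
    fun i _ => expect_exp_le_of_abs_le_one (hX i) (hB i)

end FiniteExpectation

section EuclideanNorm

open scoped Matrix.Norms.L2Operator

variable {ι κ : Type*} [Fintype ι] [Fintype κ]

theorem dotProduct_self_nonneg (x : ι → ℝ) : 0 ≤ x ⬝ᵥ x := dotProduct_star_self_nonneg x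

theorem sqrt_dotProduct_self (x : ι → ℝ) : √(x ⬝ᵥ x) = ‖WithLp.toLp 2 x‖ := by
  simp only [EuclideanSpace.norm_eq, Real.norm_eq_abs, sq_abs, dotProduct, ← sq]

theorem dotProduct_le_sqrt_mul_sqrt (x y : ι → ℝ) : x ⬝ᵥ y ≤ √(x ⬝ᵥ x) * √(y ⬝ᵥ y) := by
  simpa only [dotProduct, sq] using Real.sum_mul_le_sqrt_mul_sqrt Finset.univ x y

theorem sqrt_dotProduct_self_add_le (x y : ι → ℝ) :
    √((x + y) ⬝ᵥ (x + y)) ≤ √(x ⬝ᵥ x) + √(y ⬝ᵥ y) := by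
  simp only [sqrt_dotProduct_self]
  exact norm_add_le _ _

theorem sqrt_dotProduct_self_le_sum_abs (x : ι → ℝ) : √(x ⬝ᵥ x) ≤ ∑ i, |x i| := by
  rw [Real.sqrt_le_left (Finset.sum_nonneg fun i _ => abs_nonneg _)]
  simpa only [dotProduct, ← sq, sq_abs] using
    Finset.sum_sq_le_sq_sum_of_nonneg fun i (_ : i ∈ Finset.univ) => abs_nonneg (x i)

theorem mulVec_dotProduct_mulVec {m : Type*} [Fintype m] (A : Matrix m ι ℝ) (B : Matrix m κ ℝ)
    (x : ι → ℝ) (y : κ → ℝ) : (A *ᵥ x) ⬝ᵥ (B *ᵥ y) = x ⬝ᵥ (Aᵀ * B) *ᵥ y := by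
  rw [← mulVec_mulVec, dotProduct_mulVec x, vecMul_transpose]

variable [DecidableEq κ]

theorem sqrt_mulVec_le_norm (M : Matrix ι κ ℝ) (x : κ → ℝ) :
    √((M *ᵥ x) ⬝ᵥ (M *ᵥ x)) ≤ ‖M‖ * √(x ⬝ᵥ x) := by
  rw [sqrt_dotProduct_self, sqrt_dotProduct_self]
  exact l2_opNorm_mulVec M (WithLp.toLp 2 x)

theorem dotProduct_mulVec_le_norm (M : Matrix ι κ ℝ) (x : κ → ℝ) (y : ι → ℝ) :
    y ⬝ᵥ M *ᵥ x ≤ ‖M‖ * √(x ⬝ᵥ x) * √(y ⬝ᵥ y) := by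
  refine (dotProduct_le_sqrt_mul_sqrt _ _).trans ?_
  rw [mul_comm]
  exact mul_le_mul_of_nonneg_right (sqrt_mulVec_le_norm M x) (Real.sqrt_nonneg _)

theorem norm_le_of_sqrt_mulVec_le {M : Matrix ι κ ℝ} {b : ℝ} (hb : 0 ≤ b)
    (h : ∀ x : κ → ℝ, √((M *ᵥ x) ⬝ᵥ (M *ᵥ x)) ≤ b * √(x ⬝ᵥ x)) : ‖M‖ ≤ b := by
  simp only [sqrt_dotProduct_self] at h
  exact ContinuousLinearMap.opNorm_le_bound _ hb fun x => h x.ofLp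

theorem norm_le_of_dotProduct_le {M : Matrix ι κ ℝ} {b : ℝ} (hb : 0 ≤ b)
    (h : ∀ (x : κ → ℝ) (y : ι → ℝ), x ⬝ᵥ x ≤ 1 → y ⬝ᵥ y ≤ 1 → y ⬝ᵥ M *ᵥ x ≤ b) : ‖M‖ ≤ b := by
  refine ContinuousLinearMap.opNorm_le_of_re_inner_le hb fun x y hx hy => h x.ofLp y.ofLp ?_ ?_
  · exact Real.sqrt_le_one.1 ((sqrt_dotProduct_self _).trans_le hx.le)
  · exact Real.sqrt_le_one.1 ((sqrt_dotProduct_self _).trans_le hy.le)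

end EuclideanNorm

section TracePowers

variable {E : Type*} [Fintype E] [DecidableEq E] {C : Matrix E E ℝ}

theorem pow_eq_conj_diagonal_eigenvalues (hC : C.IsHermitian) (k : ℕ) :
    C ^ k = hC.eigenvectorUnitary * diagonal (hC.eigenvalues ^ k) *
      star (hC.eigenvectorUnitary : Matrix E E ℝ) := by
  have h := congrArg (· ^ k) hC.spectral_theorem
  simp only [← map_pow, diagonal_pow] at h
  exact h

theorem dotProduct_conj_diagonal_mulVec (Q : Matrix E E ℝ) (d v : E → ℝ) :
    v ⬝ᵥ (Q * diagonal d * star Q) *ᵥ v = ∑ i, (star Q *ᵥ v) i ^ 2 * d i := by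
  rw [← mulVec_mulVec, ← mulVec_mulVec, dotProduct_mulVec, ← mulVec_transpose, dotProduct]
  refine Finset.sum_congr rfl fun i _ => ?_
  rw [mulVec_diagonal, star_eq_conjTranspose, conjTranspose_eq_transpose_of_trivial]
  ring

theorem trace_pow_eq_sum_eigenvalues (hC : C.IsHermitian) (p : ℕ) :
    (C ^ p).trace = ∑ i, hC.eigenvalues i ^ p := by
  rw [pow_eq_conj_diagonal_eigenvalues hC, trace_mul_comm, ← Matrix.mul_assoc,
    Unitary.coe_star_mul_self, Matrix.one_mul, trace_diagonal]
  rfl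

theorem eigenvectorBasis_dotProduct_self (hC : C.IsHermitian) (i : E) :
    (hC.eigenvectorBasis i).ofLp ⬝ᵥ (hC.eigenvectorBasis i).ofLp = 1 := by
  have h := EuclideanSpace.real_norm_sq_eq (hC.eigenvectorBasis i)
  rw [hC.eigenvectorBasis.norm_eq_one, one_pow] at h
  rw [h, dotProduct]
  exact Finset.sum_congr rfl fun _ _ => (sq _).symm

theorem le_eigenvalues_of_forall_le_dotProduct (hC : C.IsHermitian) {s : ℝ}
    (hs : ∀ x, s * (x ⬝ᵥ x) ≤ x ⬝ᵥ C *ᵥ x) (i : E) : s ≤ hC.eigenvalues i := by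
  simpa [hC.eigenvalues_eq, eigenvectorBasis_dotProduct_self] using hs (hC.eigenvectorBasis i).ofLp

theorem eigenvalues_le_of_forall_dotProduct_le (hC : C.IsHermitian) {t : ℝ}
    (ht : ∀ x, x ⬝ᵥ C *ᵥ x ≤ t * (x ⬝ᵥ x)) (i : E) : hC.eigenvalues i ≤ t := by
  simpa [hC.eigenvalues_eq, eigenvectorBasis_dotProduct_self] using ht (hC.eigenvectorBasis i).ofLp

theorem eigenvalues_lt_of_trace_pow_lt (hC : C.PosSemidef) {t : ℝ} (ht : 0 ≤ t) {p : ℕ}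
    (h : (C ^ p).trace < t ^ p) (i : E) : hC.isHermitian.eigenvalues i < t := by
  rw [trace_pow_eq_sum_eigenvalues hC.isHermitian] at h
  have hi := Finset.single_le_sum (f := fun j => hC.isHermitian.eigenvalues j ^ p)
    (fun j _ => pow_nonneg (hC.eigenvalues_nonneg j) p) (Finset.mem_univ i)
  exact lt_of_pow_lt_pow_left₀ p ht (hi.trans_lt h)

theorem trace_pow_le_card_mul_pow (hC : C.PosSemidef) {t : ℝ}
    (ht : ∀ x, x ⬝ᵥ C *ᵥ x ≤ t * (x ⬝ᵥ x)) (p : ℕ) : (C ^ p).trace ≤ Fintype.card E * t ^ p := by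
  rw [trace_pow_eq_sum_eigenvalues hC.isHermitian, ← nsmul_eq_mul, ← Finset.card_univ]
  exact Finset.sum_le_card_nsmul _ _ _ fun i _ => pow_le_pow_left₀ (hC.eigenvalues_nonneg i)
    (eigenvalues_le_of_forall_dotProduct_le hC.isHermitian ht i) p

/-- The moments `⟨v, Cᵏ v⟩` of the spectral measure of `C` at the vector `v`. -/
def moment (C : Matrix E E ℝ) (v : E → ℝ) (k : ℕ) : ℝ := v ⬝ᵥ (C ^ k) *ᵥ v

theorem moment_eq_sum_eigenvalues (hC : C.IsHermitian) (v : E → ℝ) (k : ℕ) :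
    moment C v k = ∑ i, (star (hC.eigenvectorUnitary : Matrix E E ℝ) *ᵥ v) i ^ 2 *
      hC.eigenvalues i ^ k := by
  rw [moment, pow_eq_conj_diagonal_eigenvalues hC, dotProduct_conj_diagonal_mulVec]
  rfl

theorem moment_zero (C : Matrix E E ℝ) (v : E → ℝ) : moment C v 0 = v ⬝ᵥ v := by
  rw [moment, pow_zero, one_mulVec]

theorem moment_one (C : Matrix E E ℝ) (v : E → ℝ) : moment C v 1 = v ⬝ᵥ C *ᵥ v := by
  rw [moment, pow_one]

theorem dotProduct_mulVec_le_of_eigenvalues_le (hC : C.IsHermitian) {t : ℝ}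
    (ht : ∀ i, hC.eigenvalues i ≤ t) (x : E → ℝ) : x ⬝ᵥ C *ᵥ x ≤ t * (x ⬝ᵥ x) := by
  rw [← moment_one, ← moment_zero C, moment_eq_sum_eigenvalues hC, moment_eq_sum_eigenvalues hC,
    Finset.mul_sum]
  refine Finset.sum_le_sum fun i _ => ?_
  rw [pow_one, pow_zero, mul_one, mul_comm t]
  exact mul_le_mul_of_nonneg_left (ht i) (sq_nonneg _)

theorem moment_nonneg (hC : C.PosSemidef) (v : E → ℝ) (k : ℕ) : 0 ≤ moment C v k :=
  (hC.pow k).dotProduct_mulVec_nonneg v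

theorem mul_moment_le_moment_succ (hC : C.PosSemidef) {s : ℝ}
    (hs : ∀ x, s * (x ⬝ᵥ x) ≤ x ⬝ᵥ C *ᵥ x) (v : E → ℝ) (k : ℕ) :
    s * moment C v k ≤ moment C v (k + 1) := by
  rw [moment_eq_sum_eigenvalues hC.isHermitian, moment_eq_sum_eigenvalues hC.isHermitian,
    Finset.mul_sum]
  refine Finset.sum_le_sum fun i _ => ?_
  rw [pow_succ (hC.isHermitian.eigenvalues i), mul_comm s, ← mul_assoc]
  exact mul_le_mul_of_nonneg_left (le_eigenvalues_of_forall_le_dotProduct hC.isHermitian hs i)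
    (mul_nonneg (sq_nonneg _) (pow_nonneg (hC.eigenvalues_nonneg i) k))

theorem sum_weight_mul_mul_sum_weight_mul_le {ι : Type*} [Fintype ι] {w f g : ι → ℝ}
    (hw : ∀ i, 0 ≤ w i) (hfg : Monovary f g) :
    (∑ i, w i * f i) * (∑ i, w i * g i) ≤ (∑ i, w i) * ∑ i, w i * (f i * g i) := by
  have nonneg : 0 ≤ ∑ i, ∑ j, w i * w j * ((f i - f j) * (g i - g j)) :=
    Finset.sum_nonneg fun i _ => Finset.sum_nonneg fun j _ =>
      mul_nonneg (mul_nonneg (hw i) (hw j)) (monovary_iff_forall_mul_nonneg.1 hfg j i)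
  have expand : ∀ i j, w i * w j * ((f i - f j) * (g i - g j)) =
      w i * (f i * g i) * w j + w i * (w j * (f j * g j)) - w i * f i * (w j * g j) -
        w i * g i * (w j * f j) := fun i j => by ring
  simp only [expand, Finset.sum_sub_distrib, Finset.sum_add_distrib, ← Finset.mul_sum,
    ← Finset.sum_mul] at nonneg
  linarith

theorem moment_mul_moment_le (hC : C.PosSemidef) (v : E → ℝ) (a k : ℕ) :
    moment C v a * moment C v k ≤ (v ⬝ᵥ v) * moment C v (a + k) := by
  have hmono : ∀ b, Monotone fun x : {x : ℝ // 0 ≤ x} => (x : ℝ) ^ b :=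
    fun b x y hxy => pow_le_pow_left₀ x.2 hxy b
  have hvary : Monovary (fun i => hC.isHermitian.eigenvalues i ^ a)
      (fun i => hC.isHermitian.eigenvalues i ^ k) :=
    ((hmono a).monovary (hmono k)).comp_right fun i =>
      ⟨hC.isHermitian.eigenvalues i, hC.eigenvalues_nonneg i⟩
  have h := sum_weight_mul_mul_sum_weight_mul_le (fun i => sq_nonneg
    ((star (hC.isHermitian.eigenvectorUnitary : Matrix E E ℝ) *ᵥ v) i)) hvary
  simpa only [← moment_zero C, moment_eq_sum_eigenvalues hC.isHermitian, pow_zero, mul_one,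
    pow_add] using h

theorem moment_mul_moment_le_div (hC : C.PosSemidef) {s : ℝ} (hs0 : 0 < s)
    (hs : ∀ x, s * (x ⬝ᵥ x) ≤ x ⬝ᵥ C *ᵥ x) (v : E → ℝ) (a k : ℕ) :
    moment C v a * moment C v k ≤ (v ⬝ᵥ v) / s * moment C v (a + (k + 1)) := by
  have hvv : 0 ≤ v ⬝ᵥ v := moment_zero C v ▸ moment_nonneg hC v 0
  calc moment C v a * moment C v k ≤ (v ⬝ᵥ v) * moment C v (a + k) := moment_mul_moment_le hC v a k
    _ = (v ⬝ᵥ v) / s * (s * moment C v (a + k)) := by field_simp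
    _ ≤ _ := mul_le_mul_of_nonneg_left (mul_moment_le_moment_succ hC hs v _)
      (div_nonneg hvv hs0.le)

theorem trace_pow_add_smul_sub_trace_pow (C : Matrix E E ℝ) (v : E → ℝ) (d : ℝ) (p : ℕ) :
    ((C + d • vecMulVec v v) ^ p).trace - (C ^ p).trace = d * ∑ k ∈ Finset.range p,
      v ⬝ᵥ (C ^ (p - 1 - k) * (C + d • vecMulVec v v) ^ k) *ᵥ v := by
  set D := C + d • vecMulVec v v with hD
  have step : ∀ a k, (D ^ (k + 1) * C ^ a).trace - (D ^ k * C ^ (a + 1)).trace =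
      d * (v ⬝ᵥ (C ^ a * D ^ k) *ᵥ v) := fun a k => by
    have : D ^ (k + 1) * C ^ a - D ^ k * C ^ (a + 1) =
        d • (D ^ k * vecMulVec v v * C ^ a) := by
      rw [pow_succ D, pow_succ' C, Matrix.mul_assoc, ← Matrix.mul_sub, ← Matrix.sub_mul, hD,
        add_sub_cancel_left, smul_mul_assoc, mul_smul_comm, Matrix.mul_assoc]
    rw [← trace_sub, this, trace_smul, smul_eq_mul, trace_mul_comm, ← Matrix.mul_assoc,
      mul_vecMulVec, trace_vecMulVec, dotProduct_comm]
  have telescope := Finset.sum_range_sub (fun k => (D ^ k * C ^ (p - k)).trace) p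
  simp only [Nat.sub_self, Nat.sub_zero, pow_zero, Matrix.mul_one, Matrix.one_mul] at telescope
  rw [← telescope, Finset.mul_sum]
  refine Finset.sum_congr rfl fun k hk => ?_
  have hk := Finset.mem_range.1 hk
  rw [← step, show p - (k + 1) = p - 1 - k by omega, show p - k = p - 1 - k + 1 by omega]

theorem dotProduct_pow_mul_pow_succ_mulVec (C : Matrix E E ℝ) (v : E → ℝ) (d : ℝ) (a k : ℕ) :
    v ⬝ᵥ (C ^ a * (C + d • vecMulVec v v) ^ (k + 1)) *ᵥ v =
      v ⬝ᵥ (C ^ (a + 1) * (C + d • vecMulVec v v) ^ k) *ᵥ v +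
        d * (moment C v a * moment (C + d • vecMulVec v v) v k) := by
  set D := C + d • vecMulVec v v with hD
  have : C ^ a * D ^ (k + 1) = C ^ (a + 1) * D ^ k + d • (C ^ a * vecMulVec v v * D ^ k) := by
    conv_lhs => rw [pow_succ', ← Matrix.mul_assoc, hD, mul_add, ← pow_succ, add_mul,
      mul_smul_comm, smul_mul_assoc]
  rw [this, add_mulVec, dotProduct_add, smul_mulVec, dotProduct_smul, smul_eq_mul, mul_vecMulVec,
    vecMulVec_mul, vecMulVec_mulVec, dotProduct_smul, moment, moment, dotProduct_mulVec v (D ^ k)]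
  simp only [MulOpposite.smul_eq_mul_unop, MulOpposite.unop_op]

/- The moments of `C` form a log-convex sequence with ratios at least `s`, so each power of the
perturbed matrix costs a factor at most `1 + ‖v‖² / s`. -/
theorem abs_dotProduct_pow_mul_pow_mulVec_sub_moment_le (hC : C.PosSemidef) {s : ℝ} (hs0 : 0 < s)
    (hs : ∀ x, s * (x ⬝ᵥ x) ≤ x ⬝ᵥ C *ᵥ x) (v : E → ℝ) {d : ℝ} (hd : |d| ≤ 1) (a k : ℕ) :
    |v ⬝ᵥ (C ^ a * (C + d • vecMulVec v v) ^ k) *ᵥ v - moment C v (a + k)| ≤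
      ((1 + (v ⬝ᵥ v) / s) ^ k - 1) * moment C v (a + k) := by
  set D := C + d • vecMulVec v v
  set θ := (v ⬝ᵥ v) / s
  have hθ0 : 0 ≤ θ := div_nonneg (moment_zero C v ▸ moment_nonneg hC v 0) hs0.le
  induction k generalizing a with
  | zero => simp [moment]
  | succ k ih =>
    have first := ih (a + 1)
    rw [show a + 1 + k = a + (k + 1) by omega] at first
    have hDk : |moment D v k| ≤ (1 + θ) ^ k * moment C v k := by
      have h0 := ih 0
      have htri := abs_sub_abs_le_abs_sub (moment D v k) (moment C v k)
      simp only [pow_zero, Matrix.one_mul, zero_add] at h0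
      rw [abs_of_nonneg (moment_nonneg hC v k)] at htri
      rw [moment] at htri ⊢
      linarith
    have second : |d * (moment C v a * moment D v k)| ≤
        (1 + θ) ^ k * (θ * moment C v (a + (k + 1))) := by
      rw [abs_mul, abs_mul, abs_of_nonneg (moment_nonneg hC v a)]
      calc |d| * (moment C v a * |moment D v k|)
          ≤ 1 * (moment C v a * ((1 + θ) ^ k * moment C v k)) := by
            have := moment_nonneg hC v a
            gcongr
        _ = (1 + θ) ^ k * (moment C v a * moment C v k) := by ring
        _ ≤ _ := mul_le_mul_of_nonneg_left (moment_mul_moment_le_div hC hs0 hs v a k)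
            (by positivity)
    rw [dotProduct_pow_mul_pow_succ_mulVec, add_sub_right_comm]
    refine (abs_add_le _ _).trans ((add_le_add first second).trans_eq ?_)
    ring

theorem trace_pow_add_smul_le (hC : C.PosSemidef) {s : ℝ} (hs0 : 0 < s)
    (hs : ∀ x, s * (x ⬝ᵥ x) ≤ x ⬝ᵥ C *ᵥ x) (v : E → ℝ) {d : ℝ} (hd : |d| ≤ 1) (p : ℕ) :
    ((C + d • vecMulVec v v) ^ p).trace ≤ (C ^ p).trace +
      (d + ((1 + (v ⬝ᵥ v) / s) ^ p - 1)) * (p * moment C v (p - 1)) := by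
  set D := C + d • vecMulVec v v
  set θ := (v ⬝ᵥ v) / s
  have hθ0 : 0 ≤ θ := div_nonneg (moment_zero C v ▸ moment_nonneg hC v 0) hs0.le
  have hm := moment_nonneg hC v (p - 1)
  have term_le : ∀ k ∈ Finset.range p, d * (v ⬝ᵥ (C ^ (p - 1 - k) * D ^ k) *ᵥ v) ≤
      (d + ((1 + θ) ^ p - 1)) * moment C v (p - 1) := fun k hk => by
    have hkp := Finset.mem_range.1 hk
    have close := abs_dotProduct_pow_mul_pow_mulVec_sub_moment_le hC hs0 hs v hd (p - 1 - k) k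
    rw [show p - 1 - k + k = p - 1 by omega] at close
    have hpow : (1 + θ) ^ k ≤ (1 + θ) ^ p := pow_le_pow_right₀ (by linarith) hkp.le
    have diff : d * (v ⬝ᵥ (C ^ (p - 1 - k) * D ^ k) *ᵥ v - moment C v (p - 1)) ≤
        ((1 + θ) ^ p - 1) * moment C v (p - 1) := by
      refine (le_abs_self _).trans ?_
      rw [abs_mul]
      calc _ ≤ 1 * (((1 + θ) ^ k - 1) * moment C v (p - 1)) :=
            mul_le_mul hd close (abs_nonneg _) zero_le_one
        _ ≤ _ := by
            rw [one_mul]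
            gcongr
    linarith
  have total := Finset.sum_le_card_nsmul _ _ _ term_le
  rw [← Finset.mul_sum, ← trace_pow_add_smul_sub_trace_pow, Finset.card_range,
    nsmul_eq_mul] at total
  linarith

end TracePowers

section ProjectionChernoff

variable {E α : Type*} [Fintype E] {P : Matrix E E ℝ}

theorem transpose_eq_of_isStarProjection (hP : IsStarProjection P) : Pᵀ = P := by
  rw [← conjTranspose_eq_transpose_of_trivial]
  exact hP.isSelfAdjoint

theorem mulVec_dotProduct_mulVec_of_isStarProjection (hP : IsStarProjection P) (x y : E → ℝ) :
    (P *ᵥ x) ⬝ᵥ (P *ᵥ y) = x ⬝ᵥ P *ᵥ y := by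
  rw [mulVec_dotProduct_mulVec, transpose_eq_of_isStarProjection hP, hP.isIdempotentElem.eq]

theorem row_dotProduct_row_of_isStarProjection (hP : IsStarProjection P) (e f : E) :
    P e ⬝ᵥ P f = P e f := by
  conv_rhs => rw [← hP.isIdempotentElem.eq, mul_apply]
  refine Finset.sum_congr rfl fun i _ => ?_
  rw [← transpose_apply P f i, transpose_eq_of_isStarProjection hP]

theorem mulVec_dotProduct_mulVec_self_le_of_isStarProjection (hP : IsStarProjection P)
    (x : E → ℝ) : (P *ᵥ x) ⬝ᵥ (P *ᵥ x) ≤ x ⬝ᵥ x := by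
  have h : 0 ≤ (x - P *ᵥ x) ⬝ᵥ (x - P *ᵥ x) := Finset.sum_nonneg fun i _ => mul_self_nonneg _
  rw [sub_dotProduct, dotProduct_sub, dotProduct_sub, dotProduct_comm (P *ᵥ x) x] at h
  linarith [mulVec_dotProduct_mulVec_of_isStarProjection hP x x]

variable [DecidableEq E]

/-- The compression `P diag(c) P` of a diagonal matrix to the range of `P`, shifted by `s` so that
for nonnegative weights `c` its spectrum stays above `s`. -/
def shiftedCompression (P : Matrix E E ℝ) (c : E → ℝ) (s : ℝ) : Matrix E E ℝ :=
  P * diagonal c * P + s • (1 : Matrix E E ℝ)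

theorem dotProduct_shiftedCompression_mulVec (hP : IsStarProjection P) (c x : E → ℝ) (s : ℝ) :
    x ⬝ᵥ shiftedCompression P c s *ᵥ x = ∑ e, c e * (P *ᵥ x) e ^ 2 + s * (x ⬝ᵥ x) := by
  have conj := dotProduct_conj_diagonal_mulVec P c x
  rw [hP.isSelfAdjoint.star_eq] at conj
  rw [shiftedCompression, add_mulVec, dotProduct_add, conj, smul_mulVec, one_mulVec,
    dotProduct_smul, smul_eq_mul]
  simp only [mul_comm]

theorem le_dotProduct_shiftedCompression_mulVec (hP : IsStarProjection P) {c : E → ℝ}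
    (hc : ∀ e, 0 ≤ c e) (s : ℝ) (x : E → ℝ) :
    s * (x ⬝ᵥ x) ≤ x ⬝ᵥ shiftedCompression P c s *ᵥ x := by
  rw [dotProduct_shiftedCompression_mulVec hP]
  exact le_add_of_nonneg_left (Finset.sum_nonneg fun e _ => mul_nonneg (hc e) (sq_nonneg _))

theorem shiftedCompression_posSemidef (hP : IsStarProjection P) {c : E → ℝ} (hc : ∀ e, 0 ≤ c e)
    {s : ℝ} (hs : 0 ≤ s) : (shiftedCompression P c s).PosSemidef := by
  refine .add ?_ (PosSemidef.one.smul hs)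
  have := (PosSemidef.diagonal hc).mul_mul_conjTranspose_same P
  rwa [← star_eq_conjTranspose, hP.isSelfAdjoint.star_eq] at this

theorem mul_diagonal_single_mul_of_isStarProjection (hP : IsStarProjection P) (e : E) :
    P * diagonal (Pi.single e (1 : ℝ)) * P = vecMulVec (P e) (P e) := by
  rw [diagonal_single, single_eq_single_vecMulVec_single, mul_vecMulVec, vecMulVec_mul,
    mulVec_single_one, single_one_vecMul, col, transpose_eq_of_isStarProjection hP, row]

theorem shiftedCompression_update (hP : IsStarProjection P) (c : E → ℝ) (s : ℝ) (e : E) (a : ℝ) :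
    shiftedCompression P (Function.update c e a) s =
      shiftedCompression P c s + (a - c e) • vecMulVec (P e) (P e) := by
  have split : diagonal (Function.update c e a) =
      diagonal c + (a - c e) • diagonal (Pi.single e (1 : ℝ)) := by
    rw [← diagonal_smul, diagonal_add]
    congr 1
    ext i
    rcases eq_or_ne i e with rfl | h <;> simp [*]
  rw [shiftedCompression, split, mul_add, add_mul, mul_smul_comm, smul_mul_assoc,
    mul_diagonal_single_mul_of_isStarProjection hP, shiftedCompression]
  abel

variable [Fintype α] [Nonempty α] {μ t η s : ℝ} {δ : α → ℝ} {p : ℕ}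

theorem expect_trace_shiftedCompression_update_le (hP : IsStarProjection P) (hμ : ∀ e, P e e ≤ μ)
    (hδ0 : ∀ a, 0 ≤ δ a) (hδ1 : ∀ a, δ a ≤ 1) (ht : 0 ≤ t) (ht1 : t ≤ 1)
    (hδt : 𝔼 a, δ a + η ≤ t) (hs : 0 < s) (hp : (1 + μ / s) ^ p ≤ 1 + η) {c : E → ℝ}
    (hc : ∀ e, 0 ≤ c e) {e : E} (hce : c e = t) :
    𝔼 a, (shiftedCompression P (Function.update c e (δ a)) s ^ p).trace ≤
      (shiftedCompression P c s ^ p).trace := by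
  set C := shiftedCompression P c s
  set M : ℝ := p * moment C (P e) (p - 1)
  have hC : C.PosSemidef := shiftedCompression_posSemidef hP hc hs.le
  have hM : 0 ≤ M := mul_nonneg p.cast_nonneg (moment_nonneg hC _ _)
  have hv : P e ⬝ᵥ P e ≤ μ := (row_dotProduct_row_of_isStarProjection hP e e).trans_le (hμ e)
  have hv0 : 0 ≤ P e ⬝ᵥ P e := moment_zero C (P e) ▸ moment_nonneg hC _ 0
  have growth : (1 + P e ⬝ᵥ P e / s) ^ p ≤ 1 + η := le_trans (by gcongr) hp
  have trace_le : ∀ a, (shiftedCompression P (Function.update c e (δ a)) s ^ p).trace ≤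
      ((C ^ p).trace + (η - t) * M) + M * δ a := fun a => by
    have hd : |δ a - t| ≤ 1 := abs_le.2 ⟨by linarith [hδ0 a], by linarith [hδ1 a]⟩
    have rankOne := trace_pow_add_smul_le hC hs
      (le_dotProduct_shiftedCompression_mulVec hP hc s) (P e) hd p
    rw [shiftedCompression_update hP, hce]
    nlinarith
  refine (Finset.expect_le_expect fun a _ => trace_le a).trans ?_
  rw [Finset.expect_add_distrib, Fintype.expect_const, ← Finset.mul_expect]
  nlinarith

theorem expect_trace_shiftedCompression_pow_le (hP : IsStarProjection P) (hμ : ∀ e, P e e ≤ μ)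
    (hδ0 : ∀ a, 0 ≤ δ a) (hδ1 : ∀ a, δ a ≤ 1) (ht : 0 ≤ t) (ht1 : t ≤ 1)
    (hδt : 𝔼 a, δ a + η ≤ t) (hs : 0 < s) (hp : (1 + μ / s) ^ p ≤ 1 + η) (S : Finset E) :
    𝔼 x : E → α, (shiftedCompression P (fun e => if e ∈ S then δ (x e) else t) s ^ p).trace ≤
      (shiftedCompression P (fun _ => t) s ^ p).trace := by
  induction S using Finset.induction_on with
  | empty => simp only [Finset.notMem_empty, if_false, Fintype.expect_const, le_refl]
  | insert e S he ih =>
    rw [expect_resample (β := α) (fun x a => Function.update x e a) (fun x => x e) (by simp)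
      (by simp)]
    refine (Finset.expect_le_expect fun x _ => ?_).trans ih
    have weights_update : ∀ a, (fun f => if f ∈ insert e S then δ (Function.update x e a f)
        else t) = Function.update (fun f => if f ∈ S then δ (x f) else t) e (δ a) := fun a => by
      ext f
      rcases eq_or_ne f e with rfl | hf <;> simp [*]
    simp only [weights_update]
    refine expect_trace_shiftedCompression_update_le hP hμ hδ0 hδ1 ht ht1 hδt hs hp (fun f => ?_)
      (if_neg he)
    split_ifs
    exacts [hδ0 _, ht]

theorem unifProb_not_sum_mul_mulVec_sq_le (hP : IsStarProjection P) (hμ : ∀ e, P e e ≤ μ)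
    (hδ0 : ∀ a, 0 ≤ δ a) (hδ1 : ∀ a, δ a ≤ 1) (ht : 0 ≤ t) (ht1 : t ≤ 1)
    (hδt : 𝔼 a, δ a + η ≤ t) (hs : 0 < s) {σ : ℝ} (hσ : 0 ≤ σ)
    (hp : (1 + μ / s) ^ p ≤ 1 + η) :
    unifProb (fun x : E → α => ¬ ∀ z : E → ℝ,
      ∑ e, δ (x e) * (P *ᵥ z) e ^ 2 ≤ σ * (z ⬝ᵥ z)) ≤
      Fintype.card E * ((t + s) / (σ + s)) ^ p := by
  set C : (E → α) → Matrix E E ℝ := fun x => shiftedCompression P (fun e => δ (x e)) s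
  have hC : ∀ x, (C x).PosSemidef := fun x =>
    shiftedCompression_posSemidef hP (fun e => hδ0 (x e)) hs.le
  have hpos : 0 < (σ + s) ^ p := by positivity
  have mean_le : 𝔼 x, (C x ^ p).trace ≤ Fintype.card E * (t + s) ^ p := by
    have averaged := expect_trace_shiftedCompression_pow_le hP hμ hδ0 hδ1 ht ht1 hδt hs hp .univ
    simp only [Finset.mem_univ, if_true] at averaged
    refine averaged.trans (trace_pow_le_card_mul_pow
      (shiftedCompression_posSemidef hP (fun _ => ht) hs.le) (fun z => ?_) p)
    rw [dotProduct_shiftedCompression_mulVec hP, ← Finset.mul_sum, add_mul]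
    have := mulVec_dotProduct_mulVec_self_le_of_isStarProjection hP z
    simp only [dotProduct, ← sq] at this ⊢
    gcongr
  have good_of_trace_lt : ∀ x, (C x ^ p).trace < (σ + s) ^ p → ∀ z : E → ℝ,
      ∑ e, δ (x e) * (P *ᵥ z) e ^ 2 ≤ σ * (z ⬝ᵥ z) := fun x hx z => by
    have := dotProduct_mulVec_le_of_eigenvalues_le (hC x).isHermitian
      (fun i => (eigenvalues_lt_of_trace_pow_lt (hC x) (by positivity) hx i).le) z
    rw [dotProduct_shiftedCompression_mulVec hP] at this
    linarith
  calc unifProb _ ≤ 𝔼 x, (C x ^ p).trace / (σ + s) ^ p :=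
        unifProb_le_expect _ (fun x => div_nonneg ((hC x).pow p).trace_nonneg hpos.le)
          fun x hx => (one_le_div hpos).2 (not_lt.1 fun h => hx (good_of_trace_lt x h))
    _ = (𝔼 x, (C x ^ p).trace) / (σ + s) ^ p := (Finset.expect_div ..).symm
    _ ≤ Fintype.card E * (t + s) ^ p / (σ + s) ^ p := by gcongr
    _ = _ := by rw [div_pow, mul_div_assoc]

end ProjectionChernoff

section SpectralNet

open scoped Matrix.Norms.L2Operator

theorem sum_Icc_two_pow_neg_natAbs (B : ℕ) :
    ∑ k ∈ Finset.Icc (-(B : ℤ)) B, (1 / 2 : ℝ) ^ k.natAbs = 3 - 2 * (1 / 2) ^ B := by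
  induction B with
  | zero => norm_num
  | succ B ih =>
    have h : Finset.Icc (-((B + 1 : ℕ) : ℤ)) (B + 1 : ℕ) =
        insert ((B + 1 : ℕ) : ℤ) (insert (-((B + 1 : ℕ) : ℤ)) (Finset.Icc (-(B : ℤ)) B)) := by
      ext k
      simp only [Finset.mem_Icc, Finset.mem_insert]
      omega
    rw [h, Finset.sum_insert (by simp; omega), Finset.sum_insert (by simp), ih, Int.natAbs_neg,
      Int.natAbs_natCast, pow_succ]
    ring

theorem sum_Icc_exp_neg_sq_le (B : ℕ) :
    ∑ k ∈ Finset.Icc (-(B : ℤ)) B, Real.exp (-(k : ℝ) ^ 2) ≤ 3 := by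
  have exp_neg_one_le : Real.exp (-1) ≤ 1 / 2 := by
    rw [Real.exp_neg, one_div]
    exact inv_anti₀ (by norm_num) (by linarith [Real.add_one_le_exp 1])
  have natAbs_le_sq : ∀ k : ℤ, (k.natAbs : ℝ) ≤ (k : ℝ) ^ 2 := fun k => by
    have : (k.natAbs : ℤ) ≤ k ^ 2 := by
      rw [← Int.natAbs_sq]
      exact_mod_cast Nat.le_self_pow two_ne_zero _
    calc (k.natAbs : ℝ) = ((k.natAbs : ℤ) : ℝ) := by rw [Int.cast_natCast]
      _ ≤ ((k ^ 2 : ℤ) : ℝ) := Int.cast_le.2 this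
      _ = (k : ℝ) ^ 2 := Int.cast_pow ..
  calc ∑ k ∈ Finset.Icc (-(B : ℤ)) B, Real.exp (-(k : ℝ) ^ 2)
      ≤ ∑ k ∈ Finset.Icc (-(B : ℤ)) B, (1 / 2 : ℝ) ^ k.natAbs := Finset.sum_le_sum fun k _ => by
        calc Real.exp (-(k : ℝ) ^ 2) ≤ Real.exp (k.natAbs * (-1)) :=
              Real.exp_le_exp.2 (by linarith [natAbs_le_sq k])
          _ = Real.exp (-1) ^ k.natAbs := Real.exp_nat_mul _ _
          _ ≤ _ := pow_le_pow_left₀ (Real.exp_pos _).le exp_neg_one_le _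
    _ = 3 - 2 * (1 / 2) ^ B := sum_Icc_two_pow_neg_natAbs B
    _ ≤ 3 := by linarith [pow_pos (one_half_pos (α := ℝ)) B]

variable {ι κ : Type*} [Fintype ι] [Fintype κ]

open Classical in
variable (ι) in
/-- Integer vectors with squared length at most `R`. -/
noncomputable def integerBall (R : ℕ) : Finset (ι → ℤ) :=
  (Fintype.piFinset fun _ => Finset.Icc (-(R : ℤ)) R).filter fun k => ∑ i, k i ^ 2 ≤ R

theorem mem_integerBall {R : ℕ} {k : ι → ℤ} : k ∈ integerBall ι R ↔ ∑ i, k i ^ 2 ≤ R := by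
  simp only [integerBall, Finset.mem_filter, Fintype.mem_piFinset, Finset.mem_Icc,
    and_iff_right_iff_imp]
  intro h i
  have coordinate : k i ^ 2 ≤ R :=
    (Finset.single_le_sum (fun j _ => sq_nonneg (k j)) (Finset.mem_univ i)).trans h
  constructor <;> nlinarith

theorem card_integerBall_le (R : ℕ) :
    ((integerBall ι R).card : ℝ) ≤ Real.exp (R + 2 * Fintype.card ι) := by
  classical
  have three_le : (3 : ℝ) ≤ Real.exp 2 := by linarith [Real.add_one_le_exp 2]
  calc ((integerBall ι R).card : ℝ) = ∑ _k ∈ integerBall ι R, (1 : ℝ) := by simp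
    _ ≤ ∑ k ∈ integerBall ι R, Real.exp R * ∏ i, Real.exp (-(k i : ℝ) ^ 2) := by
        refine Finset.sum_le_sum fun k hk => ?_
        have : ∑ i, (k i : ℝ) ^ 2 ≤ R := by exact_mod_cast mem_integerBall.1 hk
        rw [← Real.exp_sum, ← Real.exp_add, Finset.sum_neg_distrib]
        exact Real.one_le_exp (by linarith)
    _ ≤ ∑ k ∈ Fintype.piFinset fun _ : ι => Finset.Icc (-(R : ℤ)) R,
          Real.exp R * ∏ i, Real.exp (-(k i : ℝ) ^ 2) :=
        Finset.sum_le_sum_of_subset_of_nonneg (Finset.filter_subset _ _)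
          fun _ _ _ => by positivity
    _ = Real.exp R * (∑ k ∈ Finset.Icc (-(R : ℤ)) R, Real.exp (-(k : ℝ) ^ 2)) ^
          Fintype.card ι := by
        rw [← Finset.mul_sum, ← Finset.card_univ, ← Finset.prod_const, Finset.prod_univ_sum]
    _ ≤ Real.exp R * Real.exp 2 ^ Fintype.card ι := by
        gcongr
        exact (sum_Icc_exp_neg_sq_le R).trans three_le
    _ = _ := by rw [← Real.exp_nat_mul, ← Real.exp_add, mul_comm (2 : ℝ)]

theorem exists_int_sq_le_sq_and_sub_sq_le_one (t : ℝ) :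
    ∃ k : ℤ, (k : ℝ) ^ 2 ≤ t ^ 2 ∧ (t - k) ^ 2 ≤ 1 := by
  rcases le_total 0 t with h | h
  · have floor_nonneg : (0 : ℝ) ≤ ⌊t⌋ := by exact_mod_cast Int.floor_nonneg.2 h
    exact ⟨⌊t⌋, by nlinarith [Int.floor_le t], by
      nlinarith [Int.floor_le t, Int.lt_floor_add_one t]⟩
  · have ceil_nonpos : (⌈t⌉ : ℝ) ≤ 0 := by exact_mod_cast Int.ceil_le.2 (by simpa using h)
    exact ⟨⌈t⌉, by nlinarith [Int.le_ceil t], by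
      nlinarith [Int.le_ceil t, Int.ceil_lt_add_one t]⟩

open Classical in
variable (ι) in
/-- The points of the grid `(4√N)⁻¹ ℤ` in the Euclidean unit ball; a `1/4`-net of the ball as soon
as the dimension is at most `N`. -/
noncomputable def ballNet (N : ℕ) : Finset (ι → ℝ) :=
  (integerBall ι (16 * N)).image fun k i => k i / (4 * √N)

theorem card_ballNet_le {N : ℕ} (hN : Fintype.card ι ≤ N) :
    ((ballNet ι N).card : ℝ) ≤ Real.exp (18 * N) := by
  have hN' : (Fintype.card ι : ℝ) ≤ N := by exact_mod_cast hN
  calc ((ballNet ι N).card : ℝ) ≤ (integerBall ι (16 * N)).card := by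
        exact_mod_cast Finset.card_image_le
    _ ≤ Real.exp ((16 * N : ℕ) + 2 * Fintype.card ι) := card_integerBall_le _
    _ ≤ _ := Real.exp_le_exp.2 (by push_cast; linarith)

theorem dotProduct_self_le_one_of_mem_ballNet {N : ℕ} {x : ι → ℝ} (hx : x ∈ ballNet ι N) :
    x ⬝ᵥ x ≤ 1 := by
  obtain ⟨k, hk, rfl⟩ := Finset.mem_image.1 hx
  have hk' : ∑ i, (k i : ℝ) ^ 2 ≤ 16 * N := by exact_mod_cast mem_integerBall.1 hk
  have scale_sq : (4 * √(N : ℝ)) ^ 2 = 16 * N := by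
    rw [mul_pow, Real.sq_sqrt N.cast_nonneg]
    norm_num
  calc _ = (∑ i, (k i : ℝ) ^ 2) / (16 * N) := by
        simp only [dotProduct, ← sq, div_pow, scale_sq, Finset.sum_div]
    _ ≤ 1 := div_le_one_of_le₀ hk' (by positivity)

theorem exists_mem_ballNet_sqrt_sub_le {N : ℕ} (hN : Fintype.card ι ≤ N) (hN0 : 0 < N) {x : ι → ℝ}
    (hx : x ⬝ᵥ x ≤ 1) : ∃ x' ∈ ballNet ι N, √((x - x') ⬝ᵥ (x - x')) ≤ 1 / 4 := by
  set t := 4 * √(N : ℝ) with ht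
  have hN' : (Fintype.card ι : ℝ) ≤ N := by exact_mod_cast hN
  have hN0' : (0 : ℝ) < N := by exact_mod_cast hN0
  have ht0 : 0 < t := by positivity
  have scale_sq : t ^ 2 = 16 * N := by
    rw [ht, mul_pow, Real.sq_sqrt hN0'.le]
    norm_num
  choose k sq_le sub_sq_le using fun i => exists_int_sq_le_sq_and_sub_sq_le_one (t * x i)
  have mem : k ∈ integerBall ι (16 * N) := mem_integerBall.2 <| by
    have : ∑ i, (k i : ℝ) ^ 2 ≤ 16 * N :=
      calc ∑ i, (k i : ℝ) ^ 2 ≤ ∑ i, (t * x i) ^ 2 := Finset.sum_le_sum fun i _ => sq_le i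
        _ = 16 * N * (x ⬝ᵥ x) := by
          simp only [mul_pow, scale_sq, dotProduct, ← sq, Finset.mul_sum]
        _ ≤ 16 * N := mul_le_of_le_one_right (by positivity) hx
    exact_mod_cast this
  refine ⟨_, Finset.mem_image_of_mem _ mem, Real.sqrt_le_iff.2 ⟨by norm_num, ?_⟩⟩
  calc _ = (∑ i, (t * x i - k i) ^ 2) / t ^ 2 := by
        rw [dotProduct, Finset.sum_div]
        refine Finset.sum_congr rfl fun i _ => ?_
        rw [Pi.sub_apply, ← ht]
        field_simp
    _ ≤ Fintype.card ι / t ^ 2 := by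
        gcongr
        simpa using Finset.sum_le_sum fun i (_ : i ∈ Finset.univ) => sub_sq_le i
    _ ≤ (1 / 4) ^ 2 := by
        rw [scale_sq, div_le_iff₀ (by positivity)]
        linarith

theorem norm_le_two_mul_of_ballNet [DecidableEq κ] {N : ℕ} (hι : Fintype.card ι ≤ N)
    (hκ : Fintype.card κ ≤ N) (hN : 0 < N) {M : Matrix ι κ ℝ} {b : ℝ} (hb : 0 ≤ b)
    (h : ∀ x ∈ ballNet κ N, ∀ y ∈ ballNet ι N, y ⬝ᵥ M *ᵥ x ≤ b) : ‖M‖ ≤ 2 * b := by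
  suffices ‖M‖ ≤ b + ‖M‖ / 2 by linarith
  refine norm_le_of_dotProduct_le (by positivity) fun x y hx hy => ?_
  obtain ⟨x', mem_x', hxx'⟩ := exists_mem_ballNet_sqrt_sub_le hκ hN hx
  obtain ⟨y', mem_y', hyy'⟩ := exists_mem_ballNet_sqrt_sub_le hι hN hy
  have hy' : √(y' ⬝ᵥ y') ≤ 1 :=
    Real.sqrt_le_one.2 (dotProduct_self_le_one_of_mem_ballNet mem_y')
  have hx1 : √(x ⬝ᵥ x) ≤ 1 := Real.sqrt_le_one.2 hx
  calc y ⬝ᵥ M *ᵥ x = y' ⬝ᵥ M *ᵥ x' + y' ⬝ᵥ M *ᵥ (x - x') + (y - y') ⬝ᵥ M *ᵥ x := by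
        rw [mulVec_sub, dotProduct_sub, sub_dotProduct]
        ring
    _ ≤ b + ‖M‖ * √((x - x') ⬝ᵥ (x - x')) * √(y' ⬝ᵥ y') +
          ‖M‖ * √(x ⬝ᵥ x) * √((y - y') ⬝ᵥ (y - y')) :=
        add_le_add (add_le_add (h x' mem_x' y' mem_y') (dotProduct_mulVec_le_norm ..))
          (dotProduct_mulVec_le_norm ..)
    _ ≤ b + ‖M‖ * (1 / 4) * 1 + ‖M‖ * 1 * (1 / 4) := by gcongr
    _ = b + ‖M‖ / 2 := by ring

variable {α : Type*} [Fintype α] {c : ℝ} {M : α → Matrix ι κ ℝ}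

theorem unifProb_lt_dotProduct_mulVec_le (hc : 0 < c)
    (hM : ∀ x y, 𝔼 a, Real.exp (y ⬝ᵥ M a *ᵥ x) ≤ Real.exp (c * ((x ⬝ᵥ x) * (y ⬝ᵥ y))))
    {b : ℝ} (hb : 0 < b) {x : κ → ℝ} {y : ι → ℝ} (hx : x ⬝ᵥ x ≤ 1) (hy : y ⬝ᵥ y ≤ 1) :
    unifProb (fun a => b < y ⬝ᵥ M a *ᵥ x) ≤ Real.exp (-(b ^ 2 / (4 * c))) := by
  set t := b / (2 * c) with ht
  have ht0 : 0 < t := by positivity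
  calc _ ≤ unifProb (fun a => t * b < y ⬝ᵥ M a *ᵥ (t • x)) := unifProb_mono fun a ha => by
        rw [mulVec_smul, dotProduct_smul, smul_eq_mul]
        exact mul_lt_mul_of_pos_left ha ht0
    _ ≤ Real.exp (-(t * b)) * Real.exp (c * (((t • x) ⬝ᵥ (t • x)) * (y ⬝ᵥ y))) :=
        (unifProb_lt_le_exp_mul_expect_exp _ _).trans
          (mul_le_mul_of_nonneg_left (hM _ _) (Real.exp_pos _).le)
    _ = Real.exp (-(t * b) + c * t ^ 2 * ((x ⬝ᵥ x) * (y ⬝ᵥ y))) := by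
        rw [← Real.exp_add, smul_dotProduct, dotProduct_smul, smul_eq_mul, smul_eq_mul]
        ring_nf
    _ ≤ Real.exp (-(t * b) + c * t ^ 2 * 1) := by
        have := mul_le_one₀ hx (dotProduct_self_nonneg y) hy
        gcongr
    _ = _ := by
        congr 1
        rw [ht]
        field_simp
        ring

theorem unifProb_norm_le_of_subgaussian [DecidableEq κ] {N : ℕ} (hι : Fintype.card ι ≤ N)
    (hκ : Fintype.card κ ≤ N) (hN : 0 < N) (hc : 0 < c)
    (hM : ∀ x y, 𝔼 a, Real.exp (y ⬝ᵥ M a *ᵥ x) ≤ Real.exp (c * ((x ⬝ᵥ x) * (y ⬝ᵥ y)))) :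
    unifProb (fun a => ¬ ‖M a‖ ≤ 25 * √(c * N)) ≤ Real.exp (-N) := by
  set b := 25 / 2 * √(c * N) with hb
  have hN' : (0 : ℝ) < N := by exact_mod_cast hN
  have hb0 : 0 < b := by positivity
  have exponent : b ^ 2 / (4 * c) = 625 / 16 * N := by
    rw [hb, mul_pow, Real.sq_sqrt (by positivity)]
    field_simp
    norm_num
  let pairs := ballNet κ N ×ˢ ballNet ι N
  calc _ ≤ unifProb (fun a => ∃ xy ∈ pairs, b < xy.2 ⬝ᵥ M a *ᵥ xy.1) := unifProb_mono fun a ha => by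
        by_contra! hcon
        refine ha ((norm_le_two_mul_of_ballNet hι hκ hN hb0.le fun x hx y hy =>
          hcon (x, y) (Finset.mem_product.2 ⟨hx, hy⟩)).trans_eq ?_)
        ring
    _ ≤ pairs.card * Real.exp (-(625 / 16 * N)) :=
        unifProb_exists_le_card_mul pairs _ fun xy hxy => by
          rw [← exponent]
          have mem := Finset.mem_product.1 hxy
          exact unifProb_lt_dotProduct_mulVec_le hc hM hb0
            (dotProduct_self_le_one_of_mem_ballNet mem.1)
            (dotProduct_self_le_one_of_mem_ballNet mem.2)
    _ ≤ Real.exp (18 * N) * Real.exp (18 * N) * Real.exp (-(625 / 16 * N)) := by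
        rw [Finset.card_product, Nat.cast_mul]
        gcongr
        exacts [card_ballNet_le hκ, card_ballNet_le hι]
    _ ≤ _ := by
        rw [← Real.exp_add, ← Real.exp_add]
        exact Real.exp_le_exp.2 (by linarith [N.cast_nonneg (α := ℝ)])

end SpectralNet

section MatrixNorms

open scoped Matrix.Norms.L2Operator

variable {n1 n2 r : ℕ}

theorem minner_eq_trace (A B : Matrix (Fin n1) (Fin n2) ℝ) : minner A B = (Aᵀ * B).trace := by
  simp only [minner, trace, diag_apply, mul_apply, transpose_apply]
  exact Finset.sum_comm

theorem spec_eq_norm (A : Matrix (Fin n1) (Fin n2) ℝ) : spec A = ‖A‖ := by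
  have spec_set_eq : {c : ℝ | ∃ x : Fin n2 → ℝ, (∑ j, x j ^ 2) ≤ 1 ∧
      c = √(∑ i, (∑ j, A i j * x j) ^ 2)} =
      {c : ℝ | ∃ x : Fin n2 → ℝ, x ⬝ᵥ x ≤ 1 ∧ c = √((A *ᵥ x) ⬝ᵥ (A *ᵥ x))} := by
    simp only [dotProduct, mulVec, sq]
  have le_norm : ∀ c ∈ {c : ℝ | ∃ x : Fin n2 → ℝ, x ⬝ᵥ x ≤ 1 ∧ c = √((A *ᵥ x) ⬝ᵥ (A *ᵥ x))},
      c ≤ ‖A‖ := by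
    rintro c ⟨x, hx, rfl⟩
    exact (sqrt_mulVec_le_norm A x).trans
      (mul_le_of_le_one_right (norm_nonneg _) (Real.sqrt_le_one.2 hx))
  rw [spec, spec_set_eq]
  refine le_antisymm (csSup_le ⟨0, 0, by simp⟩ le_norm) ?_
  refine norm_le_of_dotProduct_le (Real.sSup_nonneg ?_) fun x y hx hy => ?_
  · rintro c ⟨x, -, rfl⟩
    exact Real.sqrt_nonneg _
  · calc y ⬝ᵥ A *ᵥ x ≤ √(y ⬝ᵥ y) * √((A *ᵥ x) ⬝ᵥ (A *ᵥ x)) := dotProduct_le_sqrt_mul_sqrt _ _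
      _ ≤ √((A *ᵥ x) ⬝ᵥ (A *ᵥ x)) :=
        mul_le_of_le_one_left (Real.sqrt_nonneg _) (Real.sqrt_le_one.2 hy)
      _ ≤ _ := le_csSup ⟨‖A‖, le_norm⟩ ⟨x, hx, rfl⟩

theorem abs_apply_le_norm {ι κ : Type*} [Fintype ι] [Fintype κ] [DecidableEq κ]
    (B : Matrix ι κ ℝ) (i : ι) (j : κ) : |B i j| ≤ ‖B‖ := by
  classical
  have apply_le (C : Matrix ι κ ℝ) : C i j ≤ ‖C‖ := by
    simpa using dotProduct_mulVec_le_norm C (Pi.single j 1) (Pi.single i 1)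
  refine abs_le.2 ⟨?_, apply_le B⟩
  simpa [neg_le] using apply_le (-B)

theorem minner_le_nuc (A : Matrix (Fin n1) (Fin n2) ℝ) {B : Matrix (Fin n1) (Fin n2) ℝ}
    (hB : ‖B‖ ≤ 1) : minner A B ≤ nuc A := by
  refine le_csSup ⟨l1norm A, ?_⟩ ⟨B, (spec_eq_norm B).le.trans hB, rfl⟩
  rintro c ⟨C, hC, rfl⟩
  rw [spec_eq_norm] at hC
  refine Finset.sum_le_sum fun i _ => Finset.sum_le_sum fun j _ => (le_abs_self _).trans ?_
  rw [abs_mul]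
  exact mul_le_of_le_one_right (abs_nonneg _) ((abs_apply_le_norm C i j).trans hC)

theorem minner_mul_diagonal_mul_transpose (U : Matrix (Fin n1) (Fin r) ℝ)
    (V : Matrix (Fin n2) (Fin r) ℝ) (σ : Fin r → ℝ) (B : Matrix (Fin n1) (Fin n2) ℝ) :
    minner (U * diagonal σ * Vᵀ) B = ∑ k, σ k * (Uᵀ * B * V) k k := by
  rw [minner_eq_trace, transpose_mul, transpose_mul, transpose_transpose, diagonal_transpose,
    Matrix.mul_assoc, trace_mul_comm, Matrix.mul_assoc, Matrix.mul_assoc]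
  simp only [trace, diag_apply, diagonal_mul, Matrix.mul_assoc]

theorem norm_le_one_of_transpose_mul_self {ι κ : Type*} [Fintype ι] [Fintype κ] [DecidableEq κ]
    {U : Matrix ι κ ℝ} (hU : Uᵀ * U = 1) : ‖U‖ ≤ 1 :=
  norm_le_of_sqrt_mulVec_le zero_le_one fun x => by
    rw [mulVec_dotProduct_mulVec, hU, one_mulVec, one_mul]

theorem nuc_mul_diagonal_mul_transpose_le {U : Matrix (Fin n1) (Fin r) ℝ}
    {V : Matrix (Fin n2) (Fin r) ℝ} {σ : Fin r → ℝ} (hU : Uᵀ * U = 1) (hV : Vᵀ * V = 1)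
    (hσ : ∀ k, 0 ≤ σ k) : nuc (U * diagonal σ * Vᵀ) ≤ ∑ k, σ k := by
  refine csSup_le ⟨_, 0, by rw [spec_eq_norm]; simp, rfl⟩ ?_
  rintro c ⟨B, hB, rfl⟩
  rw [spec_eq_norm] at hB
  rw [minner_mul_diagonal_mul_transpose]
  refine Finset.sum_le_sum fun k _ => mul_le_of_le_one_right (hσ k) ?_
  have norm_transpose : ‖Uᵀ‖ ≤ 1 := by
    rw [← conjTranspose_eq_transpose_of_trivial, l2_opNorm_conjTranspose]
    exact norm_le_one_of_transpose_mul_self hU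
  calc (Uᵀ * B * V) k k ≤ ‖Uᵀ * B * V‖ := (le_abs_self _).trans (abs_apply_le_norm _ k k)
    _ ≤ ‖Uᵀ‖ * ‖B‖ * ‖V‖ :=
      (l2_opNorm_mul _ _).trans (mul_le_mul_of_nonneg_right (l2_opNorm_mul _ _) (norm_nonneg _))
    _ ≤ 1 * 1 * 1 := by
      gcongr
      exact norm_le_one_of_transpose_mul_self hV
    _ = 1 := by norm_num

end MatrixNorms

section TangentComplement

open scoped Matrix.Norms.L2Operator

variable {m n r : Type*}

/-- The matrix with the given family of entries, inverse to `entries`. -/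
def mat (z : m × n → ℝ) : Matrix m n ℝ := Matrix.of fun i j => z (i, j)

/-- The family of entries of a matrix, on which entrywise projections and projections of the space
of matrices act as matrices indexed by `m × n`. -/
def entries (M : Matrix m n ℝ) : m × n → ℝ := fun e => M e.1 e.2

@[simp] theorem mat_entries (M : Matrix m n ℝ) : mat (entries M) = M := rfl

@[simp] theorem entries_mat (z : m × n → ℝ) : entries (mat z) = z := rfl

theorem mat_add (y z : m × n → ℝ) : mat (y + z) = mat y + mat z := rfl

theorem entries_add (M N : Matrix m n ℝ) : entries (M + N) = entries M + entries N := rfl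

variable [Fintype m] [Fintype n] [Fintype r]

theorem dotProduct_mat_mulVec (y : m → ℝ) (z : m × n → ℝ) (x : n → ℝ) :
    y ⬝ᵥ mat z *ᵥ x = entries (vecMulVec y x) ⬝ᵥ z := by
  simp only [entries, vecMulVec_apply, dotProduct, mulVec, mat, of_apply, Fintype.sum_prod_type,
    Finset.mul_sum, mul_assoc, mul_comm (z _)]

theorem entries_vecMulVec_dotProduct_self (y : m → ℝ) (x : n → ℝ) :
    entries (vecMulVec y x) ⬝ᵥ entries (vecMulVec y x) = (y ⬝ᵥ y) * (x ⬝ᵥ x) := by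
  simp only [entries, vecMulVec_apply, dotProduct, Fintype.sum_prod_type, Finset.sum_mul_sum,
    mul_mul_mul_comm]

theorem norm_mat_le [DecidableEq n] (z : m × n → ℝ) : ‖mat z‖ ≤ √(z ⬝ᵥ z) := by
  refine norm_le_of_dotProduct_le (Real.sqrt_nonneg _) fun x y hx hy => ?_
  rw [dotProduct_mat_mulVec]
  refine (dotProduct_le_sqrt_mul_sqrt _ _).trans
    (mul_le_of_le_one_left (Real.sqrt_nonneg _) (Real.sqrt_le_one.2 ?_))
  rw [entries_vecMulVec_dotProduct_self]
  exact mul_le_one₀ hy (dotProduct_self_nonneg _) hx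

theorem isStarProjection_mul_transpose [DecidableEq r] {U : Matrix m r ℝ} (hU : Uᵀ * U = 1) :
    IsStarProjection (U * Uᵀ) where
  isIdempotentElem := by
    rw [IsIdempotentElem, Matrix.mul_assoc, ← Matrix.mul_assoc Uᵀ, hU, Matrix.one_mul]
  isSelfAdjoint := by
    rw [IsSelfAdjoint, star_eq_conjTranspose, conjTranspose_eq_transpose_of_trivial,
      transpose_mul, transpose_transpose]

variable [DecidableEq n]

theorem norm_add_le_one_of_orthogonal [DecidableEq r] {U : Matrix m r ℝ} {V : Matrix n r ℝ}
    {G : Matrix m n ℝ} (hU : Uᵀ * U = 1) (hV : Vᵀ * V = 1) (hGU : Uᵀ * G = 0) (hGV : G * V = 0)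
    (hG : ‖G‖ ≤ 1) : ‖U * Vᵀ + G‖ ≤ 1 := by
  refine norm_le_of_sqrt_mulVec_le zero_le_one fun x => ?_
  rw [one_mul]
  refine Real.sqrt_le_sqrt ?_
  have hVV := isStarProjection_mul_transpose hV
  have hGU' : Gᵀ * U = 0 := by rw [← transpose_transpose U, ← transpose_mul, hGU, transpose_zero]
  have gram : (U * Vᵀ + G)ᵀ * (U * Vᵀ + G) = V * Vᵀ + Gᵀ * G := by
    rw [transpose_add, transpose_mul, transpose_transpose, Matrix.add_mul, Matrix.mul_add,
      Matrix.mul_add, Matrix.mul_assoc V, ← Matrix.mul_assoc Uᵀ, hU, Matrix.one_mul,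
      Matrix.mul_assoc V, hGU, ← Matrix.mul_assoc Gᵀ, hGU']
    simp only [Matrix.mul_zero, Matrix.zero_mul, add_zero, zero_add]
  set y := (1 - V * Vᵀ) *ᵥ x with hy
  have mulVec_eq : G *ᵥ x = G *ᵥ y := by
    rw [hy, mulVec_mulVec, Matrix.mul_sub, ← Matrix.mul_assoc, hGV, Matrix.zero_mul,
      Matrix.mul_one, sub_zero]
  have norm_G_le : (G *ᵥ y) ⬝ᵥ (G *ᵥ y) ≤ y ⬝ᵥ y :=
    (Real.sqrt_le_sqrt_iff (dotProduct_self_nonneg _)).1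
      ((sqrt_mulVec_le_norm G y).trans (mul_le_of_le_one_left (Real.sqrt_nonneg _) hG))
  calc ((U * Vᵀ + G) *ᵥ x) ⬝ᵥ ((U * Vᵀ + G) *ᵥ x)
      = x ⬝ᵥ (V * Vᵀ) *ᵥ x + (G *ᵥ y) ⬝ᵥ (G *ᵥ y) := by
        rw [mulVec_dotProduct_mulVec, gram, add_mulVec, dotProduct_add,
          ← mulVec_dotProduct_mulVec, mulVec_eq]
    _ ≤ x ⬝ᵥ (V * Vᵀ) *ᵥ x + x ⬝ᵥ (1 - V * Vᵀ) *ᵥ x := by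
        rw [← mulVec_dotProduct_mulVec_of_isStarProjection hVV.one_sub]
        gcongr
    _ = x ⬝ᵥ x := by rw [← dotProduct_add, ← add_mulVec, add_sub_cancel, one_mulVec]

variable [DecidableEq m]

/-- The orthogonal projection `M ↦ (1 - U Uᵀ) M (1 - V Vᵀ)` onto the orthogonal complement of the
tangent space `{U Qᵀ + R Vᵀ}`, as a matrix acting on families of entries. -/
def perpProj (U : Matrix m r ℝ) (V : Matrix n r ℝ) : Matrix (m × n) (m × n) ℝ :=
  (1 - U * Uᵀ).kronecker (1 - V * Vᵀ)

theorem mat_perpProj_mulVec (U : Matrix m r ℝ) (V : Matrix n r ℝ) (z : m × n → ℝ) :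
    mat (perpProj U V *ᵥ z) = (1 - U * Uᵀ) * mat z * (1 - V * Vᵀ) := by
  have eq_transpose : (1 - U * Uᵀ) * mat z * (1 - V * Vᵀ) =
      ((1 - V * Vᵀ) * (mat z)ᵀ * (1 - U * Uᵀ)ᵀ)ᵀ := by
    simp only [transpose_mul, transpose_transpose, transpose_sub, transpose_one, Matrix.mul_assoc]
  rw [eq_transpose]
  ext i j
  exact congrFun (kronecker_mulVec_vec (1 - V * Vᵀ) (mat z)ᵀ (1 - U * Uᵀ)) (i, j)

variable [DecidableEq r]

theorem isStarProjection_perpProj {U : Matrix m r ℝ} {V : Matrix n r ℝ} (hU : Uᵀ * U = 1)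
    (hV : Vᵀ * V = 1) : IsStarProjection (perpProj U V) where
  isIdempotentElem := by
    rw [IsIdempotentElem, perpProj, kronecker, ← mul_kronecker_mul,
      (isStarProjection_mul_transpose hU).one_sub.isIdempotentElem.eq,
      (isStarProjection_mul_transpose hV).one_sub.isIdempotentElem.eq]
  isSelfAdjoint := by
    rw [IsSelfAdjoint, perpProj, kronecker, star_eq_conjTranspose, conjTranspose_kronecker,
      ← star_eq_conjTranspose, ← star_eq_conjTranspose,
      (isStarProjection_mul_transpose hU).one_sub.isSelfAdjoint.star_eq,
      (isStarProjection_mul_transpose hV).one_sub.isSelfAdjoint.star_eq]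

variable {U : Matrix m r ℝ} {V : Matrix n r ℝ}

theorem norm_mat_perpProj_mulVec_le (hU : Uᵀ * U = 1) (hV : Vᵀ * V = 1) (z : m × n → ℝ) :
    ‖mat (perpProj U V *ᵥ z)‖ ≤ ‖mat z‖ := by
  rw [mat_perpProj_mulVec]
  calc ‖(1 - U * Uᵀ) * mat z * (1 - V * Vᵀ)‖ ≤ ‖1 - U * Uᵀ‖ * ‖mat z‖ * ‖1 - V * Vᵀ‖ :=
        (l2_opNorm_mul _ _).trans (mul_le_mul_of_nonneg_right (l2_opNorm_mul _ _) (norm_nonneg _))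
    _ ≤ 1 * ‖mat z‖ * 1 := by
        gcongr
        · exact (isStarProjection_mul_transpose hU).one_sub.norm_le
        · exact (isStarProjection_mul_transpose hV).one_sub.norm_le
    _ = ‖mat z‖ := by rw [one_mul, mul_one]

theorem transpose_mul_mat_perpProj_mulVec (hU : Uᵀ * U = 1) (V : Matrix n r ℝ) (z : m × n → ℝ) :
    Uᵀ * mat (perpProj U V *ᵥ z) = 0 := by
  have transpose_mul_eq_zero : Uᵀ * (1 - U * Uᵀ) = 0 := by
    rw [Matrix.mul_sub, ← Matrix.mul_assoc, hU, Matrix.one_mul, Matrix.mul_one, sub_self]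
  rw [mat_perpProj_mulVec, ← Matrix.mul_assoc, ← Matrix.mul_assoc, transpose_mul_eq_zero,
    Matrix.zero_mul, Matrix.zero_mul]

theorem mat_perpProj_mulVec_mul (U : Matrix m r ℝ) (hV : Vᵀ * V = 1) (z : m × n → ℝ) :
    mat (perpProj U V *ᵥ z) * V = 0 := by
  have mul_eq_zero : (1 - V * Vᵀ) * V = 0 := by
    rw [Matrix.sub_mul, Matrix.mul_assoc, hV, Matrix.one_mul, Matrix.mul_one, sub_self]
  rw [mat_perpProj_mulVec, Matrix.mul_assoc, mul_eq_zero, Matrix.mul_zero]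

theorem perpProj_mulVec_entries_mul_transpose (hU : Uᵀ * U = 1) :
    perpProj U V *ᵥ entries (U * Vᵀ) = 0 := by
  have mul_eq_zero : (1 - U * Uᵀ) * U = 0 := by
    rw [Matrix.sub_mul, Matrix.mul_assoc, hU, Matrix.one_mul, Matrix.mul_one, sub_self]
  rw [← entries_mat (perpProj U V *ᵥ _), mat_perpProj_mulVec, mat_entries, ← Matrix.mul_assoc,
    mul_eq_zero, Matrix.zero_mul, Matrix.zero_mul]
  rfl

end TangentComplement

section DualCertificate

open scoped Matrix.Norms.L2Operator

variable {n1 n2 : ℕ} {L0 S0 : Matrix (Fin n1) (Fin n2) ℝ} {lam : ℝ}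

theorem minner_eq_dotProduct (A B : Matrix (Fin n1) (Fin n2) ℝ) :
    minner A B = entries A ⬝ᵥ entries B := by
  simp only [minner, dotProduct, entries, Fintype.sum_prod_type]

theorem l1norm_eq_sum (A : Matrix (Fin n1) (Fin n2) ℝ) : l1norm A = ∑ e, |entries A e| := by
  simp only [l1norm, entries, Fintype.sum_prod_type]

theorem frob_nonpos_iff (A : Matrix (Fin n1) (Fin n2) ℝ) : frob A ≤ 0 ↔ A = 0 := by
  have frob_eq : frob A = √(entries A ⬝ᵥ entries A) := by
    rw [← minner_eq_dotProduct]
    simp only [frob, minner, sq]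
  rw [frob_eq, (Real.sqrt_nonneg _).ge_iff_eq', Real.sqrt_eq_zero (dotProduct_self_nonneg _),
    dotProduct_self_eq_zero]
  exact ⟨fun h => congrArg mat h, fun h => congrArg entries h⟩

/-- The pair `(L0, S0)` is the only decomposition of `L0 + S0` whose objective value
`‖L‖_* + lam ‖S‖₁` does not exceed its own, i.e. the unique minimizer of the noiseless problem. -/
def StrictlyRecovered (lam : ℝ) (L0 S0 : Matrix (Fin n1) (Fin n2) ℝ) : Prop :=
  ∀ L S : Matrix (Fin n1) (Fin n2) ℝ, L + S = L0 + S0 →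
    nuc L + lam * l1norm S ≤ nuc L0 + lam * l1norm S0 → L = L0 ∧ S = S0

theorem StrictlyRecovered.eq_of_isStablePCPMin {Lh Sh : Matrix (Fin n1) (Fin n2) ℝ}
    (h : StrictlyRecovered lam L0 S0) (hmin : IsStablePCPMin (L0 + S0) lam 0 Lh Sh) :
    Lh = L0 ∧ Sh = S0 :=
  h Lh Sh (sub_eq_zero.1 ((frob_nonpos_iff _).1 hmin.1))
    (hmin.2 L0 S0 ((frob_nonpos_iff _).2 (sub_self _)))

theorem StrictlyRecovered.mono {S1 : Matrix (Fin n1) (Fin n2) ℝ} (hlam : 0 ≤ lam)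
    (h : StrictlyRecovered lam L0 S0) (hS : ∀ i j, S1 i j = S0 i j ∨ S1 i j = 0) :
    StrictlyRecovered lam L0 S1 := by
  intro L S hLS hobj
  have l1norm_add_le : l1norm (S + (S0 - S1)) ≤ l1norm S + l1norm (S0 - S1) := by
    simp only [l1norm_eq_sum, ← Finset.sum_add_distrib]
    exact Finset.sum_le_sum fun e _ => abs_add_le _ _
  have l1norm_eq_add : l1norm S0 = l1norm S1 + l1norm (S0 - S1) := by
    simp only [l1norm_eq_sum, ← Finset.sum_add_distrib]
    refine Finset.sum_congr rfl fun e _ => ?_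
    rcases hS e.1 e.2 with h | h <;> simp [entries, h]
  obtain ⟨rfl, -⟩ := h L (S + (S0 - S1)) (by rw [← add_assoc, hLS]; abel) (by
    rw [l1norm_eq_add]
    linarith [mul_le_mul_of_nonneg_left l1norm_add_le hlam])
  exact ⟨rfl, add_left_cancel hLS⟩

section NuclearNorm

variable {r : ℕ} {U : Matrix (Fin n1) (Fin r) ℝ} {V : Matrix (Fin n2) (Fin r) ℝ} {σ : Fin r → ℝ}

theorem nuc_add_minner_le_nuc_add {G : Matrix (Fin n1) (Fin n2) ℝ} (hU : Uᵀ * U = 1)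
    (hV : Vᵀ * V = 1) (hσ : ∀ k, 0 ≤ σ k) (hGU : Uᵀ * G = 0) (hGV : G * V = 0) (hG : ‖G‖ ≤ 1)
    (H : Matrix (Fin n1) (Fin n2) ℝ) :
    nuc (U * diagonal σ * Vᵀ) + minner (U * Vᵀ + G) H ≤ nuc (U * diagonal σ * Vᵀ + H) := by
  have minner_eq_sum : minner (U * diagonal σ * Vᵀ) (U * Vᵀ + G) = ∑ k, σ k := by
    rw [minner_mul_diagonal_mul_transpose, Matrix.mul_add, hGU, add_zero, ← Matrix.mul_assoc, hU,
      Matrix.one_mul, hV]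
    simp only [one_apply_eq, mul_one]
  calc nuc (U * diagonal σ * Vᵀ) + minner (U * Vᵀ + G) H
      ≤ minner (U * diagonal σ * Vᵀ) (U * Vᵀ + G) + minner (U * Vᵀ + G) H := by
        rw [minner_eq_sum]
        gcongr
        exact nuc_mul_diagonal_mul_transpose_le hU hV hσ
    _ = minner (U * diagonal σ * Vᵀ + H) (U * Vᵀ + G) := by
        simp only [minner_eq_dotProduct, entries_add (U * diagonal σ * Vᵀ), add_dotProduct,
          dotProduct_comm (entries H)]
    _ ≤ nuc (U * diagonal σ * Vᵀ + H) :=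
        minner_le_nuc _ (norm_add_le_one_of_orthogonal hU hV hGU hGV hG)

/- The certificate `w` uses only half of the unit ball of the subdifferential, so the other half can
be spent in the direction of the component `g` of `H` off the tangent space. -/
theorem nuc_add_dotProduct_add_half_sqrt_le (hU : Uᵀ * U = 1) (hV : Vᵀ * V = 1)
    (hσ : ∀ k, 0 ≤ σ k) {w : Fin n1 × Fin n2 → ℝ} (hw : ‖mat (perpProj U V *ᵥ w)‖ ≤ 1 / 2)
    (h : Fin n1 × Fin n2 → ℝ) :
    nuc (U * diagonal σ * Vᵀ) + h ⬝ᵥ (entries (U * Vᵀ) + perpProj U V *ᵥ w) +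
        1 / 2 * √((perpProj U V *ᵥ h) ⬝ᵥ (perpProj U V *ᵥ h)) ≤
      nuc (U * diagonal σ * Vᵀ + mat h) := by
  set g := perpProj U V *ᵥ h with hg
  set γ := √(g ⬝ᵥ g)
  have γ_mul_self : γ * γ = g ⬝ᵥ g := Real.mul_self_sqrt (dotProduct_self_nonneg _)
  have h_dot_g : h ⬝ᵥ g = γ * γ := by
    rw [γ_mul_self, hg,
      mulVec_dotProduct_mulVec_of_isStarProjection (isStarProjection_perpProj hU hV)]
  have mulVec_eq :
      perpProj U V *ᵥ (w + (1 / 2 / γ) • h) = perpProj U V *ᵥ w + (1 / 2 / γ) • g := by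
    rw [mulVec_add, mulVec_smul]
  have norm_smul_g : ‖mat ((1 / 2 / γ) • g)‖ ≤ 1 / 2 := by
    refine (norm_mat_le _).trans (Real.sqrt_le_iff.2 ⟨by norm_num, ?_⟩)
    rw [smul_dotProduct, dotProduct_smul, ← γ_mul_self, smul_eq_mul, smul_eq_mul]
    rcases eq_or_ne γ 0 with γ_zero | γ_ne
    · simp only [γ_zero]
      norm_num
    · exact le_of_eq (by field_simp)
  have norm_le_one : ‖mat (perpProj U V *ᵥ (w + (1 / 2 / γ) • h))‖ ≤ 1 := by
    rw [mulVec_eq, mat_add]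
    linarith [norm_add_le (mat (perpProj U V *ᵥ w)) (mat ((1 / 2 / γ) • g))]
  have subgradient := nuc_add_minner_le_nuc_add hU hV hσ (transpose_mul_mat_perpProj_mulVec hU V _)
    (mat_perpProj_mulVec_mul U hV _) norm_le_one (mat h)
  have minner_eq : minner (U * Vᵀ + mat (perpProj U V *ᵥ (w + (1 / 2 / γ) • h))) (mat h) =
      h ⬝ᵥ (entries (U * Vᵀ) + perpProj U V *ᵥ w) + 1 / 2 * γ := by
    rw [minner_eq_dotProduct, entries_add, entries_mat, entries_mat, mulVec_eq, ← add_assoc,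
      dotProduct_comm, dotProduct_add, dotProduct_smul, h_dot_g, smul_eq_mul]
    rcases eq_or_ne γ 0 with γ_zero | -
    · simp only [γ_zero, mul_zero]
    · field_simp
  linarith

end NuclearNorm

theorem mul_l1norm_sub_dotProduct_le {d s c : Fin n1 × Fin n2 → ℝ} (hlam : 0 ≤ lam)
    (hd : ∀ e, d e = 0 ∨ d e = 1) (hs : ∀ e, |s e| ≤ 1)
    (hS : ∀ e, d e = 1 → s e * entries S0 e = |entries S0 e|)
    (hS0 : ∀ e, d e = 0 → entries S0 e = 0) (hoff : ∀ e, d e = 0 → |c e| ≤ lam / 2)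
    (h : Fin n1 × Fin n2 → ℝ) :
    lam * l1norm S0 - h ⬝ᵥ c + (d * h) ⬝ᵥ (c - lam • s) +
        lam / 2 * ∑ e, |((1 - d) * h) e| ≤ lam * l1norm (S0 - mat h) := by
  simp only [l1norm_eq_sum, dotProduct, Finset.mul_sum, ← Finset.sum_add_distrib,
    ← Finset.sum_sub_distrib]
  refine Finset.sum_le_sum fun e _ => ?_
  have entries_sub : entries (S0 - mat h) e = entries S0 e - h e := rfl
  simp only [entries_sub, Pi.mul_apply, Pi.sub_apply, Pi.smul_apply, smul_eq_mul, Pi.one_apply]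
  rcases hd e with d_zero | d_one
  · rw [d_zero, hS0 e d_zero]
    have : -(h e * c e) ≤ lam / 2 * |h e| := by
      refine (neg_le_abs _).trans ?_
      rw [abs_mul, mul_comm]
      exact mul_le_mul_of_nonneg_right (hoff e d_zero) (abs_nonneg _)
    simp only [abs_zero, zero_sub, abs_neg, sub_zero, one_mul, mul_zero, zero_mul, add_zero]
    linarith
  · rw [d_one, ← hS e d_one]
    have : s e * (entries S0 e - h e) ≤ |entries S0 e - h e| := by
      refine (le_abs_self _).trans ?_
      rw [abs_mul]
      exact mul_le_of_le_one_left (abs_nonneg _) (hs e)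
    simp only [sub_self, zero_mul, abs_zero, mul_zero, add_zero, one_mul]
    linarith [mul_le_mul_of_nonneg_left this hlam]

section Support

variable {E : Type*} [Fintype E] {d : E → ℝ}

theorem sqrt_mul_dotProduct_self (hd : ∀ e, d e = 0 ∨ d e = 1) (x : E → ℝ) :
    √((d * x) ⬝ᵥ (d * x)) = √(∑ e, d e * x e ^ 2) := by
  congr 1
  refine Finset.sum_congr rfl fun e _ => ?_
  rcases hd e with h | h <;> simp only [Pi.mul_apply, h] <;> ring

theorem neg_sqrt_mul_sqrt_le_mul_dotProduct (hd : ∀ e, d e = 0 ∨ d e = 1) (x y : E → ℝ) :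
    -(√((d * x) ⬝ᵥ (d * x)) * √(∑ e, d e * y e ^ 2)) ≤ (d * x) ⬝ᵥ y := by
  have mul_dotProduct : (d * x) ⬝ᵥ y = (d * x) ⬝ᵥ (d * y) := by
    refine Finset.sum_congr rfl fun e _ => ?_
    rcases hd e with h | h <;> simp only [Pi.mul_apply, h] <;> ring
  have := dotProduct_le_sqrt_mul_sqrt (-(d * x)) (d * y)
  rw [neg_dotProduct_neg, neg_dotProduct, ← mul_dotProduct, sqrt_mul_dotProduct_self hd y] at this
  linarith

/- A vector concentrated on the support `d` cannot be close to the range of `1 - Q`, so its part on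
the support is controlled by its part off the support and its component in the range of `Q`. -/
theorem sqrt_mul_dotProduct_self_le [DecidableEq E] {Q : Matrix E E ℝ}
    (hd : ∀ e, d e = 0 ∨ d e = 1)
    (hinj : ∀ z, ∑ e, d e * ((1 - Q) *ᵥ z) e ^ 2 ≤ 1 / 4 * (z ⬝ᵥ z)) (h : E → ℝ) :
    √((d * h) ⬝ᵥ (d * h)) ≤
      √(((1 - d) * h) ⬝ᵥ ((1 - d) * h)) + 2 * √((Q *ᵥ h) ⬝ᵥ (Q *ᵥ h)) := by
  have split_support : d * h + (1 - d) * h = h := by ring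
  have split_range : d * ((1 - Q) *ᵥ h) + d * (Q *ᵥ h) = d * h := by
    rw [← mul_add, ← add_mulVec, sub_add_cancel, one_mulVec]
  have range_le : √((d * ((1 - Q) *ᵥ h)) ⬝ᵥ (d * ((1 - Q) *ᵥ h))) ≤ 1 / 2 * √(h ⬝ᵥ h) := by
    rw [sqrt_mul_dotProduct_self hd, Real.sqrt_le_left (by positivity), mul_pow,
      Real.sq_sqrt (dotProduct_self_nonneg _)]
    exact (hinj h).trans (le_of_eq (by ring))
  have ker_le : √((d * (Q *ᵥ h)) ⬝ᵥ (d * (Q *ᵥ h))) ≤ √((Q *ᵥ h) ⬝ᵥ (Q *ᵥ h)) := by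
    refine Real.sqrt_le_sqrt (Finset.sum_le_sum fun e _ => ?_)
    rcases hd e with h | h <;> simp [h, mul_self_nonneg]
  have support_le := sqrt_dotProduct_self_add_le (d * h) ((1 - d) * h)
  have range_add_le := sqrt_dotProduct_self_add_le (d * ((1 - Q) *ᵥ h)) (d * (Q *ᵥ h))
  rw [split_support] at support_le
  rw [split_range] at range_add_le
  linarith

theorem eq_zero_of_support_bounds {h : E → ℝ} {lam γ : ℝ} (hlam : 0 < lam) (hlam1 : lam < 1)
    (hγ : 0 ≤ γ)
    (hinj : √((d * h) ⬝ᵥ (d * h)) ≤ √(((1 - d) * h) ⬝ᵥ ((1 - d) * h)) + 2 * γ)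
    (hgain : 1 / 2 * γ + lam / 2 * √(((1 - d) * h) ⬝ᵥ ((1 - d) * h)) ≤
      lam / 4 * √((d * h) ⬝ᵥ (d * h))) : h = 0 := by
  have h_le := sqrt_dotProduct_self_add_le (d * h) ((1 - d) * h)
  rw [show d * h + (1 - d) * h = h by ring] at h_le
  set a := √((d * h) ⬝ᵥ (d * h))
  set b := √(((1 - d) * h) ⬝ᵥ ((1 - d) * h))
  have b_nonneg : 0 ≤ b := Real.sqrt_nonneg _
  have b_zero : b = 0 := by
    refine le_antisymm (nonpos_of_mul_nonpos_right (a := lam) ?_ hlam) b_nonneg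
    nlinarith
  have γ_zero : γ = 0 := by
    refine le_antisymm (nonpos_of_mul_nonpos_right (a := 1 - lam) ?_ (by linarith)) hγ
    nlinarith
  refine dotProduct_self_eq_zero.1
    ((Real.sqrt_eq_zero (dotProduct_self_nonneg h)).1 (le_antisymm ?_ (Real.sqrt_nonneg _)))
  linarith

end Support

theorem strictlyRecovered_of_certificate {r : ℕ} {U : Matrix (Fin n1) (Fin r) ℝ}
    {V : Matrix (Fin n2) (Fin r) ℝ} {σ : Fin r → ℝ} (hU : Uᵀ * U = 1) (hV : Vᵀ * V = 1)
    (hσ : ∀ k, 0 ≤ σ k) (hlam : 0 < lam) (hlam1 : lam < 1) {d s w : Fin n1 × Fin n2 → ℝ}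
    (hd : ∀ e, d e = 0 ∨ d e = 1) (hs : ∀ e, |s e| ≤ 1)
    (hS : ∀ e, d e = 1 → s e * entries S0 e = |entries S0 e|)
    (hS0 : ∀ e, d e = 0 → entries S0 e = 0)
    (hinj : ∀ z, ∑ e, d e * ((1 - perpProj U V) *ᵥ z) e ^ 2 ≤ 1 / 4 * (z ⬝ᵥ z))
    (hw : ‖mat (perpProj U V *ᵥ w)‖ ≤ 1 / 2)
    (hon : ∑ e, d e * ((entries (U * Vᵀ) + perpProj U V *ᵥ w) e - lam * s e) ^ 2 ≤ (lam / 4) ^ 2)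
    (hoff : ∀ e, d e = 0 → |(entries (U * Vᵀ) + perpProj U V *ᵥ w) e| ≤ lam / 2) :
    StrictlyRecovered lam (U * diagonal σ * Vᵀ) S0 := by
  intro L S hLS hobj
  set L0 := U * diagonal σ * Vᵀ
  set c := entries (U * Vᵀ) + perpProj U V *ᵥ w
  obtain ⟨h, rfl⟩ : ∃ h, L = L0 + mat h := ⟨entries (L - L0), (add_sub_cancel L0 L).symm⟩
  obtain rfl : S = S0 - mat h := by
    rw [add_assoc, add_right_inj] at hLS
    exact eq_sub_of_add_eq' hLS
  have on_support : -(lam / 4 * √((d * h) ⬝ᵥ (d * h))) ≤ (d * h) ⬝ᵥ (c - lam • s) := by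
    have sqrt_le : √(∑ e, d e * (c - lam • s) e ^ 2) ≤ lam / 4 :=
      (Real.sqrt_le_left (by positivity)).2 hon
    linarith [neg_sqrt_mul_sqrt_le_mul_dotProduct hd h (c - lam • s),
      mul_le_mul_of_nonneg_left sqrt_le (Real.sqrt_nonneg ((d * h) ⬝ᵥ (d * h)))]
  have h_zero : h = 0 := by
    refine eq_zero_of_support_bounds hlam hlam1 (Real.sqrt_nonneg _)
      (sqrt_mul_dotProduct_self_le hd hinj h) ?_
    have nuc_le := nuc_add_dotProduct_add_half_sqrt_le hU hV hσ hw h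
    have l1norm_le := mul_l1norm_sub_dotProduct_le hlam.le hd hs hS hS0 hoff h
    have off_support := mul_le_mul_of_nonneg_left
      (sqrt_dotProduct_self_le_sum_abs ((1 - d) * h)) (half_pos hlam).le
    linarith
  have mat_h : mat h = 0 := by rw [h_zero]; rfl
  rw [mat_h, add_zero, sub_zero]
  exact ⟨rfl, rfl⟩

end DualCertificate

section Golfing

variable {K : ℕ} [NeZero K]

/-- The indicator of the label `0`: an entry with label `k` belongs to the batch when `hit k = 1`,
which for a uniform label in `Fin K` happens with probability `1 / K`. -/
def hit (k : Fin K) : ℝ := if k = 0 then 1 else 0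

theorem hit_eq_zero_or_one (k : Fin K) : hit k = 0 ∨ hit k = 1 := (ite_eq_or_eq _ _ _).symm

theorem expect_hit : 𝔼 k : Fin K, hit k = 1 / K := by
  simp [hit]

theorem expect_one_sub_mul_hit : 𝔼 k : Fin K, (1 - K * hit k) = 0 := by
  have hK : (K : ℝ) ≠ 0 := Nat.cast_ne_zero.2 (NeZero.ne K)
  rw [Finset.expect_sub_distrib, Fintype.expect_const, ← Finset.mul_expect, expect_hit,
    mul_one_div_cancel hK, sub_self]

theorem abs_one_sub_mul_hit_le (k : Fin K) : |1 - K * hit k| ≤ K := by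
  have hK : (1 : ℝ) ≤ K := Nat.one_le_cast.2 (Nat.one_le_iff_ne_zero.2 (NeZero.ne K))
  rcases hit_eq_zero_or_one k with h | h <;> rw [h, abs_le] <;> constructor <;> linarith

theorem expect_one_sub_mul_hit_sq_le : 𝔼 k : Fin K, (1 - K * hit k) ^ 2 ≤ (K : ℝ) := by
  have hK : (K : ℝ) ≠ 0 := Nat.cast_ne_zero.2 (NeZero.ne K)
  have affine_in_hit (k : Fin K) : (1 - K * hit k) ^ 2 = 1 + (K ^ 2 - 2 * K) * hit k := by
    rcases hit_eq_zero_or_one k with h | h <;> rw [h] <;> ring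
  calc 𝔼 k : Fin K, (1 - K * hit k) ^ 2 = 1 + ((K : ℝ) ^ 2 - 2 * K) * (1 / K) := by
        simp only [affine_in_hit]
        rw [Finset.expect_add_distrib, Fintype.expect_const, ← Finset.mul_expect, expect_hit]
    _ = K - 1 := by field_simp; ring
    _ ≤ K := by linarith

section Centered

variable {E : Type*}

/-- The error of replacing the family `z` by `K` times its restriction to a random batch; its mean
over the labels `x` is zero. -/
def centered (x : E → Fin K) (z : E → ℝ) : E → ℝ := fun e => (1 - K * hit (x e)) * z e

variable [Fintype E]

theorem dotProduct_centered (c : E → ℝ) (x : E → Fin K) (z : E → ℝ) :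
    c ⬝ᵥ centered x z = ∑ e, c e * z e * (1 - K * hit (x e)) :=
  Finset.sum_congr rfl fun e _ => by rw [centered]; ring

variable [DecidableEq E] {z : E → ℝ} {b : ℝ}

theorem expect_exp_dotProduct_centered_le (hz : ∀ e, |z e| ≤ b) (c : E → ℝ) :
    𝔼 x : E → Fin K, Real.exp (c ⬝ᵥ centered x z) ≤ Real.exp ((K * b) ^ 2 * (c ⬝ᵥ c)) := by
  simp only [dotProduct_centered]
  refine (expect_exp_sum_le_of_abs_le (X := fun e k => c e * z e * (1 - K * hit k))
    (B := fun e => |c e| * b * K) (fun e => ?_) fun e k => ?_).trans_eq ?_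
  · rw [← Finset.mul_expect, expect_one_sub_mul_hit, mul_zero]
  · rw [abs_mul, abs_mul]
    have hb : 0 ≤ b := (abs_nonneg _).trans (hz e)
    gcongr
    exacts [hz e, abs_one_sub_mul_hit_le k]
  · rw [dotProduct, Finset.mul_sum]
    congr! 2 with e
    rw [mul_pow, mul_pow, sq_abs]
    ring

theorem expect_exp_dotProduct_centered_le_of_abs_le (hz : ∀ e, |z e| ≤ b) {c : E → ℝ}
    (hc : ∀ e, |c e| * b * K ≤ 1) :
    𝔼 x : E → Fin K, Real.exp (c ⬝ᵥ centered x z) ≤ Real.exp (K * b ^ 2 * (c ⬝ᵥ c)) := by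
  simp only [dotProduct_centered]
  refine (expect_exp_sum_le_of_abs_le_one (X := fun e k => c e * z e * (1 - K * hit k))
    (fun e => ?_) fun e k => ?_).trans (Real.exp_le_exp.2 ?_)
  · rw [← Finset.mul_expect, expect_one_sub_mul_hit, mul_zero]
  · rw [abs_mul, abs_mul]
    have hb : 0 ≤ b := (abs_nonneg _).trans (hz e)
    refine le_trans ?_ (hc e)
    gcongr
    exacts [hz e, abs_one_sub_mul_hit_le k]
  · rw [dotProduct, Finset.mul_sum]
    refine Finset.sum_le_sum fun e _ => ?_
    simp only [mul_pow _ (1 - (K : ℝ) * hit _), ← Finset.mul_expect]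
    have hzb : z e ^ 2 ≤ b ^ 2 := sq_le_sq.2 ((hz e).trans (le_abs_self b))
    calc (c e * z e) ^ 2 * 𝔼 k : Fin K, (1 - K * hit k) ^ 2 ≤ c e ^ 2 * b ^ 2 * K := by
          rw [mul_pow]
          gcongr
          exact expect_one_sub_mul_hit_sq_le
      _ = K * b ^ 2 * (c e * c e) := by ring

omit [DecidableEq E] in
theorem abs_apply_le_of_isStarProjection {P : Matrix E E ℝ} (hP : IsStarProjection P) {μ : ℝ}
    (hμ : ∀ e, P e e ≤ μ) (e f : E) : |P e f| ≤ μ := by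
  have row_sq_le (e : E) : √(P e ⬝ᵥ P e) ≤ √μ := by
    rw [row_dotProduct_row_of_isStarProjection hP]
    exact Real.sqrt_le_sqrt (hμ e)
  have dotProduct_le {x y : E → ℝ} (hx : √(x ⬝ᵥ x) ≤ √μ) (hy : √(y ⬝ᵥ y) ≤ √μ) : x ⬝ᵥ y ≤ μ := by
    have hμ0 : 0 ≤ μ := by
      have := hμ e
      rw [← row_dotProduct_row_of_isStarProjection hP] at this
      exact (dotProduct_self_nonneg _).trans this
    calc x ⬝ᵥ y ≤ √(x ⬝ᵥ x) * √(y ⬝ᵥ y) := dotProduct_le_sqrt_mul_sqrt x y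
      _ ≤ √μ * √μ := by gcongr
      _ = μ := Real.mul_self_sqrt hμ0
  rw [← row_dotProduct_row_of_isStarProjection hP e f]
  refine abs_le'.2 ⟨dotProduct_le (row_sq_le e) (row_sq_le f), ?_⟩
  rw [← neg_dotProduct]
  exact dotProduct_le (by simpa using row_sq_le e) (row_sq_le f)

theorem unifProb_projection_centered_le {P : Matrix E E ℝ} (hP : IsStarProjection P) {μ : ℝ}
    (hμ : ∀ e, P e e ≤ μ) (hb : 0 < b) (hz : ∀ e, |z e| ≤ b) {τ : ℝ} (hτ : 0 < τ)
    (hτ1 : τ * (K * μ) ≤ 1) :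
    unifProb (fun x : E → Fin K => ¬ ∀ e, |(P *ᵥ centered x z) e| ≤ b / 2) ≤
      Fintype.card E * (2 * (Real.exp (-(τ / 2)) * Real.exp (τ ^ 2 * (K * μ)))) := by
  have mgf_row (e : E) {s : ℝ} (hs : |s| = τ / b) :
      𝔼 x : E → Fin K, Real.exp ((s • P e) ⬝ᵥ centered x z) ≤ Real.exp (τ ^ 2 * (K * μ)) := by
    refine (expect_exp_dotProduct_centered_le_of_abs_le hz fun f => ?_).trans
      (Real.exp_le_exp.2 ?_)
    · rw [Pi.smul_apply, smul_eq_mul, abs_mul, hs]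
      calc τ / b * |P e f| * b * K = τ * (K * |P e f|) := by field_simp
        _ ≤ τ * (K * μ) := by
          gcongr
          exact abs_apply_le_of_isStarProjection hP hμ e f
        _ ≤ 1 := hτ1
    · rw [smul_dotProduct, dotProduct_smul, row_dotProduct_row_of_isStarProjection hP]
      calc K * b ^ 2 * (s • s • P e e) = K * b ^ 2 * (|s| ^ 2 * P e e) := by
            rw [sq_abs, smul_smul, smul_eq_mul, sq s]
        _ = τ ^ 2 * (K * P e e) := by rw [hs]; field_simp
        _ ≤ τ ^ 2 * (K * μ) := by
          gcongr
          exact hμ e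
  have scaled (s : ℝ) (e : E) (x : E → Fin K) :
      (s • P e) ⬝ᵥ centered x z = s * (P *ᵥ centered x z) e := smul_dotProduct _ _ _
  have tail := unifProb_not_forall_abs_le
    (fun e (x : E → Fin K) => τ / b * (P *ᵥ centered x z) e) (b := τ / 2)
    (fun e => by simpa only [scaled] using mgf_row e (abs_of_pos (div_pos hτ hb)))
    (fun e => by
      simpa only [scaled, neg_mul] using
        mgf_row e (s := -(τ / b)) (by rw [abs_neg, abs_of_pos (div_pos hτ hb)]))
  refine (unifProb_mono fun x hx => ?_).trans tail
  contrapose! hx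
  intro e
  have hxe := hx e
  rw [abs_mul, abs_of_pos (div_pos hτ hb)] at hxe
  rwa [div_mul_eq_mul_div, div_le_div_iff₀ hb two_pos, mul_assoc, mul_le_mul_iff_right₀ hτ,
    ← le_div_iff₀ two_pos] at hxe

open scoped Matrix.Norms.L2Operator in
theorem unifProb_norm_centered_le {m n : Type*} [Fintype m] [Fintype n] [DecidableEq m]
    [DecidableEq n] {N : ℕ} (hm : Fintype.card m ≤ N) (hn : Fintype.card n ≤ N) (hN : 0 < N)
    {z : m × n → ℝ} {b : ℝ} (hb : 0 < b) (hz : ∀ e, |z e| ≤ b) :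
    unifProb (fun x : m × n → Fin K => ¬ ‖mat (centered x z)‖ ≤ 25 * (K * b * √N)) ≤
      Real.exp (-N) := by
  have hK : (0 : ℝ) < K := Nat.cast_pos.2 (Nat.pos_of_ne_zero (NeZero.ne K))
  have subgaussian (x : n → ℝ) (y : m → ℝ) :
      𝔼 w : m × n → Fin K, Real.exp (y ⬝ᵥ mat (centered w z) *ᵥ x) ≤
        Real.exp ((K * b) ^ 2 * ((x ⬝ᵥ x) * (y ⬝ᵥ y))) := by
    simp only [dotProduct_mat_mulVec]
    rw [mul_comm (x ⬝ᵥ x), ← entries_vecMulVec_dotProduct_self]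
    exact expect_exp_dotProduct_centered_le hz _
  have h := unifProb_norm_le_of_subgaussian hm hn hN (by positivity) subgaussian
  rwa [Real.sqrt_mul (sq_nonneg _), Real.sqrt_sq (by positivity)] at h

end Centered

section Iteration

variable {E : Type*} [Fintype E] {P : Matrix E E ℝ} {z : E → ℝ} {x : ℕ → E → Fin K} {J : ℕ}

/-- The golfing iterates: `golf P z x j` is the part of `z` not yet matched inside the range of `P`
after the batches `x 0, …, x (j - 1)` have been used. -/
def golf (P : Matrix E E ℝ) (z : E → ℝ) (x : ℕ → E → Fin K) : ℕ → E → ℝ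
  | 0 => z
  | j + 1 => P *ᵥ centered (x j) (golf P z x j)

/-- The correction accumulated by the first `J` golfing steps, supported on the entries hit by one
of the batches `x 0, …, x (J - 1)`. -/
def golfSum (P : Matrix E E ℝ) (z : E → ℝ) (x : ℕ → E → Fin K) (J : ℕ) : E → ℝ :=
  fun e => ∑ j ∈ Finset.range J, K * hit (x j e) * golf P z x j e

theorem golf_congr (P : Matrix E E ℝ) (z : E → ℝ) {x x' : ℕ → E → Fin K} {j : ℕ}
    (h : ∀ i < j, x i = x' i) : golf P z x j = golf P z x' j := by
  induction j with
  | zero => rfl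
  | succ j ih =>
    rw [golf, golf, ih fun i hi => h i (by omega), h j (by omega)]

theorem mulVec_golf (hP : IsIdempotentElem P) (hz : P *ᵥ z = z) (x : ℕ → E → Fin K) (j : ℕ) :
    P *ᵥ golf P z x j = golf P z x j := by
  cases j with
  | zero => exact hz
  | succ j => rw [golf, mulVec_mulVec, hP.eq]

theorem golfSum_zero (P : Matrix E E ℝ) (z : E → ℝ) (x : ℕ → E → Fin K) : golfSum P z x 0 = 0 := by
  ext e
  exact Finset.sum_range_zero _

theorem golfSum_succ (P : Matrix E E ℝ) (z : E → ℝ) (x : ℕ → E → Fin K) (J : ℕ) :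
    golfSum P z x (J + 1) = golfSum P z x J + (golf P z x J - centered (x J) (golf P z x J)) := by
  ext e
  simp only [golfSum, Finset.sum_range_succ, Pi.add_apply, Pi.sub_apply, centered]
  ring

theorem golf_eq_sub (hP : IsIdempotentElem P) (hz : P *ᵥ z = z) (x : ℕ → E → Fin K) (J : ℕ) :
    golf P z x J = z - P *ᵥ golfSum P z x J := by
  induction J with
  | zero => rw [golfSum_zero, mulVec_zero, sub_zero, golf]
  | succ J ih =>
    rw [golfSum_succ, mulVec_add, mulVec_sub, mulVec_golf hP hz, golf]
    nth_rw 2 [ih]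
    abel

theorem sum_range_half_pow (J : ℕ) : ∑ j ∈ Finset.range J, (1 / 2 : ℝ) ^ j ≤ 2 := by
  simpa only [tsum_geometric_two] using
    summable_geometric_two.sum_le_tsum (Finset.range J) fun j _ => by positivity

theorem abs_golfSum_le {b : ℝ} (h : ∀ j ≤ J, ∀ e, |golf P z x j e| ≤ b * (1 / 2) ^ j)
    (e : E) : |golfSum P z x J e| ≤ 2 * (K * b) := by
  have hb : 0 ≤ b := by simpa using (abs_nonneg _).trans (h 0 J.zero_le e)
  have abs_hit_le (k : Fin K) : |hit k| ≤ 1 := by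
    rcases hit_eq_zero_or_one k with h | h <;> simp [h]
  calc |golfSum P z x J e| ≤ ∑ j ∈ Finset.range J, |K * hit (x j e) * golf P z x j e| :=
        Finset.abs_sum_le_sum_abs _ _
    _ ≤ ∑ j ∈ Finset.range J, K * 1 * (b * (1 / 2) ^ j) := by
        refine Finset.sum_le_sum fun j hj => ?_
        rw [abs_mul, abs_mul, Nat.abs_cast]
        gcongr
        exacts [abs_hit_le _, h j (Finset.mem_range.1 hj).le e]
    _ = K * b * ∑ j ∈ Finset.range J, (1 / 2) ^ j := by
        rw [Finset.mul_sum]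
        exact Finset.sum_congr rfl fun j _ => by ring
    _ ≤ K * b * 2 := by
        gcongr
        exact sum_range_half_pow J
    _ = 2 * (K * b) := by ring

open scoped Matrix.Norms.L2Operator in
theorem norm_mat_perpProj_golfSum_le {m n r : Type*} [Fintype m] [Fintype n] [Fintype r]
    [DecidableEq m] [DecidableEq n] [DecidableEq r] {U : Matrix m r ℝ} {V : Matrix n r ℝ}
    (hU : Uᵀ * U = 1) (hV : Vᵀ * V = 1) {z : m × n → ℝ} (hz : (1 - perpProj U V) *ᵥ z = z)
    {x : ℕ → m × n → Fin K} {c : ℝ} (hc : 0 ≤ c)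
    (h : ∀ j < J, ‖mat (centered (x j) (golf (1 - perpProj U V) z x j))‖ ≤ c * (1 / 2) ^ j) :
    ‖mat (perpProj U V *ᵥ golfSum (1 - perpProj U V) z x J)‖ ≤ 2 * c := by
  set Q := perpProj U V
  have hQ : IsStarProjection Q := isStarProjection_perpProj hU hV
  have mulVec_golf_eq_zero (j : ℕ) : Q *ᵥ golf (1 - Q) z x j = 0 := by
    rw [← mulVec_golf hQ.one_sub.isIdempotentElem hz, mulVec_mulVec, Matrix.mul_sub,
      hQ.isIdempotentElem.eq, Matrix.mul_one, sub_self, zero_mulVec]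
  have norm_le_sum (j : ℕ) (hj : j ≤ J) :
      ‖mat (Q *ᵥ golfSum (1 - Q) z x j)‖ ≤ ∑ i ∈ Finset.range j, c * (1 / 2) ^ i := by
    induction j with
    | zero =>
      rw [golfSum_zero, mulVec_zero, Finset.sum_range_zero]
      exact norm_zero.le
    | succ j ih =>
      rw [golfSum_succ, mulVec_add, mulVec_sub, mulVec_golf_eq_zero, zero_sub, ← mulVec_neg,
        mat_add, Finset.sum_range_succ]
      refine (norm_add_le _ _).trans (add_le_add (ih (by omega)) ?_)
      refine (norm_mat_perpProj_mulVec_le hU hV _).trans (le_trans (le_of_eq ?_) (h j (by omega)))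
      exact norm_neg (mat (centered (x j) (golf (1 - Q) z x j)))
  refine (norm_le_sum J le_rfl).trans ?_
  rw [← Finset.mul_sum, mul_comm]
  exact mul_le_mul_of_nonneg_right (sum_range_half_pow J) hc

end Iteration

end Golfing

section SignCertificate

open scoped Matrix.Norms.L2Operator

section NeumannInverse

variable {E : Type*} [Fintype E] [DecidableEq E] {A : Matrix E E ℝ}

theorem mulVec_dotProduct_mulVec_self_le {ι : Type*} [Fintype ι] {M : Matrix ι E ℝ} {c : ℝ}
    (hM : ‖M‖ ≤ c) (x : E → ℝ) : (M *ᵥ x) ⬝ᵥ (M *ᵥ x) ≤ c ^ 2 * (x ⬝ᵥ x) := by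
  have hc : 0 ≤ c := (norm_nonneg _).trans hM
  have h := (sqrt_mulVec_le_norm M x).trans (mul_le_mul_of_nonneg_right hM (Real.sqrt_nonneg _))
  rwa [Real.sqrt_le_left (by positivity), mul_pow, Real.sq_sqrt (dotProduct_self_nonneg _)] at h

theorem isUnit_one_sub_of_norm_le_half (hA : ‖A‖ ≤ 1 / 2) : IsUnit (1 - A) :=
  isUnit_one_sub_of_norm_lt_one (by linarith)

theorem inv_one_sub_eq (hA : ‖A‖ ≤ 1 / 2) : (1 - A)⁻¹ = 1 + A * (1 - A)⁻¹ := by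
  have h := mul_nonsing_inv (1 - A)
    ((isUnit_iff_isUnit_det _).1 (isUnit_one_sub_of_norm_le_half hA))
  rwa [Matrix.sub_mul, Matrix.one_mul, sub_eq_iff_eq_add] at h

theorem norm_inv_one_sub_le_two (hA : ‖A‖ ≤ 1 / 2) : ‖(1 - A)⁻¹‖ ≤ 2 := by
  have contraction : ‖(1 - A)⁻¹‖ ≤ 1 + 1 / 2 * ‖(1 - A)⁻¹‖ :=
    calc ‖(1 - A)⁻¹‖ = ‖1 + A * (1 - A)⁻¹‖ := congrArg _ (inv_one_sub_eq hA)
      _ ≤ ‖(1 : Matrix E E ℝ)‖ + ‖A‖ * ‖(1 - A)⁻¹‖ :=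
        (norm_add_le _ _).trans (add_le_add_right (l2_opNorm_mul _ _) _)
      _ ≤ 1 + 1 / 2 * ‖(1 - A)⁻¹‖ := by
        gcongr
        exact (IsStarProjection.one (R := Matrix E E ℝ)).norm_le
  linarith

theorem norm_inv_one_sub_sub_one_le (hA : ‖A‖ ≤ 1 / 2) : ‖(1 - A)⁻¹ - 1‖ ≤ 2 * ‖A‖ := by
  rw [inv_one_sub_eq hA, add_sub_cancel_left, mul_comm]
  exact (l2_opNorm_mul _ _).trans
    (mul_le_mul_of_nonneg_left (norm_inv_one_sub_le_two hA) (norm_nonneg _))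

end NeumannInverse

section RandomSigns

/-- The real sign encoded by a Boolean. -/
def sgn (b : Bool) : ℝ := if b then 1 else -1

theorem abs_sgn (b : Bool) : |sgn b| = 1 := by cases b <;> simp [sgn]

theorem expect_sgn : 𝔼 b, sgn b = 0 := by
  rw [Fintype.expect_eq_sum_div_card]
  simp [sgn]

variable {E : Type*}

/-- The family of real signs encoded by a family of Booleans. -/
def signs (u : E → Bool) : E → ℝ := fun e => sgn (u e)

variable [Fintype E] [DecidableEq E]

theorem expect_exp_dotProduct_signs_le (q : E → ℝ) :
    𝔼 u : E → Bool, Real.exp (q ⬝ᵥ signs u) ≤ Real.exp (q ⬝ᵥ q) := by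
  refine (expect_exp_sum_le_of_abs_le (X := fun e b => q e * sgn b) (B := fun e => |q e|)
    (fun e => ?_) fun e b => ?_).trans_eq ?_
  · rw [← Finset.mul_expect, expect_sgn, mul_zero]
  · rw [abs_mul, abs_sgn, mul_one]
  · simp only [sq, abs_mul_abs_self, dotProduct]

variable {P : Matrix E E ℝ} {d : E → ℝ}

theorem isStarProjection_diagonal (hd : ∀ e, d e = 0 ∨ d e = 1) :
    IsStarProjection (diagonal d) where
  isIdempotentElem := by
    rw [IsIdempotentElem, diagonal_mul_diagonal]
    congr 1
    ext e
    rcases hd e with h | h <;> rw [h] <;> norm_num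
  isSelfAdjoint := by
    rw [IsSelfAdjoint, star_eq_conjTranspose, conjTranspose_eq_transpose_of_trivial,
      diagonal_transpose]

theorem expect_exp_dotProduct_mulVec_diagonal_signs_le (hd : ∀ e, d e = 0 ∨ d e = 1)
    {ι : Type*} [Fintype ι] {M : Matrix ι E ℝ} {c : ℝ} (hM : ‖M‖ ≤ c) (q : ι → ℝ) :
    𝔼 u : E → Bool, Real.exp (q ⬝ᵥ M *ᵥ diagonal d *ᵥ signs u) ≤
      Real.exp (c ^ 2 * (q ⬝ᵥ q)) := by
  classical
  have adjoint (u : E → Bool) :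
      q ⬝ᵥ M *ᵥ diagonal d *ᵥ signs u = (diagonal d *ᵥ Mᵀ *ᵥ q) ⬝ᵥ signs u := by
    rw [dotProduct_mulVec, dotProduct_mulVec, ← mulVec_transpose, ← mulVec_transpose,
      diagonal_transpose]
  have norm_transpose_le : ‖Mᵀ‖ ≤ c := by
    rwa [← conjTranspose_eq_transpose_of_trivial, l2_opNorm_conjTranspose]
  simp only [adjoint]
  exact (expect_exp_dotProduct_signs_le _).trans (Real.exp_le_exp.2
    ((mulVec_dotProduct_mulVec_self_le_of_isStarProjection (isStarProjection_diagonal hd) _).trans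
      (mulVec_dotProduct_mulVec_self_le norm_transpose_le q)))

theorem norm_diagonal_mul_mul_diagonal_le (hd : ∀ e, d e = 0 ∨ d e = 1) {c : ℝ} (hc : 0 ≤ c)
    (h : ∀ z : E → ℝ, ∑ e, d e * (P *ᵥ z) e ^ 2 ≤ c ^ 2 * (z ⬝ᵥ z)) :
    ‖diagonal d * P * diagonal d‖ ≤ c := by
  have norm_restrict_le : ‖diagonal d * P‖ ≤ c := by
    refine norm_le_of_sqrt_mulVec_le hc fun z => ?_
    rw [Real.sqrt_le_left (by positivity), mul_pow, Real.sq_sqrt (dotProduct_self_nonneg _)]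
    refine le_trans (Finset.sum_le_sum fun e _ => le_of_eq ?_) (h z)
    rw [← mulVec_mulVec, mulVec_diagonal]
    rcases hd e with h | h <;> rw [h] <;> ring
  calc ‖diagonal d * P * diagonal d‖ ≤ ‖diagonal d * P‖ * ‖diagonal d‖ := l2_opNorm_mul _ _
    _ ≤ c * 1 := by
      gcongr
      exact (isStarProjection_diagonal hd).norm_le
    _ = c := mul_one c

/-- The family supported on `{d = 1}` whose image under `1 - P` agrees with `ε` there, given by
inverting the compression of `1 - P` to the support; `d` is the indicator of the support. -/
noncomputable def signCertificate (P : Matrix E E ℝ) (d ε : E → ℝ) : E → ℝ :=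
  (1 - diagonal d * P * diagonal d)⁻¹ *ᵥ diagonal d *ᵥ ε

theorem signCertificate_eq (hA : ‖diagonal d * P * diagonal d‖ ≤ 1 / 2) (ε : E → ℝ) :
    signCertificate P d ε =
      diagonal d *ᵥ (ε + P *ᵥ diagonal d *ᵥ signCertificate P d ε) := by
  rw [mulVec_add, mulVec_mulVec, mulVec_mulVec, signCertificate]
  conv_lhs => rw [inv_one_sub_eq hA, add_mulVec, one_mulVec, ← mulVec_mulVec]

theorem signCertificate_apply_eq_zero (hA : ‖diagonal d * P * diagonal d‖ ≤ 1 / 2) (ε : E → ℝ)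
    {e : E} (he : d e = 0) : signCertificate P d ε e = 0 := by
  rw [signCertificate_eq hA, mulVec_diagonal, he, zero_mul]

theorem signCertificate_sub_mulVec_apply (hd : ∀ e, d e = 0 ∨ d e = 1)
    (hA : ‖diagonal d * P * diagonal d‖ ≤ 1 / 2) (ε : E → ℝ) {e : E} (he : d e = 1) :
    (signCertificate P d ε - P *ᵥ signCertificate P d ε) e = ε e := by
  have diagonal_mulVec : diagonal d *ᵥ signCertificate P d ε = signCertificate P d ε := by
    rw [signCertificate_eq hA, mulVec_mulVec, (isStarProjection_diagonal hd).isIdempotentElem.eq]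
  have h := congrFun (signCertificate_eq hA ε) e
  rw [diagonal_mulVec, mulVec_diagonal, he, one_mul, Pi.add_apply] at h
  rw [Pi.sub_apply, h, add_sub_cancel_right]

theorem unifProb_not_abs_mulVec_signCertificate_le (hP : IsStarProjection P) {μ : ℝ}
    (hμ : ∀ e, P e e ≤ μ) (hd : ∀ e, d e = 0 ∨ d e = 1)
    (hA : ‖diagonal d * P * diagonal d‖ ≤ 1 / 2) {τ : ℝ} (hτ : 0 < τ) :
    unifProb (fun u : E → Bool => ¬ ∀ e, |(P *ᵥ signCertificate P d (signs u)) e| ≤ 1 / 4) ≤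
      Fintype.card E * (2 * (Real.exp (-(τ / 4)) * Real.exp (τ ^ 2 * (4 * μ)))) := by
  have mgf_row (e : E) {s : ℝ} (hs : s ^ 2 = τ ^ 2) :
      𝔼 u : E → Bool, Real.exp (s * (P *ᵥ signCertificate P d (signs u)) e) ≤
        Real.exp (τ ^ 2 * (4 * μ)) := by
    have scaled (u : E → Bool) : s * (P *ᵥ signCertificate P d (signs u)) e =
        (s • P e) ⬝ᵥ (1 - diagonal d * P * diagonal d)⁻¹ *ᵥ diagonal d *ᵥ signs u := by
      rw [smul_dotProduct, smul_eq_mul]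
      rfl
    simp only [scaled]
    refine (expect_exp_dotProduct_mulVec_diagonal_signs_le hd (norm_inv_one_sub_le_two hA) _).trans
      (Real.exp_le_exp.2 ?_)
    rw [smul_dotProduct, dotProduct_smul, row_dotProduct_row_of_isStarProjection hP, smul_smul,
      ← sq, hs, smul_eq_mul]
    nlinarith [mul_le_mul_of_nonneg_left (hμ e) (sq_nonneg τ)]
  have tail := unifProb_not_forall_abs_le
    (fun e (u : E → Bool) => τ * (P *ᵥ signCertificate P d (signs u)) e) (b := τ / 4)
    (fun e => mgf_row e rfl)
    (fun e => by simpa only [neg_mul] using mgf_row e (neg_sq τ))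
  refine (unifProb_mono fun u hu => ?_).trans tail
  contrapose! hu
  intro e
  have hue := hu e
  rw [abs_mul, abs_of_pos hτ, div_eq_mul_one_div, mul_le_mul_iff_right₀ hτ] at hue
  exact hue

theorem unifProb_not_norm_signCertificate_sub_le {m n : Type*} [Fintype m] [Fintype n]
    [DecidableEq m] [DecidableEq n] {N : ℕ} (hm : Fintype.card m ≤ N) (hn : Fintype.card n ≤ N)
    (hN : 0 < N) {P : Matrix (m × n) (m × n) ℝ} {d : m × n → ℝ} (hd : ∀ e, d e = 0 ∨ d e = 1)
    (hA : ‖diagonal d * P * diagonal d‖ ≤ 1 / 400) :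
    unifProb (fun u : m × n → Bool =>
      ¬ ‖mat (signCertificate P d (signs u) - diagonal d *ᵥ signs u)‖ ≤ √N / 8) ≤
      Real.exp (-N) := by
  set R := (1 - diagonal d * P * diagonal d)⁻¹
  have norm_R_sub_one_le : ‖R - 1‖ ≤ 1 / 200 :=
    (norm_inv_one_sub_sub_one_le (by linarith)).trans (by linarith)
  have residual (u : m × n → Bool) : signCertificate P d (signs u) - diagonal d *ᵥ signs u =
      (R - 1) *ᵥ diagonal d *ᵥ signs u := by
    rw [sub_mulVec, one_mulVec, signCertificate]
  have subgaussian (x : n → ℝ) (y : m → ℝ) :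
      𝔼 u : m × n → Bool, Real.exp (y ⬝ᵥ mat ((R - 1) *ᵥ diagonal d *ᵥ signs u) *ᵥ x) ≤
        Real.exp ((1 / 200) ^ 2 * ((x ⬝ᵥ x) * (y ⬝ᵥ y))) := by
    simp only [dotProduct_mat_mulVec]
    rw [mul_comm (x ⬝ᵥ x), ← entries_vecMulVec_dotProduct_self]
    exact expect_exp_dotProduct_mulVec_diagonal_signs_le hd norm_R_sub_one_le _
  have h := unifProb_norm_le_of_subgaussian hm hn hN (by norm_num) subgaussian
  rw [Real.sqrt_mul (by norm_num), Real.sqrt_sq (by norm_num), ← mul_assoc] at h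
  simpa only [residual, show (25 * (1 / 200) : ℝ) = 1 / 8 by norm_num, one_div_mul_eq_div] using h

end RandomSigns

section SparseSigns

theorem cosh_sub_one_le (s : ℝ) : Real.cosh s - 1 ≤ s ^ 2 * Real.exp (s ^ 2) := by
  have cosh_le : Real.cosh s ≤ Real.exp (s ^ 2) :=
    (Real.cosh_le_exp_half_sq s).trans (Real.exp_le_exp.2 (by linarith [sq_nonneg s]))
  have exp_sub_one_le := mul_le_mul_of_nonneg_right (Real.add_one_le_exp (-s ^ 2))
    (Real.exp_pos (s ^ 2)).le
  rw [← Real.exp_add, neg_add_cancel, Real.exp_zero] at exp_sub_one_le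
  linarith

/- Small `s` are handled by the quadratic growth of `cosh - 1`, large `s` by `cosh s ≤ exp |s|`
with `|s| ≤ κ s ^ 2`. -/
theorem one_add_mul_cosh_sub_one_le {ρ κ s : ℝ} (hρ0 : 0 ≤ ρ) (hρ1 : ρ ≤ 1) (hκ : 0 < κ)
    (hρ : ρ * Real.exp (1 / κ ^ 2) ≤ κ) : 1 + ρ * (Real.cosh s - 1) ≤ Real.exp (κ * s ^ 2) := by
  rcases le_total (1 / κ) |s| with hs | hs
  · have abs_le : |s| ≤ κ * s ^ 2 := by
      rw [div_le_iff₀' hκ] at hs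
      rw [← sq_abs]
      nlinarith [abs_nonneg s]
    have cosh_le : Real.cosh s ≤ Real.exp |s| := by
      rw [← Real.cosh_abs, Real.cosh_eq]
      linarith [Real.exp_le_exp.2 (neg_le_self (abs_nonneg s))]
    calc 1 + ρ * (Real.cosh s - 1) ≤ Real.cosh s := by nlinarith [Real.one_le_cosh s]
      _ ≤ Real.exp |s| := cosh_le
      _ ≤ Real.exp (κ * s ^ 2) := Real.exp_le_exp.2 abs_le
  · have sq_le : s ^ 2 ≤ 1 / κ ^ 2 := by
      rw [← sq_abs, ← _root_.one_div_pow]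
      exact pow_le_pow_left₀ (abs_nonneg s) hs 2
    calc 1 + ρ * (Real.cosh s - 1) ≤ 1 + ρ * (s ^ 2 * Real.exp (1 / κ ^ 2)) := by
          gcongr
          exact (cosh_sub_one_le s).trans (by gcongr)
      _ = ρ * Real.exp (1 / κ ^ 2) * s ^ 2 + 1 := by ring
      _ ≤ κ * s ^ 2 + 1 := by gcongr
      _ ≤ Real.exp (κ * s ^ 2) := Real.add_one_le_exp _

variable {α : Type*} [Fintype α] [Nonempty α] {d : α → ℝ} {κ : ℝ}

theorem expect_exp_mul_sgn_le (hd : ∀ a, d a = 0 ∨ d a = 1) (hκ : 0 < κ)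
    (hρ : (𝔼 a, d a) * Real.exp (1 / κ ^ 2) ≤ κ) (s : ℝ) :
    𝔼 a : α × Bool, Real.exp (s * (d a.1 * sgn a.2)) ≤ Real.exp (κ * s ^ 2) := by
  have hd0 : 0 ≤ 𝔼 a, d a := Finset.expect_nonneg fun a _ => by rcases hd a with h | h <;> simp [h]
  have hd1 : 𝔼 a, d a ≤ 1 :=
    Finset.expect_le Finset.univ_nonempty fun a _ => by rcases hd a with h | h <;> simp [h]
  have expect_sign (a : α) :
      𝔼 b, Real.exp (s * (d a * sgn b)) = 1 + d a * (Real.cosh s - 1) := by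
    rw [Fintype.expect_eq_sum_div_card]
    rcases hd a with h | h <;> simp [h, sgn, Real.cosh_eq]
  calc 𝔼 a : α × Bool, Real.exp (s * (d a.1 * sgn a.2))
      = 1 + (𝔼 a, d a) * (Real.cosh s - 1) := by
        rw [← Finset.univ_product_univ, Finset.expect_product]
        simp only [expect_sign]
        rw [Finset.expect_add_distrib, Fintype.expect_const, Finset.expect_mul]
    _ ≤ Real.exp (κ * s ^ 2) := one_add_mul_cosh_sub_one_le hd0 hd1 hκ hρ

theorem unifProb_norm_sparse_signs_le {m n : Type*} [Fintype m] [Fintype n] [DecidableEq m]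
    [DecidableEq n] {N : ℕ} (hm : Fintype.card m ≤ N) (hn : Fintype.card n ≤ N) (hN : 0 < N)
    (hd : ∀ a, d a = 0 ∨ d a = 1) (hκ : 0 < κ) (hρ : (𝔼 a, d a) * Real.exp (1 / κ ^ 2) ≤ κ) :
    unifProb (fun y : m × n → α × Bool =>
      ¬ ‖mat fun e => d (y e).1 * sgn (y e).2‖ ≤ 25 * √(κ * N)) ≤ Real.exp (-N) := by
  refine unifProb_norm_le_of_subgaussian hm hn hN hκ fun x y => ?_
  set c := entries (vecMulVec y x) with hc
  simp only [dotProduct_mat_mulVec, ← hc]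
  calc 𝔼 w : m × n → α × Bool, Real.exp (c ⬝ᵥ fun e => d (w e).1 * sgn (w e).2)
      = ∏ e, 𝔼 a : α × Bool, Real.exp (c e * (d a.1 * sgn a.2)) :=
        expect_exp_sum fun e (a : α × Bool) => c e * (d a.1 * sgn a.2)
    _ ≤ ∏ e, Real.exp (κ * c e ^ 2) :=
        Finset.prod_le_prod (fun e _ => Finset.expect_nonneg fun a _ => (Real.exp_pos _).le)
          fun e _ => expect_exp_mul_sgn_le hd hκ hρ (c e)
    _ = Real.exp (κ * ((x ⬝ᵥ x) * (y ⬝ᵥ y))) := by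
        rw [← Real.exp_sum, ← Finset.mul_sum, mul_comm (x ⬝ᵥ x),
          ← entries_vecMulVec_dotProduct_self, dotProduct]
        simp only [sq, ← hc]

end SparseSigns

end SignCertificate

section ProductModel

open scoped Matrix.Norms.L2Operator

section Labels

variable {J K : ℕ} [NeZero K]

/-- The indicator that an entry carrying the label family `a` lies in none of the batches. -/
def missed (a : Fin J → Fin K) : ℝ := ∏ j, (1 - hit (a j))

theorem hit_eq_zero_of_missed {a : Fin J → Fin K} (h : missed a = 1) (j : Fin J) :
    hit (a j) = 0 := by
  refine (hit_eq_zero_or_one (a j)).resolve_right fun h1 => zero_ne_one (α := ℝ) ?_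
  rw [← h]
  exact (Finset.prod_eq_zero (Finset.mem_univ j) (by rw [h1, sub_self])).symm

theorem missed_eq_zero_or_one (a : Fin J → Fin K) : missed a = 0 ∨ missed a = 1 := by
  by_cases h : ∃ j, hit (a j) = 1
  · obtain ⟨j, hj⟩ := h
    exact Or.inl (Finset.prod_eq_zero (Finset.mem_univ j) (by rw [hj, sub_self]))
  · push Not at h
    refine Or.inr (Finset.prod_eq_one fun j _ => ?_)
    rw [(hit_eq_zero_or_one (a j)).resolve_right (h j), sub_zero]

theorem expect_missed : 𝔼 a : Fin J → Fin K, missed a = (1 - 1 / K : ℝ) ^ J := by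
  unfold missed
  rw [expect_pi_prod fun _ (k : Fin K) => 1 - hit k, Finset.expect_sub_distrib,
    Fintype.expect_const, expect_hit, Finset.prod_const, Finset.card_univ, Fintype.card_fin]

end Labels

/-- A sample of the product model: every entry independently carries a uniform label in `Fin K` for
each of the `J` batches and a uniform sign. The support consists of the entries lying in no batch,
so the batches are independent samples of the complement of the support. -/
abbrev ProductSample (E : Type*) (J K : ℕ) : Type _ := E → (Fin J → Fin K) × Bool

section Batches

variable {E : Type*} {J K : ℕ} [NeZero K]

/-- The labels of batch `j`, with the junk value `0` for `j ≥ J`. -/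
def batch (y : ProductSample E J K) (j : ℕ) : E → Fin K :=
  fun e => if h : j < J then (y e).1 ⟨j, h⟩ else 0

/-- The sample obtained by replacing the labels of batch `j`. -/
def setBatch (j : Fin J) (y : ProductSample E J K) (u : E → Fin K) : ProductSample E J K :=
  fun e => (Function.update (y e).1 j (u e), (y e).2)

omit [NeZero K] in
theorem setBatch_setBatch_self (j : Fin J) (y : ProductSample E J K) (u : E → Fin K) :
    setBatch j (setBatch j y u) (fun e => (y e).1 j) = y := by
  ext e : 1
  rw [setBatch, setBatch, Function.update_idem, Function.update_eq_self]

theorem batch_setBatch_self (j : Fin J) (y : ProductSample E J K) (u : E → Fin K) :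
    batch (setBatch j y u) j = u := by
  ext e
  simp [batch, setBatch]

theorem batch_setBatch_of_ne (j : Fin J) (y : ProductSample E J K) (u : E → Fin K) {i : ℕ}
    (hi : i ≠ j) : batch (setBatch j y u) i = batch y i := by
  ext e
  by_cases h : i < J
  · have index_ne : (⟨i, h⟩ : Fin J) ≠ j := fun h' => hi (by rw [← h'])
    simp [batch, setBatch, h, index_ne]
  · simp [batch, h]

/-- The indicator of the support of a sample. -/
def supportInd (y : ProductSample E J K) : E → ℝ := fun e => missed (y e).1

/-- The real signs of a sample. -/
def sampleSigns (y : ProductSample E J K) : E → ℝ := signs fun e => (y e).2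

/-- The sample obtained by replacing the signs. -/
def setSigns (y : ProductSample E J K) (u : E → Bool) : ProductSample E J K :=
  fun e => ((y e).1, u e)

theorem supportInd_setSigns (y : ProductSample E J K) (u : E → Bool) :
    supportInd (setSigns y u) = supportInd y := rfl

omit [NeZero K] in
theorem sampleSigns_setSigns (y : ProductSample E J K) (u : E → Bool) :
    sampleSigns (setSigns y u) = signs u := rfl

theorem supportInd_eq_zero_or_one (y : ProductSample E J K) (e : E) :
    supportInd y e = 0 ∨ supportInd y e = 1 :=
  missed_eq_zero_or_one _

theorem golfSum_apply_eq_zero [Fintype E] (P : Matrix E E ℝ) (z : E → ℝ) {y : ProductSample E J K}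
    {e : E} (he : supportInd y e = 1) : golfSum P z (batch y) J e = 0 := by
  refine Finset.sum_eq_zero fun j hj => ?_
  have hit_batch : hit (batch y j e) = 0 := by
    simpa [batch, Finset.mem_range.1 hj] using hit_eq_zero_of_missed he ⟨j, Finset.mem_range.1 hj⟩
  rw [hit_batch, mul_zero, zero_mul]

end Batches

section GoodSample

variable {m n : Type*} [Fintype m] [Fintype n] [DecidableEq m] [DecidableEq n] {J K : ℕ} [NeZero K]

/-- Success of the golfing step on batch `j`, given that the previous steps succeeded: the entries
of the residual are halved and the sampling error is small in spectral norm. -/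
def GolfStep (N : ℕ) (P : Matrix (m × n) (m × n) ℝ) (z : m × n → ℝ) (b : ℝ) (j : ℕ)
    (y : ProductSample (m × n) J K) : Prop :=
  (∀ e, |golf P z (batch y) j e| ≤ b * (1 / 2) ^ j) →
    (∀ e, |golf P z (batch y) (j + 1) e| ≤ b * (1 / 2) ^ (j + 1)) ∧
      ‖mat (centered (batch y j) (golf P z (batch y) j))‖ ≤ 25 * (K * b * √N) * (1 / 2) ^ j

/-- The families in the range of `P` have little mass on the support `{d = 1}`. -/
def SmallOnSupport {E : Type*} [Fintype E] (P : Matrix E E ℝ) (d : E → ℝ) : Prop :=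
  ∀ x : E → ℝ, ∑ e, d e * (P *ᵥ x) e ^ 2 ≤ (1 / 400) ^ 2 * (x ⬝ᵥ x)

/-- The sign certificate of a sample is small in the range of `P`, and differs little in spectral
norm from the sign pattern on the support. -/
def SignStep (N : ℕ) (P : Matrix (m × n) (m × n) ℝ) (y : ProductSample (m × n) J K) : Prop :=
  (∀ e, |(P *ᵥ signCertificate P (supportInd y) (sampleSigns y)) e| ≤ 1 / 4) ∧
    ‖mat (signCertificate P (supportInd y) (sampleSigns y) -
      diagonal (supportInd y) *ᵥ sampleSigns y)‖ ≤ √N / 8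

/-- The event on which the golfing certificate for `z` and the sign certificate combine to a dual
certificate. -/
structure GoodSample (N : ℕ) (P : Matrix (m × n) (m × n) ℝ) (z : m × n → ℝ) (b : ℝ)
    (y : ProductSample (m × n) J K) : Prop where
  smallOnSupport : SmallOnSupport P (supportInd y)
  golfStep : ∀ j : Fin J, GolfStep N P z b j y
  signStep : SignStep N P y
  norm_signs_le : ‖mat (diagonal (supportInd y) *ᵥ sampleSigns y)‖ ≤ √N / 8

section Probability

variable {N : ℕ} {P : Matrix (m × n) (m × n) ℝ} {z : m × n → ℝ} {b μ τ : ℝ}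

theorem unifProb_not_golfStep_le (hm : Fintype.card m ≤ N) (hn : Fintype.card n ≤ N) (hN : 0 < N)
    (hP : IsStarProjection P) (hμ : ∀ e, P e e ≤ μ) (hb : 0 < b) (hτ : 0 < τ)
    (hτ1 : τ * (K * μ) ≤ 1) (j : Fin J) :
    unifProb (fun y : ProductSample (m × n) J K => ¬ GolfStep N P z b j y) ≤
      Fintype.card (m × n) * (2 * (Real.exp (-(τ / 2)) * Real.exp (τ ^ 2 * (K * μ)))) +
        Real.exp (-N) := by
  refine unifProb_resample_le (setBatch j) (fun y e => (y e).1 j) (setBatch_setBatch_self j)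
    (fun y u => by simp [setBatch]) _ fun y => ?_
  have golf_setBatch (u : m × n → Fin K) :
      golf P z (batch (setBatch j y u)) j = golf P z (batch y) j :=
    golf_congr P z fun i hi => batch_setBatch_of_ne j y u hi.ne
  simp only [GolfStep, golf, golf_setBatch, batch_setBatch_self]
  refine unifProb_not_imp_le (by positivity) fun hz => ?_
  have hbj : 0 < b * (1 / 2) ^ (j : ℕ) := by positivity
  refine (unifProb_mono fun u hu => ?_).trans ((unifProb_or_le _ _).trans
    (add_le_add (unifProb_projection_centered_le hP hμ hbj hz hτ hτ1)
      (unifProb_norm_centered_le hm hn hN hbj hz)))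
  contrapose! hu
  refine ⟨fun e => (hu.1 e).trans_eq ?_, hu.2.trans_eq ?_⟩ <;> ring

theorem unifProb_not_signStep_le (hm : Fintype.card m ≤ N) (hn : Fintype.card n ≤ N) (hN : 0 < N)
    (hP : IsStarProjection P) (hμ : ∀ e, P e e ≤ μ) (hτ : 0 < τ) :
    unifProb (fun y : ProductSample (m × n) J K =>
      ¬ (SmallOnSupport P (supportInd y) → SignStep N P y)) ≤
      Fintype.card (m × n) * (2 * (Real.exp (-(τ / 4)) * Real.exp (τ ^ 2 * (4 * μ)))) +
        Real.exp (-N) := by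
  refine unifProb_resample_le setSigns (fun y e => (y e).2) (fun _ _ => rfl) (fun _ _ => rfl) _
    fun y => ?_
  simp only [SignStep, supportInd_setSigns, sampleSigns_setSigns]
  refine unifProb_not_imp_le (by positivity) fun hC => ?_
  have norm_le := norm_diagonal_mul_mul_diagonal_le (supportInd_eq_zero_or_one y) (by norm_num) hC
  refine (unifProb_mono fun u hu => not_and_or.1 hu).trans ((unifProb_or_le _ _).trans (add_le_add
    (unifProb_not_abs_mulVec_signCertificate_le hP hμ (supportInd_eq_zero_or_one y)
      (norm_le.trans (by norm_num)) hτ)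
    (unifProb_not_norm_signCertificate_sub_le hm hn hN (supportInd_eq_zero_or_one y) norm_le)))

theorem unifProb_not_norm_sampleSigns_le (hm : Fintype.card m ≤ N) (hn : Fintype.card n ≤ N)
    (hN : 0 < N) (hρ : (1 - 1 / K : ℝ) ^ J * Real.exp (40000 ^ 2) ≤ 1 / 40000) :
    unifProb (fun y : ProductSample (m × n) J K =>
      ¬ ‖mat (diagonal (supportInd y) *ᵥ sampleSigns y)‖ ≤ √N / 8) ≤ Real.exp (-N) := by
  have threshold : 25 * √(1 / 40000 * N) = √N / 8 := by
    rw [show (1 / 40000 : ℝ) = (1 / 200) ^ 2 by norm_num, Real.sqrt_mul (sq_nonneg _),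
      Real.sqrt_sq (by norm_num)]
    ring
  have restricted (y : ProductSample (m × n) J K) : diagonal (supportInd y) *ᵥ sampleSigns y =
      fun e => missed (y e).1 * sgn (y e).2 := by
    ext e
    rw [mulVec_diagonal]
    rfl
  simp only [restricted, ← threshold]
  refine unifProb_norm_sparse_signs_le hm hn hN missed_eq_zero_or_one (by norm_num) ?_
  rw [expect_missed]
  norm_num at hρ ⊢
  exact hρ

theorem unifProb_not_goodSample_le (hm : Fintype.card m ≤ N) (hn : Fintype.card n ≤ N) (hN : 0 < N)
    (hP : IsStarProjection P) (hμ : ∀ e, P e e ≤ μ) (hb : 0 < b) {τ₁ τ₂ p : ℝ} (hτ₁ : 0 < τ₁)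
    (hτ₁K : τ₁ * (K * μ) ≤ 1) (hτ₂ : 0 < τ₂)
    (hp : unifProb (fun y : ProductSample (m × n) J K => ¬ SmallOnSupport P (supportInd y)) ≤ p)
    (hρ : (1 - 1 / K : ℝ) ^ J * Real.exp (40000 ^ 2) ≤ 1 / 40000) :
    unifProb (fun y : ProductSample (m × n) J K => ¬ GoodSample N P z b y) ≤
      p + J * (Fintype.card (m × n) *
          (2 * (Real.exp (-(τ₁ / 2)) * Real.exp (τ₁ ^ 2 * (K * μ)))) + Real.exp (-N)) +
        (Fintype.card (m × n) * (2 * (Real.exp (-(τ₂ / 4)) * Real.exp (τ₂ ^ 2 * (4 * μ)))) +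
          Real.exp (-N)) + Real.exp (-N) := by
  have golf_fails := unifProb_exists_le_card_mul (Finset.univ : Finset (Fin J))
    (fun j (y : ProductSample (m × n) J K) => ¬ GolfStep N P z b j y)
    fun j _ => unifProb_not_golfStep_le hm hn hN hP hμ hb hτ₁ hτ₁K j
  rw [Finset.card_univ, Fintype.card_fin] at golf_fails
  refine (unifProb_mono fun y hy => ?_).trans ((unifProb_or_le _ _).trans (add_le_add
    ((unifProb_or_le _ _).trans (add_le_add ((unifProb_or_le _ _).trans (add_le_add hp golf_fails))
      (unifProb_not_signStep_le hm hn hN hP hμ hτ₂)))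
    (unifProb_not_norm_sampleSigns_le hm hn hN hρ)))
  contrapose! hy
  obtain ⟨⟨⟨hC, hG⟩, hS⟩, hn⟩ := hy
  exact ⟨hC, fun j => hG j (Finset.mem_univ j), hS hC, hn⟩

end Probability

section Deterministic

variable {N : ℕ} {P : Matrix (m × n) (m × n) ℝ} {z : m × n → ℝ} {b : ℝ}
  {y : ProductSample (m × n) J K}

/-- The correction to `z` in the range of `1 - P`: golfing removes `z` from the support, and the
sign certificate then prescribes `(√N)⁻¹` times the signs there. -/
noncomputable def dualCorrection (N : ℕ) (P : Matrix (m × n) (m × n) ℝ) (z : m × n → ℝ)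
    (y : ProductSample (m × n) J K) : m × n → ℝ :=
  golfSum P z (batch y) J + (√N)⁻¹ • signCertificate P (supportInd y) (sampleSigns y)

theorem add_mulVec_dualCorrection (hP : IsIdempotentElem P) (hPz : P *ᵥ z = z)
    (y : ProductSample (m × n) J K) :
    z + (1 - P) *ᵥ dualCorrection N P z y =
      golf P z (batch y) J + golfSum P z (batch y) J +
        (√N)⁻¹ • (signCertificate P (supportInd y) (sampleSigns y) -
          P *ᵥ signCertificate P (supportInd y) (sampleSigns y)) := by
  rw [dualCorrection, mulVec_add, mulVec_smul, sub_mulVec, one_mulVec, sub_mulVec, one_mulVec,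
    golf_eq_sub hP hPz]
  abel

namespace GoodSample

theorem norm_diagonal_mul_mul_diagonal_le_half (hy : GoodSample N P z b y) :
    ‖diagonal (supportInd y) * P * diagonal (supportInd y)‖ ≤ 1 / 2 :=
  (norm_diagonal_mul_mul_diagonal_le (supportInd_eq_zero_or_one y) (by norm_num)
    hy.smallOnSupport).trans (by norm_num)

theorem abs_golf_le (hy : GoodSample N P z b y) (hz : ∀ e, |z e| ≤ b) {j : ℕ} (hj : j ≤ J)
    (e : m × n) : |golf P z (batch y) j e| ≤ b * (1 / 2) ^ j := by
  induction j generalizing e with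
  | zero => simpa [golf] using hz e
  | succ j ih => exact (hy.golfStep ⟨j, hj⟩ fun e => ih (by omega) e).1 e

theorem norm_mat_perpProj_mulVec_dualCorrection_le {r : Type*} [Fintype r] [DecidableEq r]
    {U : Matrix m r ℝ} {V : Matrix n r ℝ} (hU : Uᵀ * U = 1) (hV : Vᵀ * V = 1)
    (hPz : (1 - perpProj U V) *ᵥ z = z) (hN : 0 < N) (hy : GoodSample N (1 - perpProj U V) z b y)
    (hb : 0 ≤ b) (hz : ∀ e, |z e| ≤ b) (hbK : K * b * √N ≤ 1 / 800) :
    ‖mat (perpProj U V *ᵥ dualCorrection N (1 - perpProj U V) z y)‖ ≤ 1 / 2 := by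
  have hq : 0 < √(N : ℝ) := Real.sqrt_pos.2 (Nat.cast_pos.2 hN)
  set X := signCertificate (1 - perpProj U V) (supportInd y) (sampleSigns y)
  have norm_golfing_le : ‖mat (perpProj U V *ᵥ golfSum (1 - perpProj U V) z (batch y) J)‖ ≤
      2 * (25 * (K * b * √N)) :=
    norm_mat_perpProj_golfSum_le hU hV hPz (by positivity) fun j hj =>
      (hy.golfStep ⟨j, hj⟩ (hy.abs_golf_le hz hj.le)).2
  have norm_X_le : ‖mat X‖ ≤ √N / 4 := by
    rw [← sub_add_cancel X (diagonal (supportInd y) *ᵥ sampleSigns y), mat_add]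
    exact (norm_add_le _ _).trans (by linarith [hy.signStep.2, hy.norm_signs_le])
  have norm_sign_le : (√N)⁻¹ * ‖mat (perpProj U V *ᵥ X)‖ ≤ 1 / 4 := by
    rw [inv_mul_le_iff₀ hq]
    linarith [norm_mat_perpProj_mulVec_le hU hV X]
  have decomposition : mat (perpProj U V *ᵥ dualCorrection N (1 - perpProj U V) z y) =
      mat (perpProj U V *ᵥ golfSum (1 - perpProj U V) z (batch y) J) +
        (√N)⁻¹ • mat (perpProj U V *ᵥ X) := by
    rw [dualCorrection, mulVec_add, mulVec_smul, mat_add]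
    rfl
  rw [decomposition]
  refine (norm_add_le _ _).trans ?_
  rw [norm_smul, Real.norm_of_nonneg (inv_pos.2 hq).le]
  linarith

theorem sum_supportInd_mul_sq_le (hm : Fintype.card m ≤ N) (hn : Fintype.card n ≤ N)
    (hP : IsIdempotentElem P) (hPz : P *ᵥ z = z) (hy : GoodSample N P z b y) (hb : 0 ≤ b)
    (hz : ∀ e, |z e| ≤ b) (hJ : N * (1 / 2 : ℝ) ^ J ≤ 1) :
    ∑ e, supportInd y e * ((z + (1 - P) *ᵥ dualCorrection N P z y : m × n → ℝ) e -
      (√N)⁻¹ * sampleSigns y e) ^ 2 ≤ b ^ 2 := by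
  have residual_sq_le (e : m × n) :
      supportInd y e * ((z + (1 - P) *ᵥ dualCorrection N P z y : m × n → ℝ) e -
        (√N)⁻¹ * sampleSigns y e) ^ 2 ≤ (b * (1 / 2) ^ J) ^ 2 := by
    rcases supportInd_eq_zero_or_one y e with h | h
    · rw [h, zero_mul]
      positivity
    · rw [h, add_mulVec_dualCorrection hP hPz, Pi.add_apply, Pi.add_apply, Pi.smul_apply,
        golfSum_apply_eq_zero P z h, signCertificate_sub_mulVec_apply (supportInd_eq_zero_or_one y)
          hy.norm_diagonal_mul_mul_diagonal_le_half _ h, smul_eq_mul, one_mul, add_zero,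
        add_sub_cancel_right]
      exact sq_le_sq.2 ((hy.abs_golf_le hz le_rfl e).trans (le_abs_self _))
  have card_le : (Fintype.card (m × n) : ℝ) ≤ N * N := by
    rw [Fintype.card_prod, Nat.cast_mul]
    gcongr
  calc _ ≤ ∑ _e : m × n, (b * (1 / 2) ^ J) ^ 2 := Finset.sum_le_sum fun e _ => residual_sq_le e
    _ = Fintype.card (m × n) * (b * (1 / 2) ^ J) ^ 2 := by
      rw [Finset.sum_const, nsmul_eq_mul, Finset.card_univ]
    _ ≤ N * N * (b * (1 / 2) ^ J) ^ 2 := by gcongr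
    _ = (b * (N * (1 / 2) ^ J)) ^ 2 := by ring
    _ ≤ (b * 1) ^ 2 := by gcongr
    _ = b ^ 2 := by rw [mul_one]

theorem abs_add_mulVec_dualCorrection_le (hP : IsIdempotentElem P) (hPz : P *ᵥ z = z)
    (hy : GoodSample N P z b y) (hz : ∀ e, |z e| ≤ b) {e : m × n} (he : supportInd y e = 0) :
    |(z + (1 - P) *ᵥ dualCorrection N P z y : m × n → ℝ) e| ≤ b + 2 * (K * b) + (√N)⁻¹ / 4 := by
  set X := signCertificate P (supportInd y) (sampleSigns y)
  have X_apply : X e = 0 :=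
    signCertificate_apply_eq_zero hy.norm_diagonal_mul_mul_diagonal_le_half _ he
  have golf_le : |golf P z (batch y) J e| ≤ b :=
    (hy.abs_golf_le hz le_rfl e).trans (mul_le_of_le_one_right ((abs_nonneg _).trans (hz e))
      (pow_le_one₀ (by norm_num) (by norm_num)))
  have golfSum_le : |golfSum P z (batch y) J e| ≤ 2 * (K * b) :=
    abs_golfSum_le (fun j hj => hy.abs_golf_le hz hj) e
  have sign_le : |((√N)⁻¹ • (X - P *ᵥ X)) e| ≤ (√N)⁻¹ / 4 := by
    rw [Pi.smul_apply, Pi.sub_apply, X_apply, zero_sub, smul_eq_mul, abs_mul, abs_neg,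
      abs_of_nonneg (by positivity), div_eq_mul_one_div]
    exact mul_le_mul_of_nonneg_left (hy.signStep.1 e) (by positivity)
  rw [add_mulVec_dualCorrection hP hPz, Pi.add_apply, Pi.add_apply]
  exact (abs_add_three _ _ _).trans (add_le_add_three golf_le golfSum_le sign_le)

end GoodSample

end Deterministic

end GoodSample

section Recovery

variable {n1 n2 J K r : ℕ} [NeZero K] {U : Matrix (Fin n1) (Fin r) ℝ}
  {V : Matrix (Fin n2) (Fin r) ℝ} {σ : Fin r → ℝ} {a : Fin n1 × Fin n2 → ℝ} {b : ℝ}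

/-- The sparse matrix determined by a sample and the magnitudes `a`. -/
def productSparse (a : Fin n1 × Fin n2 → ℝ) (y : ProductSample (Fin n1 × Fin n2) J K) :
    Matrix (Fin n1) (Fin n2) ℝ :=
  mat fun e => supportInd y e * (sampleSigns y e * a e)

theorem GoodSample.strictlyRecovered (hn : n2 ≤ n1) (hn1 : 1 < n1) (hU : Uᵀ * U = 1)
    (hV : Vᵀ * V = 1) (hσ : ∀ k, 0 ≤ σ k) (ha : ∀ e, 0 ≤ a e) (hb : 0 ≤ b)
    (hUV : ∀ e, |entries (U * Vᵀ) e| ≤ b) (hbK : K * b * √n1 ≤ 1 / 800)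
    (hJ : n1 * (1 / 2 : ℝ) ^ J ≤ 1) {y : ProductSample (Fin n1 × Fin n2) J K}
    (hy : GoodSample n1 (1 - perpProj U V) (entries (U * Vᵀ)) b y) :
    StrictlyRecovered (√n1)⁻¹ (U * diagonal σ * Vᵀ) (productSparse a y) := by
  have hq1 : 1 < √(n1 : ℝ) := Real.lt_sqrt_of_sq_lt (by simpa using hn1)
  have hq0 : 0 < (√(n1 : ℝ))⁻¹ := inv_pos.2 (zero_lt_one.trans hq1)
  have K_mul_b_le : K * b ≤ 1 / 800 * (√n1)⁻¹ := by
    rwa [← div_eq_mul_inv, le_div_iff₀ (zero_lt_one.trans hq1)]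
  have b_le : b ≤ 1 / 800 * (√n1)⁻¹ := by
    refine le_trans (le_mul_of_one_le_left hb ?_) K_mul_b_le
    exact Nat.one_le_cast.2 (Nat.one_le_iff_ne_zero.2 (NeZero.ne K))
  have mulVec_entries : (1 - perpProj U V) *ᵥ entries (U * Vᵀ) = entries (U * Vᵀ) := by
    rw [sub_mulVec, one_mulVec, perpProj_mulVec_entries_mul_transpose hU, sub_zero]
  have idempotent := (isStarProjection_perpProj hU hV).one_sub.isIdempotentElem
  have abs_sampleSigns (e : Fin n1 × Fin n2) : |sampleSigns y e| = 1 := abs_sgn _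
  refine strictlyRecovered_of_certificate hU hV hσ hq0 (inv_lt_one_of_one_lt₀ hq1)
    (d := supportInd y) (s := sampleSigns y)
    (w := dualCorrection n1 (1 - perpProj U V) (entries (U * Vᵀ)) y)
    (supportInd_eq_zero_or_one y) (fun e => (abs_sampleSigns e).le) (fun e he => ?_)
    (fun e he => ?_) (fun x => ?_) ?_ ?_ fun e he => ?_
  · rw [productSparse, entries_mat, he, one_mul, abs_mul, abs_sampleSigns, one_mul,
      abs_of_nonneg (ha e), ← mul_assoc, ← abs_mul_abs_self, abs_sampleSigns, one_mul, one_mul]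
  · rw [productSparse, entries_mat, he, zero_mul]
  · exact (hy.smallOnSupport x).trans
      (mul_le_mul_of_nonneg_right (by norm_num) (dotProduct_self_nonneg x))
  · exact hy.norm_mat_perpProj_mulVec_dualCorrection_le hU hV mulVec_entries (by omega) hb hUV hbK
  · have h := hy.sum_supportInd_mul_sq_le (by simp) (by simpa using hn) idempotent mulVec_entries
      hb hUV hJ
    rw [sub_sub_cancel] at h
    exact h.trans (pow_le_pow_left₀ hb (by linarith) 2)
  · have h := hy.abs_add_mulVec_dualCorrection_le idempotent mulVec_entries hUV he
    rw [sub_sub_cancel] at h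
    linarith

end Recovery

end ProductModel

section SupportTransfer

theorem exists_perm_map_eq {E : Type*} [Finite E] {S T : Finset E} (h : S.card = T.card) :
    ∃ τ : Equiv.Perm E, S.map τ.toEmbedding = T := by
  classical
  have := Fintype.ofFinite E
  have e : {x // x ∈ S} ≃ {x // x ∈ T} := Fintype.equivOfCardEq (by simpa using h)
  refine ⟨e.extendSubtype, Finset.eq_of_subset_of_card_le ?_ (by simp [h])⟩
  intro x hx
  obtain ⟨a, ha, rfl⟩ := Finset.mem_map.1 hx
  exact e.extendSubtype_mem a ha

variable {E A : Type*} [Fintype E] [DecidableEq E] [Fintype A] {W : Finset E → ℝ}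

theorem expect_perm_map (W : Finset E → ℝ) {T : Finset E} {m : ℕ} (hT : T.card = m) :
    𝔼 π : Equiv.Perm E, W (T.map π.toEmbedding) = 𝔼 S : {S : Finset E // S.card = m}, W S.1 := by
  have expect_eq_of_card : ∀ S : {S : Finset E // S.card = m},
      𝔼 π : Equiv.Perm E, W (S.1.map π.toEmbedding) =
        𝔼 π : Equiv.Perm E, W (T.map π.toEmbedding) := by
    intro S
    obtain ⟨τ, rfl⟩ := exists_perm_map_eq (S.2.trans hT.symm)
    refine (Fintype.expect_equiv (Equiv.mulRight τ) _ _ fun π => ?_).symm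
    rw [Finset.map_map]
    rfl
  have expect_map_perm : ∀ π : Equiv.Perm E,
      𝔼 S : {S : Finset E // S.card = m}, W (S.1.map π.toEmbedding) =
        𝔼 S : {S : Finset E // S.card = m}, W S.1 := fun π =>
    Fintype.expect_equiv (π.finsetCongr.subtypeEquiv fun S => by simp) _ _ fun S => by simp
  have : Nonempty {S : Finset E // S.card = m} := ⟨⟨T, hT⟩⟩
  calc 𝔼 π : Equiv.Perm E, W (T.map π.toEmbedding)
      = 𝔼 S : {S : Finset E // S.card = m}, 𝔼 π : Equiv.Perm E, W (S.1.map π.toEmbedding) := by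
        simp only [expect_eq_of_card, Fintype.expect_const]
    _ = 𝔼 π : Equiv.Perm E, 𝔼 S : {S : Finset E // S.card = m}, W (S.1.map π.toEmbedding) :=
        Finset.expect_comm _ _ _
    _ = 𝔼 S : {S : Finset E // S.card = m}, W S.1 := by
        simp only [expect_map_perm, Fintype.expect_const]

theorem expect_perm_map_filter (W : Finset E → ℝ) (D : A → Prop) [DecidablePred D]
    (π : Equiv.Perm E) :
    𝔼 x : E → A, W ((Finset.univ.filter fun e => D (x e)).map π.toEmbedding) =
      𝔼 x : E → A, W (Finset.univ.filter fun e => D (x e)) := by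
  refine Fintype.expect_equiv (Equiv.arrowCongr π (Equiv.refl A)) _ _ fun x => ?_
  congr 1
  ext e
  simp [Equiv.arrowCongr]

/-- A set drawn from the product model has an exchangeable law, so, once it has at least `m`
elements, it contains a uniformly distributed set of cardinality `m`. -/
theorem unifProb_le_card_mul_expect_le (hW0 : ∀ S, 0 ≤ W S) (hW : Monotone W) (D : A → Prop)
    [DecidablePred D] (m : ℕ) :
    unifProb (fun x : E → A => m ≤ (Finset.univ.filter fun e => D (x e)).card) *
        𝔼 S : {S : Finset E // S.card = m}, W S.1 ≤
      𝔼 x : E → A, W (Finset.univ.filter fun e => D (x e)) := by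
  calc unifProb (fun x : E → A => m ≤ (Finset.univ.filter fun e => D (x e)).card) *
        𝔼 S : {S : Finset E // S.card = m}, W S.1
      = 𝔼 x : E → A, if m ≤ (Finset.univ.filter fun e => D (x e)).card then
          𝔼 S : {S : Finset E // S.card = m}, W S.1 else 0 := by
        simp only [unifProb_eq_expect, Finset.expect_mul, ite_mul, one_mul, zero_mul]
    _ ≤ 𝔼 x : E → A, 𝔼 π : Equiv.Perm E,
          W ((Finset.univ.filter fun e => D (x e)).map π.toEmbedding) := by
        refine Finset.expect_le_expect fun x _ => ?_
        split_ifs with h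
        · obtain ⟨T, hTs, hT⟩ := Finset.exists_subset_card_eq h
          rw [← expect_perm_map W hT]
          exact Finset.expect_le_expect fun π _ => hW (Finset.map_subset_map.2 hTs)
        · exact Finset.expect_nonneg fun _ _ => hW0 _
    _ = 𝔼 π : Equiv.Perm E, 𝔼 x : E → A,
          W ((Finset.univ.filter fun e => D (x e)).map π.toEmbedding) := Finset.expect_comm _ _ _
    _ = 𝔼 x : E → A, W (Finset.univ.filter fun e => D (x e)) := by
        simp only [expect_perm_map_filter, Fintype.expect_const]

theorem expect_exp_neg_ite_le [Nonempty A] (D : A → Prop) [DecidablePred D] :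
    𝔼 a, Real.exp (-(if D a then (1 : ℝ) else 0)) ≤ Real.exp (-(unifProb D / 2)) := by
  have exp_neg_one_le : Real.exp (-1) ≤ 1 / 2 := by
    linarith [Real.exp_neg_one_lt_d9]
  have exp_neg_ite_le : ∀ a, Real.exp (-(if D a then (1 : ℝ) else 0)) ≤
      1 + (-1 / 2) * (if D a then (1 : ℝ) else 0) := fun a => by
    split_ifs
    · linarith
    · simp
  calc 𝔼 a, Real.exp (-(if D a then (1 : ℝ) else 0))
      ≤ 𝔼 a, (1 + (-1 / 2) * (if D a then (1 : ℝ) else 0)) :=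
        Finset.expect_le_expect fun a _ => exp_neg_ite_le a
    _ = -(unifProb D / 2) + 1 := by
        rw [Finset.expect_add_distrib, Fintype.expect_const, ← Finset.mul_expect,
          ← unifProb_eq_expect]
        ring
    _ ≤ Real.exp (-(unifProb D / 2)) := Real.add_one_le_exp _

theorem unifProb_card_lt_le [Nonempty A] (D : A → Prop) [DecidablePred D] (m : ℕ) :
    unifProb (fun x : E → A => (Finset.univ.filter fun e => D (x e)).card < m) ≤
      Real.exp (m - Fintype.card E * (unifProb D / 2)) := by
  have card_eq_sum : ∀ x : E → A, ((Finset.univ.filter fun e => D (x e)).card : ℝ) =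
      ∑ e, if D (x e) then (1 : ℝ) else 0 := fun x => by simp
  calc unifProb (fun x : E → A => (Finset.univ.filter fun e => D (x e)).card < m)
      ≤ unifProb (fun x : E → A => -(m : ℝ) < ∑ e, -(if D (x e) then (1 : ℝ) else 0)) := by
        refine unifProb_mono fun x hx => ?_
        rw [Finset.sum_neg_distrib, ← card_eq_sum, neg_lt_neg_iff]
        exact_mod_cast hx
    _ ≤ Real.exp (- -(m : ℝ)) *
          ∏ _e : E, 𝔼 a, Real.exp (-(if D a then (1 : ℝ) else 0)) := by
        refine (unifProb_lt_le_exp_mul_expect_exp _ _).trans (le_of_eq ?_)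
        rw [expect_exp_sum fun (_ : E) a => -(if D a then (1 : ℝ) else 0)]
    _ ≤ Real.exp (- -(m : ℝ)) * Real.exp (-(unifProb D / 2)) ^ Fintype.card E := by
        rw [Finset.prod_const, Finset.card_univ]
        gcongr
        exact expect_exp_neg_ite_le D
    _ = Real.exp (m - Fintype.card E * (unifProb D / 2)) := by
        rw [← Real.exp_nat_mul, ← Real.exp_add]
        ring_nf

/-- The two supports can be compared up to a factor `2` because `m` is at most half the expected
cardinality of the product-model support. -/
theorem expect_card_eq_le_two_mul_expect_filter [Nonempty A] (hW0 : ∀ S, 0 ≤ W S) (hW : Monotone W)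
    (D : A → Prop) [DecidablePred D] {m : ℕ}
    (hm : Real.exp (m - Fintype.card E * (unifProb D / 2)) ≤ 1 / 2) :
    𝔼 S : {S : Finset E // S.card = m}, W S.1 ≤
      2 * 𝔼 x : E → A, W (Finset.univ.filter fun e => D (x e)) := by
  have half_le : 1 / 2 ≤
      unifProb fun x : E → A => m ≤ (Finset.univ.filter fun e => D (x e)).card := by
    have h := (unifProb_card_lt_le (E := E) D m).trans hm
    simp only [← not_le] at h
    rw [unifProb_not] at h
    linarith
  have expect_nonneg : 0 ≤ 𝔼 S : {S : Finset E // S.card = m}, W S.1 :=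
    Finset.expect_nonneg fun S _ => hW0 S
  linarith [unifProb_le_card_mul_expect_le hW0 hW D m,
    mul_le_mul_of_nonneg_right half_le expect_nonneg]

end SupportTransfer

section SparseModels

variable {n1 n2 m J K : ℕ} {lam : ℝ} {L0 : Matrix (Fin n1) (Fin n2) ℝ} {a : Fin n1 × Fin n2 → ℝ}

/-- The matrix supported on `S` with magnitudes `a` and signs `s`: the common form of the sparse
component in the uniform model (`sparseOf`) and in the product model (`productSparse`). -/
def signedSparse (a : Fin n1 × Fin n2 → ℝ) (S : Finset (Fin n1 × Fin n2))
    (s : Fin n1 × Fin n2 → Bool) : Matrix (Fin n1) (Fin n2) ℝ :=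
  mat fun e => if e ∈ S then sgn (s e) * a e else 0

theorem sparseOf_eq_signedSparse (a : Fin n1 × Fin n2 → ℝ) (ω : SampleSpace n1 n2 m) :
    sparseOf a ω = signedSparse a ω.1.1 ω.2 := by
  ext i j
  by_cases h : ω.2 (i, j) <;> simp [sparseOf, signedSparse, mat, sgn, h]

/-- The conditional probability, given the support `S`, that recovery fails. -/
noncomputable def signFailure (lam : ℝ) (L0 : Matrix (Fin n1) (Fin n2) ℝ)
    (a : Fin n1 × Fin n2 → ℝ) (S : Finset (Fin n1 × Fin n2)) : ℝ :=
  unifProb fun s => ¬ StrictlyRecovered lam L0 (signedSparse a S s)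

theorem signFailure_mono (hlam : 0 ≤ lam) (L0 : Matrix (Fin n1) (Fin n2) ℝ)
    (a : Fin n1 × Fin n2 → ℝ) : Monotone (signFailure lam L0 a) := by
  refine fun S T hST => unifProb_mono fun s => mt fun h => h.mono hlam fun i j => ?_
  by_cases hS : (i, j) ∈ S
  · left
    simp [signedSparse, mat, hS, hST hS]
  · right
    simp [signedSparse, mat, hS]

theorem unifProb_not_strictlyRecovered_sparseOf :
    unifProb (fun ω : SampleSpace n1 n2 m => ¬ StrictlyRecovered lam L0 (sparseOf a ω)) =
      𝔼 S : {S : Finset (Fin n1 × Fin n2) // S.card = m}, signFailure lam L0 a S.1 := by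
  classical
  simp only [sparseOf_eq_signedSparse, signFailure, unifProb_eq_expect]
  rw [← Finset.univ_product_univ, Finset.expect_product]

variable [NeZero K]

theorem productSparse_eq_signedSparse (a : Fin n1 × Fin n2 → ℝ)
    (y : ProductSample (Fin n1 × Fin n2) J K) :
    productSparse a y =
      signedSparse a (Finset.univ.filter fun e => missed (y e).1 = 1) fun e => (y e).2 := by
  ext i j
  rcases missed_eq_zero_or_one (y (i, j)).1 with h | h <;>
    simp [productSparse, supportInd, sampleSigns, signs, signedSparse, mat, h]

theorem unifProb_not_strictlyRecovered_productSparse :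
    unifProb (fun y : ProductSample (Fin n1 × Fin n2) J K =>
        ¬ StrictlyRecovered lam L0 (productSparse a y)) =
      𝔼 y : ProductSample (Fin n1 × Fin n2) J K,
        signFailure lam L0 a (Finset.univ.filter fun e => missed (y e).1 = 1) := by
  classical
  rw [unifProb_eq_expect, expect_resample (fun y u => setSigns y u) (fun y e => (y e).2)
    (fun _ _ => rfl) (fun _ _ => rfl)]
  simp only [signFailure, unifProb_eq_expect, productSparse_eq_signedSparse]
  rfl

theorem unifProb_missed_eq_one :
    unifProb (fun b : (Fin J → Fin K) × Bool => missed b.1 = 1) = (1 - 1 / K : ℝ) ^ J := by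
  rw [unifProb_eq_expect, ← expect_missed, ← expect_prod_fst (β := Bool) missed]
  refine Finset.expect_congr rfl fun b _ => ?_
  rcases missed_eq_zero_or_one b.1 with h | h <;> simp [h]

theorem unifProb_not_strictlyRecovered_sparseOf_le (hlam : 0 ≤ lam)
    (hm : Real.exp (m - n1 * n2 * ((1 - 1 / K : ℝ) ^ J / 2)) ≤ 1 / 2) :
    unifProb (fun ω : SampleSpace n1 n2 m => ¬ StrictlyRecovered lam L0 (sparseOf a ω)) ≤
      2 * unifProb (fun y : ProductSample (Fin n1 × Fin n2) J K =>
        ¬ StrictlyRecovered lam L0 (productSparse a y)) := by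
  rw [unifProb_not_strictlyRecovered_sparseOf, unifProb_not_strictlyRecovered_productSparse]
  refine expect_card_eq_le_two_mul_expect_filter (fun S => unifProb_nonneg _)
    (signFailure_mono hlam L0 a) (fun b : (Fin J → Fin K) × Bool => missed b.1 = 1) ?_
  simpa only [unifProb_missed_eq_one, Fintype.card_prod, Fintype.card_fin, Nat.cast_mul] using hm

end SparseModels

section ScalarBounds

theorem one_lt_log_of_three_le {N : ℕ} (hN : 3 ≤ N) : 1 < Real.log N := by
  have hN' : (3 : ℝ) ≤ N := by exact_mod_cast hN
  rw [Real.lt_log_iff_exp_lt (by linarith)]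
  linarith [Real.exp_one_lt_d9]

theorem exp_neg_two_mul_le_one_sub {x : ℝ} (hx0 : 0 ≤ x) (hx : x ≤ 1 / 2) :
    Real.exp (-(2 * x)) ≤ 1 - x := by
  have inv_le_exp : (1 - x)⁻¹ ≤ Real.exp (2 * x) := by
    refine le_trans ?_ (Real.add_one_le_exp _)
    rw [inv_le_iff_one_le_mul₀ (by linarith)]
    nlinarith
  rw [Real.exp_neg]
  exact inv_le_of_inv_le₀ (by linarith) inv_le_exp

theorem exp_neg_two_mul_le_one_sub_inv_pow {K : ℕ} (hK : 2 ≤ K) (c : ℕ) :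
    Real.exp (-(2 * c)) ≤ (1 - 1 / K : ℝ) ^ (c * K) := by
  have hK2 : (2 : ℝ) ≤ K := by exact_mod_cast hK
  calc Real.exp (-(2 * c)) = Real.exp (-(2 * (1 / K : ℝ))) ^ (c * K) := by
        rw [← Real.exp_nat_mul]
        push_cast
        field_simp
    _ ≤ (1 - 1 / K : ℝ) ^ (c * K) := by
        gcongr
        exact exp_neg_two_mul_le_one_sub (by positivity)
          (one_div_le_one_div_of_le (by norm_num) hK2)

theorem one_sub_inv_pow_le_exp_neg {K : ℕ} [NeZero K] (c : ℕ) :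
    (1 - 1 / K : ℝ) ^ (c * K) ≤ Real.exp (-c) := by
  have hK : (K : ℝ) ≠ 0 := NeZero.ne _
  have inv_le_one : 1 / (K : ℝ) ≤ 1 := by
    rw [one_div]
    exact Nat.cast_inv_le_one K
  calc (1 - 1 / K : ℝ) ^ (c * K) ≤ Real.exp (-(1 / K : ℝ)) ^ (c * K) := by
        refine pow_le_pow_left₀ (by linarith) ?_ _
        linarith [Real.add_one_le_exp (-(1 / K : ℝ))]
    _ = Real.exp (-c) := by
        rw [← Real.exp_nat_mul]
        push_cast
        field_simp

theorem exp_neg_natCast_le_factorial_mul {n : ℕ} (hn : 0 < n) (k : ℕ) :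
    Real.exp (-n) ≤ k.factorial * ((n : ℝ) ^ k)⁻¹ := by
  rw [Real.exp_neg, inv_le_comm₀ (Real.exp_pos _) (by positivity), mul_inv, inv_inv, mul_comm,
    ← div_eq_mul_inv]
  exact Real.pow_div_factorial_le_exp (n : ℝ) (by positivity) k

theorem exp_neg_natCast_mul_log {n : ℕ} (hn : 0 < n) (k : ℕ) :
    Real.exp (-(k * Real.log n)) = ((n : ℝ) ^ k)⁻¹ := by
  rw [Real.exp_neg, Real.exp_nat_mul, Real.exp_log (by positivity)]

theorem exp_neg_natCast_pow_le_inv_pow {n K : ℕ} (hn : 0 < n) (hK : Real.log n ≤ K) (k : ℕ) :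
    Real.exp (-k) ^ K ≤ ((n : ℝ) ^ k)⁻¹ := by
  rw [← exp_neg_natCast_mul_log hn, ← Real.exp_nat_mul, mul_neg, mul_comm]
  gcongr

theorem natCast_mul_half_pow_le_one {n K c : ℕ} (hn : 0 < n) (hK : Real.log n ≤ K) (hc : 2 ≤ c) :
    n * (1 / 2 : ℝ) ^ (c * K) ≤ 1 := by
  have quarter_le : (1 / 2 : ℝ) ^ 2 ≤ Real.exp (-(1 : ℕ)) := by
    norm_num
    linarith [Real.exp_neg_one_gt_d9]
  have half_pow_le : (1 / 2 : ℝ) ^ (c * K) ≤ ((n : ℝ) ^ 1)⁻¹ := by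
    calc (1 / 2 : ℝ) ^ (c * K) ≤ (1 / 2 : ℝ) ^ (2 * K) :=
          pow_le_pow_of_le_one (by norm_num) (by norm_num) (Nat.mul_le_mul_right K hc)
      _ = ((1 / 2 : ℝ) ^ 2) ^ K := pow_mul _ _ _
      _ ≤ Real.exp (-(1 : ℕ)) ^ K := by gcongr
      _ ≤ ((n : ℝ) ^ 1)⁻¹ := exp_neg_natCast_pow_le_inv_pow hn hK 1
  calc n * (1 / 2 : ℝ) ^ (c * K) ≤ n * ((n : ℝ) ^ 1)⁻¹ := by gcongr
    _ = 1 := by rw [pow_one, mul_inv_cancel₀ (by positivity)]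

theorem one_add_div_pow_le {s x : ℝ} {K : ℕ} (hs0 : 0 < s) (hs : s ≤ 2) (hx0 : 0 ≤ x)
    (hx : K * x ≤ s ^ 2 / 2) : (1 + x / s) ^ K ≤ 1 + s := by
  have exponent_nonneg : 0 ≤ K * (x / s) := by positivity
  have exponent_le : K * (x / s) ≤ s / 2 := by
    rw [← mul_div_assoc, div_le_iff₀ hs0]
    linarith
  calc (1 + x / s) ^ K ≤ Real.exp (x / s) ^ K := by
        gcongr
        linarith [Real.add_one_le_exp (x / s)]
    _ = Real.exp (K * (x / s)) := by rw [← Real.exp_nat_mul]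
    _ ≤ 1 + s := by
        have abs_exp_sub_one_le := Real.abs_exp_sub_one_le (x := K * (x / s))
          (by rw [abs_of_nonneg exponent_nonneg]; linarith)
        rw [abs_of_nonneg exponent_nonneg] at abs_exp_sub_one_le
        linarith [(abs_le.1 abs_exp_sub_one_le).2]

end ScalarBounds

section Constants

variable {c : ℕ}

/-- The level of the regularization of a random compression: `(1/400) ^ 2` is the target in
`SmallOnSupport`, and the factor `exp (-16)` makes Chernoff's bound polynomially small. -/
noncomputable def regLevel : ℝ := (1 / 400) ^ 2 * Real.exp (-16)

theorem regLevel_pos : 0 < regLevel := by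
  unfold regLevel
  positivity

theorem regLevel_le : regLevel ≤ 1 / 160000 := by
  have exp_le_one : Real.exp (-16) ≤ 1 := Real.exp_le_one_iff.2 (by norm_num)
  unfold regLevel
  linarith

theorem three_mul_regLevel_div_le :
    (2 * regLevel + regLevel) / ((1 / 400) ^ 2 + regLevel) ≤ Real.exp (-(14 : ℕ)) := by
  have three_le_exp_two : (3 : ℝ) ≤ Real.exp 2 := by
    linarith [Real.add_one_le_exp (2 : ℝ)]
  have exp_neg_14 : Real.exp (-(14 : ℕ)) = Real.exp 2 * Real.exp (-16) := by
    rw [← Real.exp_add]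
    norm_num
  have exp_mul_regLevel_nonneg : 0 ≤ Real.exp 2 * Real.exp (-16) * regLevel := by
    have := regLevel_pos
    positivity
  have three_mul_regLevel_le : 3 * regLevel ≤ Real.exp 2 * Real.exp (-16) * (1 / 400) ^ 2 := by
    rw [regLevel]
    nlinarith [Real.exp_pos (-16)]
  rw [div_le_iff₀ (add_pos (by norm_num) regLevel_pos), exp_neg_14]
  linarith

/-- `40000 ^ 2` is the exponent in the moment bound for the sparse sign matrix, so this many rounds
make its support sparse enough. -/
theorem exp_neg_mul_exp_le (hc : 40000 ^ 2 + 20 ≤ c) :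
    Real.exp (-c) * Real.exp (40000 ^ 2) ≤ 1 / 160000 := by
  have hc' : (40000 : ℝ) ^ 2 + 20 ≤ c := by exact_mod_cast hc
  calc Real.exp (-c) * Real.exp (40000 ^ 2) = Real.exp (-c + 40000 ^ 2) := (Real.exp_add _ _).symm
    _ ≤ Real.exp ((20 : ℕ) * -1) := by
        gcongr
        push_cast
        linarith
    _ = Real.exp (-1) ^ 20 := Real.exp_nat_mul _ _
    _ ≤ (1 / 2) ^ 20 := by
        gcongr
        linarith [Real.exp_neg_one_lt_d9]
    _ ≤ 1 / 160000 := by norm_num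

theorem exp_neg_le_regLevel (hc : 40000 ^ 2 + 20 ≤ c) : Real.exp (-c) ≤ regLevel := by
  have h := exp_neg_mul_exp_le hc
  rw [← le_div_iff₀ (Real.exp_pos _), div_eq_mul_inv, ← Real.exp_neg] at h
  refine h.trans ?_
  rw [regLevel]
  gcongr <;> norm_num

/-- The constant in the failure probability of the product model with `c` rounds per label. -/
noncomputable def failureConst (c : ℕ) : ℝ :=
  3 + 2 * c * (2 + (11).factorial) + 2 * (11).factorial

theorem failureConst_nonneg (c : ℕ) : 0 ≤ failureConst c := by
  unfold failureConst
  positivity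

theorem failure_sum_le_failureConst_mul {N : ℕ} (hN : 0 < N) {M T x₁ x₂ e : ℝ} (hM0 : 0 ≤ M)
    (hM : M ≤ N ^ 2) (hT0 : 0 ≤ T) (hT : T ≤ 2 * c * N) (hx₁ : x₁ ≤ ((N : ℝ) ^ 14)⁻¹)
    (hx₂ : x₂ ≤ ((N : ℝ) ^ 14)⁻¹) (he : e ≤ (11).factorial * ((N : ℝ) ^ 11)⁻¹) :
    M * ((N : ℝ) ^ 14)⁻¹ + T * (M * (2 * x₁) + e) + (M * (2 * x₂) + e) + e ≤
      failureConst c * ((N : ℝ) ^ 10)⁻¹ := by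
  set F : ℝ := ((11).factorial : ℝ) with hF
  simp only [← inv_pow] at hx₁ hx₂ he ⊢
  set w : ℝ := (N : ℝ)⁻¹
  have w_nonneg : 0 ≤ w := by positivity
  have N_mul_w : N * w = 1 := mul_inv_cancel₀ (by positivity)
  have pow_w_le {i j : ℕ} (h : j ≤ i) : w ^ i ≤ w ^ j :=
    pow_le_pow_of_le_one w_nonneg (Nat.cast_inv_le_one N) h
  have M_mul_le {x : ℝ} (hx : x ≤ w ^ 14) : M * x ≤ w ^ 11 := by
    calc M * x ≤ N ^ 2 * w ^ 14 := mul_le_mul_of_nonneg hM hx hM0 (by positivity)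
      _ = (N * w) ^ 2 * w ^ 12 := by ring
      _ ≤ w ^ 11 := by
          rw [N_mul_w, one_pow, one_mul]
          exact pow_w_le (by norm_num)
  have first_le := (M_mul_le le_rfl).trans (pow_w_le (show 10 ≤ 11 by norm_num))
  have second_le : T * (M * (2 * x₁) + e) ≤ 2 * c * (2 + F) * w ^ 10 := by
    calc T * (M * (2 * x₁) + e) ≤ 2 * c * N * (2 * w ^ 11 + F * w ^ 11) := by
          refine mul_le_mul_of_nonneg hT ?_ hT0 (by positivity)
          linarith [M_mul_le hx₁]
      _ = 2 * c * (2 + F) * (N * w) * w ^ 10 := by ring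
      _ = 2 * c * (2 + F) * w ^ 10 := by rw [N_mul_w, mul_one]
  have third_le := (M_mul_le hx₂).trans (pow_w_le (show 10 ≤ 11 by norm_num))
  have e_le : e ≤ F * w ^ 10 := he.trans (by gcongr ?_ * ?_; exact pow_w_le (by norm_num))
  rw [failureConst, ← hF]
  linarith

end Constants

section ProductFailure

variable {N K c : ℕ} {μ : ℝ}

theorem mul_mul_log_le (hN : 3 ≤ N) (hK : K ≤ 2 * Real.log N) (hμ0 : 0 ≤ μ)
    (hμL : μ * Real.log N ^ 2 ≤ regLevel ^ 2 / 4) : K * μ * Real.log N ≤ regLevel ^ 2 / 2 := by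
  have log_pos := zero_lt_one.trans (one_lt_log_of_three_le hN)
  calc K * μ * Real.log N ≤ 2 * Real.log N * μ * Real.log N := by gcongr
    _ = 2 * (μ * Real.log N ^ 2) := by ring
    _ ≤ regLevel ^ 2 / 2 := by linarith

theorem golf_exponent_le (hN : 3 ≤ N) (hμ : K * μ * Real.log N ≤ regLevel ^ 2 / 2) :
    Real.exp (-(30 * Real.log N / 2)) * Real.exp ((30 * Real.log N) ^ 2 * (K * μ)) ≤
      ((N : ℝ) ^ 14)⁻¹ := by
  have log_pos := zero_lt_one.trans (one_lt_log_of_three_le hN)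
  have quadratic_le : (30 * Real.log N) ^ 2 * (K * μ) ≤ Real.log N := by
    calc (30 * Real.log N) ^ 2 * (K * μ) = 900 * (K * μ * Real.log N) * Real.log N := by ring
      _ ≤ 1 * Real.log N := by
          gcongr
          nlinarith [regLevel_pos, regLevel_le]
      _ = Real.log N := one_mul _
  rw [← Real.exp_add, ← exp_neg_natCast_mul_log (by omega)]
  gcongr
  push_cast
  linarith

theorem sign_exponent_le (hN : 3 ≤ N) (hμ : μ * Real.log N ^ 2 ≤ regLevel ^ 2 / 4) :
    Real.exp (-(60 * Real.log N / 4)) * Real.exp ((60 * Real.log N) ^ 2 * (4 * μ)) ≤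
      ((N : ℝ) ^ 14)⁻¹ := by
  have one_lt_log := one_lt_log_of_three_le hN
  have quadratic_le : (60 * Real.log N) ^ 2 * (4 * μ) ≤ 1 := by
    calc (60 * Real.log N) ^ 2 * (4 * μ) = 14400 * (μ * Real.log N ^ 2) := by ring
      _ ≤ 1 := by nlinarith [regLevel_pos, regLevel_le]
  rw [← Real.exp_add, ← exp_neg_natCast_mul_log (by omega)]
  gcongr
  push_cast
  linarith

variable [NeZero K]

theorem unifProb_not_smallOnSupport_le {E : Type*} [Fintype E] [DecidableEq E] {J : ℕ}
    (hN : 0 < N) (hK : Real.log N ≤ K) {P : Matrix E E ℝ} (hP : IsStarProjection P) (hμ0 : 0 ≤ μ)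
    (hμ : ∀ e, P e e ≤ μ) (hμK : K * μ ≤ regLevel ^ 2 / 2)
    (hρ : (1 - 1 / K : ℝ) ^ J ≤ regLevel) :
    unifProb (fun y : ProductSample E J K => ¬ SmallOnSupport P (supportInd y)) ≤
      Fintype.card E * ((N : ℝ) ^ 14)⁻¹ := by
  have regLevel_pos := regLevel_pos
  have regLevel_le := regLevel_le
  have missed_mem (a : (Fin J → Fin K) × Bool) : 0 ≤ missed a.1 ∧ missed a.1 ≤ 1 := by
    rcases missed_eq_zero_or_one a.1 with h | h <;> simp [h]
  refine (unifProb_not_sum_mul_mulVec_sq_le hP hμ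
    (δ := fun a : (Fin J → Fin K) × Bool => missed a.1) (t := 2 * regLevel) (η := regLevel)
    (fun a => (missed_mem a).1) (fun a => (missed_mem a).2) (by linarith) (by linarith) ?_
    regLevel_pos (by norm_num)
    (one_add_div_pow_le regLevel_pos (by linarith) hμ0 hμK)).trans ?_
  · rw [expect_prod_fst, expect_missed]
    linarith
  · gcongr
    calc _ ≤ Real.exp (-(14 : ℕ)) ^ K := by
          gcongr
          exact three_mul_regLevel_div_le
      _ ≤ ((N : ℝ) ^ 14)⁻¹ := exp_neg_natCast_pow_le_inv_pow hN hK 14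

theorem unifProb_not_goodSample_le_inv_pow {m n : Type*} [Fintype m] [Fintype n] [DecidableEq m]
    [DecidableEq n] (hm : Fintype.card m ≤ N) (hn : Fintype.card n ≤ N) (hN : 3 ≤ N)
    (hLK : Real.log N ≤ K) (hK : K ≤ 2 * Real.log N) (hc : 40000 ^ 2 + 20 ≤ c)
    {P : Matrix (m × n) (m × n) ℝ} (hP : IsStarProjection P) (hμ0 : 0 ≤ μ) (hμ : ∀ e, P e e ≤ μ)
    (hμL : μ * Real.log N ^ 2 ≤ regLevel ^ 2 / 4) (z : m × n → ℝ) {b : ℝ} (hb : 0 < b) :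
    unifProb (fun y : ProductSample (m × n) (c * K) K => ¬ GoodSample N P z b y) ≤
      failureConst c * ((N : ℝ) ^ 10)⁻¹ := by
  have hN0 : 0 < N := by omega
  have one_lt_log := one_lt_log_of_three_le hN
  have log_le : Real.log N ≤ N := Real.log_le_self N.cast_nonneg
  have K_mul_mul_log_le := mul_mul_log_le hN hK hμ0 hμL
  have K_mul_le : K * μ ≤ regLevel ^ 2 / 2 :=
    (le_mul_of_one_le_right (by positivity) one_lt_log.le).trans K_mul_mul_log_le
  have missed_le := one_sub_inv_pow_le_exp_neg (K := K) c
  have card_le : (Fintype.card (m × n) : ℝ) ≤ N ^ 2 := by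
    rw [Fintype.card_prod, sq]
    exact_mod_cast Nat.mul_le_mul hm hn
  have rounds_le : ((c * K : ℕ) : ℝ) ≤ 2 * c * N := by
    push_cast
    calc (c : ℝ) * K ≤ c * (2 * N) := by gcongr; linarith
      _ = 2 * c * N := by ring
  refine (unifProb_not_goodSample_le (τ₁ := 30 * Real.log N) (τ₂ := 60 * Real.log N) hm hn hN0 hP hμ
    hb (by positivity) ?_ (by positivity) (unifProb_not_smallOnSupport_le hN0 hLK hP hμ0 hμ K_mul_le
      (missed_le.trans (exp_neg_le_regLevel hc))) ?_).trans
    (failure_sum_le_failureConst_mul hN0 (by positivity) card_le (by positivity) rounds_le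
      (golf_exponent_le hN K_mul_mul_log_le) (sign_exponent_le hN hμL)
      (exp_neg_natCast_le_factorial_mul hN0 11))
  · nlinarith [regLevel_pos, regLevel_le]
  · calc (1 - 1 / K : ℝ) ^ (c * K) * Real.exp (40000 ^ 2)
        ≤ Real.exp (-c) * Real.exp (40000 ^ 2) := by gcongr
      _ ≤ 1 / 40000 := (exp_neg_mul_exp_le hc).trans (by norm_num)

end ProductFailure

section ProductRecovery

variable {n1 n2 r K c : ℕ} {U : Matrix (Fin n1) (Fin r) ℝ} {V : Matrix (Fin n2) (Fin r) ℝ}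
  {σ : Fin r → ℝ} {a : Fin n1 × Fin n2 → ℝ} {τ : ℝ}

theorem one_sub_perpProj_apply_self_le (hU : ∀ i, ∑ k, U i k ^ 2 ≤ τ) (hV : ∀ j, ∑ k, V j k ^ 2 ≤ τ)
    (e : Fin n1 × Fin n2) : (1 - perpProj U V) e e ≤ 2 * τ := by
  have hU0 : 0 ≤ ∑ k, U e.1 k ^ 2 := Finset.sum_nonneg fun k _ => sq_nonneg _
  have hV0 : 0 ≤ ∑ k, V e.2 k ^ 2 := Finset.sum_nonneg fun k _ => sq_nonneg _
  have apply_self :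
      (1 - perpProj U V) e e = 1 - (1 - ∑ k, U e.1 k ^ 2) * (1 - ∑ k, V e.2 k ^ 2) := by
    simp [perpProj, kronecker, kroneckerMap_apply, mul_apply, sq]
  rw [apply_self]
  linarith [mul_nonneg hU0 hV0, hU e.1, hV e.2]

variable [NeZero K]

theorem sqrt_div_le_inv (hn1 : 0 < n1) (hK : K ≤ 2 * Real.log n1) (hτ0 : 0 ≤ τ)
    (hτ : τ * Real.log n1 ^ 2 ≤ regLevel ^ 2 / 8) :
    √(τ / n1) ≤ 1 / (800 * K * √n1) := by
  have K_pos : (0 : ℝ) < K := Nat.cast_pos.2 (NeZero.pos K)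
  have K_sq_le : (K : ℝ) ^ 2 ≤ (2 * Real.log n1) ^ 2 := by gcongr
  have sqrt_le_one : √τ * (800 * K) ≤ 1 := by
    rw [← Real.sqrt_sq (by positivity : (0 : ℝ) ≤ 800 * K), ← Real.sqrt_mul hτ0, Real.sqrt_le_one]
    calc τ * (800 * K) ^ 2 = 640000 * (τ * K ^ 2) := by ring
      _ ≤ 640000 * (τ * (2 * Real.log n1) ^ 2) := by gcongr
      _ = 2560000 * (τ * Real.log n1 ^ 2) := by ring
      _ ≤ 1 := by nlinarith [regLevel_pos, regLevel_le]
  rw [Real.sqrt_div hτ0, ← div_div, div_le_div_iff_of_pos_right (by positivity),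
    le_div_iff₀ (by positivity)]
  exact sqrt_le_one

theorem unifProb_not_strictlyRecovered_productSparse_le (hn : n2 ≤ n1) (hn1 : 3 ≤ n1)
    (hLK : Real.log n1 ≤ K) (hK : K ≤ 2 * Real.log n1) (hc : 40000 ^ 2 + 20 ≤ c) (hU : Uᵀ * U = 1)
    (hV : Vᵀ * V = 1) (hσ : ∀ k, 0 ≤ σ k) (ha : ∀ e, 0 ≤ a e) (hτ0 : 0 ≤ τ)
    (hτ : τ * Real.log n1 ^ 2 ≤ regLevel ^ 2 / 8) (hUτ : ∀ i, ∑ k, U i k ^ 2 ≤ τ)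
    (hVτ : ∀ j, ∑ k, V j k ^ 2 ≤ τ) (hUVτ : ∀ i j, |∑ k, U i k * V j k| ≤ √(τ / n1)) :
    unifProb (fun y : ProductSample (Fin n1 × Fin n2) (c * K) K =>
      ¬ StrictlyRecovered (√n1)⁻¹ (U * diagonal σ * Vᵀ) (productSparse a y)) ≤
      failureConst c * ((n1 : ℝ) ^ 10)⁻¹ := by
  have n1_pos : 0 < n1 := by omega
  have K_pos : (0 : ℝ) < K := Nat.cast_pos.2 (NeZero.pos K)
  have b_pos : 0 < 1 / (800 * K * √n1) := by positivity
  have entries_le (e : Fin n1 × Fin n2) : |entries (U * Vᵀ) e| ≤ 1 / (800 * K * √n1) :=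
    (hUVτ e.1 e.2).trans (sqrt_div_le_inv n1_pos hK hτ0 hτ)
  refine (unifProb_mono fun y => mt fun hy => ?_).trans
    (unifProb_not_goodSample_le_inv_pow (μ := 2 * τ) (b := 1 / (800 * K * √n1)) (by simp)
      (by simpa using hn) hn1 hLK hK hc (isStarProjection_perpProj hU hV).one_sub (by positivity)
      (one_sub_perpProj_apply_self_le hUτ hVτ) (by linarith) (entries (U * Vᵀ)) b_pos)
  refine GoodSample.strictlyRecovered hn (by omega) hU hV hσ ha b_pos.le entries_le ?_
    (natCast_mul_half_pow_le_one n1_pos hLK (by omega)) hy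
  exact le_of_eq (by field_simp)

end ProductRecovery

section UniformRecovery

variable {n1 n2 r m c : ℕ}

/-- The fraction of corrupted entries that `c` rounds per label can absorb. -/
noncomputable def sparsityLevel (c : ℕ) : ℝ := Real.exp (-(2 * c)) / 4

/-- The dimension from which a support of density `sparsityLevel c` is dominated by the support of
the product model; smaller dimensions are absorbed into the constant of the failure probability. -/
noncomputable def minDim (c : ℕ) : ℝ := 3 + 4 * Real.exp (2 * c)

theorem minDim_pos (c : ℕ) : 0 < minDim c := by
  unfold minDim
  positivity

theorem one_le_minDim_pow_mul_inv_pow (hn1 : 0 < n1) (h : n1 ≤ minDim c) :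
    1 ≤ minDim c ^ 10 * ((n1 : ℝ) ^ 10)⁻¹ := by
  rw [← div_eq_mul_inv, one_le_div (by positivity)]
  gcongr

theorem mul_div_mul_sq_le {ν ρ ℓ x y : ℝ} (hν : 0 < ν) (hρ : 0 ≤ ρ) (hy : 0 < y)
    (h : x ≤ ρ * y * ν⁻¹ * (ℓ ^ 2)⁻¹) : ν * x / y * ℓ ^ 2 ≤ ρ := by
  calc ν * x / y * ℓ ^ 2 ≤ ν * (ρ * y * ν⁻¹ * (ℓ ^ 2)⁻¹) / y * ℓ ^ 2 := by gcongr
    _ = ρ * ((ℓ ^ 2)⁻¹ * ℓ ^ 2) := by field_simp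
    _ ≤ ρ := mul_le_of_le_one_right hρ inv_mul_le_one

theorem exp_sub_expected_card_le_half {K : ℕ} (hK : 2 ≤ K) {N : ℝ} (hN : minDim c ≤ N)
    (hm : m ≤ sparsityLevel c * N) :
    Real.exp (m - N * ((1 - 1 / K : ℝ) ^ (c * K) / 2)) ≤ 1 / 2 := by
  have exp_pos := Real.exp_pos (2 * c)
  have N_nonneg : 0 ≤ N := by
    unfold minDim at hN
    linarith
  have four_le : 4 ≤ N * Real.exp (-(2 * c)) := by
    rw [Real.exp_neg, ← div_eq_mul_inv, le_div_iff₀ exp_pos]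
    unfold minDim at hN
    linarith
  have mul_exp_le : N * Real.exp (-(2 * c)) ≤ N * (1 - 1 / K : ℝ) ^ (c * K) := by
    gcongr
    exact exp_neg_two_mul_le_one_sub_inv_pow hK c
  have exponent_le : m - N * ((1 - 1 / K : ℝ) ^ (c * K) / 2) ≤ -1 := by
    unfold sparsityLevel at hm
    linarith
  linarith [Real.exp_le_exp.2 exponent_le, Real.exp_neg_one_lt_d9]

theorem nonempty_sampleSpace (hm : m ≤ sparsityLevel c * (n1 * n2)) :
    Nonempty (SampleSpace n1 n2 m) := by
  have exp_le_one : Real.exp (-(2 * c)) ≤ 1 := Real.exp_le_one_iff.2 (by simp)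
  have m_le : (m : ℝ) ≤ n1 * n2 := hm.trans (mul_le_of_le_one_left (by positivity) (by
    unfold sparsityLevel
    linarith))
  have m_le_card : m ≤ (Finset.univ : Finset (Fin n1 × Fin n2)).card := by
    simp only [Finset.card_univ, Fintype.card_prod, Fintype.card_fin]
    exact_mod_cast m_le
  obtain ⟨T, -, hT⟩ := Finset.exists_subset_card_eq m_le_card
  exact ⟨⟨⟨T, hT⟩, fun _ => true⟩⟩

theorem one_sub_le_unifProb_strictlyRecovered {U : Matrix (Fin n1) (Fin r) ℝ}
    {V : Matrix (Fin n2) (Fin r) ℝ} {σ : Fin r → ℝ} {a : Fin n1 × Fin n2 → ℝ} {τ : ℝ}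
    (hn2 : 0 < n2) (hn : n2 ≤ n1) (hn1 : minDim c ≤ n1) (hc : 40000 ^ 2 + 20 ≤ c)
    (hU : Uᵀ * U = 1) (hV : Vᵀ * V = 1) (hσ : ∀ k, 0 ≤ σ k) (ha : ∀ e, 0 ≤ a e) (hτ0 : 0 ≤ τ)
    (hτ : τ * Real.log n1 ^ 2 ≤ regLevel ^ 2 / 8) (hUτ : ∀ i, ∑ k, U i k ^ 2 ≤ τ)
    (hVτ : ∀ j, ∑ k, V j k ^ 2 ≤ τ) (hUVτ : ∀ i j, |∑ k, U i k * V j k| ≤ √(τ / n1))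
    (hm : m ≤ sparsityLevel c * (n1 * n2)) :
    1 - 2 * (failureConst c * ((n1 : ℝ) ^ 10)⁻¹) ≤ unifProb fun ω : SampleSpace n1 n2 m =>
      StrictlyRecovered (√n1)⁻¹ (U * diagonal σ * Vᵀ) (sparseOf a ω) := by
  have three_le : 3 ≤ n1 := by
    have : (3 : ℝ) ≤ n1 := le_trans (le_add_of_nonneg_right (by positivity)) hn1
    exact_mod_cast this
  have one_lt_log := one_lt_log_of_three_le three_le
  have two_le_ceil : 2 ≤ ⌈Real.log n1⌉₊ := Nat.lt_ceil.2 (by exact_mod_cast one_lt_log)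
  have ceil_le : (⌈Real.log n1⌉₊ : ℝ) ≤ 2 * Real.log n1 := by
    linarith [Nat.ceil_lt_add_one (zero_lt_one.trans one_lt_log).le]
  have : NeZero ⌈Real.log n1⌉₊ := ⟨by omega⟩
  have minDim_le : minDim c ≤ n1 * n2 :=
    hn1.trans (le_mul_of_one_le_right (by positivity) (by exact_mod_cast hn2))
  have : Nonempty (SampleSpace n1 n2 m) := nonempty_sampleSpace hm
  have failure_le := (unifProb_not_strictlyRecovered_sparseOf_le
    (L0 := U * diagonal σ * Vᵀ) (a := a) (inv_nonneg.2 (Real.sqrt_nonneg n1))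
    (exp_sub_expected_card_le_half two_le_ceil minDim_le hm)).trans
    (mul_le_mul_of_nonneg_left (unifProb_not_strictlyRecovered_productSparse_le hn three_le
      (Nat.le_ceil _) ceil_le hc hU hV hσ ha hτ0 hτ hUτ hVτ hUVτ) zero_le_two)
  rw [unifProb_not] at failure_le
  linarith

end UniformRecovery

/-- in the noiseless case Z0 = 0, StablePCP_c(0) with λ = 1/√n1 recovers
(L0, S0) exactly, with probability ≥ 1 − c′·n1⁻¹⁰ over the random support and signs. -/
theorem stablePCP_exact_recovery :
    ∃ ρr' ρs' c' : ℝ, 0 < ρr' ∧ 0 < ρs' ∧ 0 < c' ∧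
      ∀ (n1 n2 r m : ℕ) (ν : ℝ), 0 < n2 → n2 ≤ n1 → 0 < ν →
        ∀ (U : Matrix (Fin n1) (Fin r) ℝ) (V : Matrix (Fin n2) (Fin r) ℝ)
          (σ : Fin r → ℝ) (a : Fin n1 × Fin n2 → ℝ),
          Uᵀ * U = 1 → Vᵀ * V = 1 → (∀ k, 0 < σ k) → (∀ p, 0 < a p) →
          (∀ i : Fin n1, (∑ k, U i k ^ 2) ≤ ν * r / n1) →
          (∀ j : Fin n2, (∑ k, V j k ^ 2) ≤ ν * r / n2) →
          (∀ i j, |∑ k, U i k * V j k| ≤ Real.sqrt (ν * r / (n1 * n2))) →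
          (r : ℝ) ≤ ρr' * n2 * ν⁻¹ * ((Real.log n1) ^ 2)⁻¹ →
          (m : ℝ) ≤ ρs' * n1 * n2 →
          1 - c' * ((n1 : ℝ) ^ 10)⁻¹ ≤
            unifProb (fun ω : SampleSpace n1 n2 m =>
              ∀ Lh Sh : Matrix (Fin n1) (Fin n2) ℝ,
                IsStablePCPMin (U * Matrix.diagonal σ * Vᵀ + sparseOf a ω)
                    (Real.sqrt n1)⁻¹ 0 Lh Sh →
                  Lh = U * Matrix.diagonal σ * Vᵀ ∧ Sh = sparseOf a ω) := by
  obtain ⟨c, hc⟩ : ∃ c : ℕ, 40000 ^ 2 + 20 ≤ c := ⟨_, le_rfl⟩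
  have regLevel_pos := regLevel_pos
  have failureConst_nonneg := failureConst_nonneg c
  have minDim_pos := minDim_pos c
  refine ⟨regLevel ^ 2 / 8, sparsityLevel c, 2 * failureConst c + minDim c ^ 10, by positivity,
    by unfold sparsityLevel; positivity, by positivity, ?_⟩
  intro n1 n2 r m ν hn2 hn hν U V σ a hU hV hσ ha hUν hVν hUVν hr hm
  have hn1 : 0 < n1 := hn2.trans_le hn
  have recovered : 1 - (2 * failureConst c + minDim c ^ 10) * ((n1 : ℝ) ^ 10)⁻¹ ≤
      unifProb fun ω : SampleSpace n1 n2 m =>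
        StrictlyRecovered (√n1)⁻¹ (U * diagonal σ * Vᵀ) (sparseOf a ω) := by
    rw [add_mul, mul_assoc]
    rcases le_total (n1 : ℝ) (minDim c) with small | large
    · refine le_trans ?_ (unifProb_nonneg _)
      linarith [one_le_minDim_pow_mul_inv_pow hn1 small,
        mul_nonneg failureConst_nonneg (by positivity : 0 ≤ ((n1 : ℝ) ^ 10)⁻¹)]
    · refine le_trans (sub_le_sub_left (le_add_of_nonneg_right (by positivity)) 1)
        (one_sub_le_unifProb_strictlyRecovered (τ := ν * r / n2) hn2 hn large hc hU hV
          (fun k => (hσ k).le) (fun e => (ha e).le) (by positivity)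
          (mul_div_mul_sq_le hν (by positivity) (by positivity) hr)
          (fun i => (hUν i).trans (by gcongr)) hVν (fun i j => ?_) (by rwa [← mul_assoc]))
      rw [div_div, mul_comm (n2 : ℝ)]
      exact hUVν i j
  exact recovered.trans (unifProb_mono fun ω h Lh Sh hmin => h.eq_of_isStablePCPMin hmin)
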